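/- arXiv:2206.09139 — 10 statements merged into one kernel-verified Lean document; each statement's English description precedes it below -/
import Mathlib

section
/- Let M_a ⊆ F_a × F × E_a × E and M_b ⊆ F_b × F × E_b × E be monotone relations. Then their composition M_a ⇄ M_b ⊆ F_a × F_b × E_a × E_b is a monotone relation. -/
/-- The duality pairing (standard inner product) between an effort vector `e`
and a flow vector `f` in `ℝ^n`. -/
noncomputable def dot {n : ℕ} (e f : Fin n → ℝ) : ℝ := ∑ i, e i * f i

/-- A relation `M ⊆ F₁ × F₂ × E₁ × E₂` (flows `(f₁,f₂)`, efforts `(e₁,e₂)`) is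
monotone if `⟨e − e', f − f'⟩ ≥ 0` for all pairs of its elements, where the
pairing on the product space is the sum of the pairings of the factors. -/
def Mono4 {n1 n2 : ℕ}
    (M : Set ((Fin n1 → ℝ) × (Fin n2 → ℝ) × (Fin n1 → ℝ) × (Fin n2 → ℝ))) : Prop :=
  ∀ f1 f2 e1 e2 f1' f2' e1' e2',
    (f1, f2, e1, e2) ∈ M → (f1', f2', e1', e2') ∈ M →
    0 ≤ dot (e1 - e1') (f1 - f1') + dot (e2 - e2') (f2 - f2')

/-- The composition `M_a ⇄ M_b` of two relations
`M_a ⊆ F_a × F × E_a × E` and `M_b ⊆ F_b × F × E_b × E` through the shared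
port `(F, E)` via the interconnection `f ↦ −f`, `e ↦ e`. -/
def RelComp {na nb n : ℕ}
    (Ma : Set ((Fin na → ℝ) × (Fin n → ℝ) × (Fin na → ℝ) × (Fin n → ℝ)))
    (Mb : Set ((Fin nb → ℝ) × (Fin n → ℝ) × (Fin nb → ℝ) × (Fin n → ℝ))) :
    Set ((Fin na → ℝ) × (Fin nb → ℝ) × (Fin na → ℝ) × (Fin nb → ℝ)) :=
  {p | ∃ f e, (p.1, f, p.2.2.1, e) ∈ Ma ∧ (p.2.1, -f, p.2.2.2, e) ∈ Mb}

/-- The composition `Ma ⇄ Mb` through a shared port `(F, E)`, on which the efforts agree and the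
flows are opposite. It extends `RelComp` beyond coordinate spaces. -/
def interconnect {Fa Fb F Ea Eb E : Type*} [Neg F]
    (Ma : Set (Fa × F × Ea × E)) (Mb : Set (Fb × F × Eb × E)) :
    Set (Fa × Fb × Ea × Eb) :=
  {(fa, fb, ea, eb) | ∃ f e, (fa, f, ea, e) ∈ Ma ∧ (fb, -f, eb, e) ∈ Mb}

section Pairing

variable {R Fa Fb F Ea Eb E : Type*} [CommRing R]
  [AddCommGroup Fa] [AddCommGroup Fb] [AddCommGroup F]
  [AddCommGroup Ea] [AddCommGroup Eb] [AddCommGroup E]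
  [Module R Fa] [Module R Fb] [Module R F] [Module R Ea] [Module R Eb] [Module R E]

theorem pairing_neg_sub_neg (B : E →ₗ[R] F →ₗ[R] R) (e : E) (f f' : F) :
    B e (-f - -f') = -B e (f - f') := by
  rw [← neg_sub', map_neg]

variable [PartialOrder R]

/-- Monotonicity of a relation between the flows and efforts of two ports, each port carrying an
arbitrary bilinear pairing of efforts with flows; the ports are paired by the sum. It extends
`Mono4` beyond coordinate spaces. -/
def IsMonotoneRel (Ba : Ea →ₗ[R] Fa →ₗ[R] R) (B : E →ₗ[R] F →ₗ[R] R)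
    (M : Set (Fa × F × Ea × E)) : Prop :=
  ∀ ⦃fa f ea e fa' f' ea' e'⦄, (fa, f, ea, e) ∈ M → (fa', f', ea', e') ∈ M →
    0 ≤ Ba (ea - ea') (fa - fa') + B (e - e') (f - f')

theorem monotone_relComp_general [IsOrderedAddMonoid R]
    {Ba : Ea →ₗ[R] Fa →ₗ[R] R} {Bb : Eb →ₗ[R] Fb →ₗ[R] R} {B : E →ₗ[R] F →ₗ[R] R}
    {Ma : Set (Fa × F × Ea × E)} {Mb : Set (Fb × F × Eb × E)}
    (hMa : IsMonotoneRel Ba B Ma) (hMb : IsMonotoneRel Bb B Mb) :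
    IsMonotoneRel Ba Bb (interconnect Ma Mb) := by
  rintro fa fb ea eb fa' fb' ea' eb' ⟨f, e, ha, hb⟩ ⟨f', e', ha', hb'⟩
  -- The shared port contributes opposite terms to the two monotonicity inequalities.
  calc 0 ≤ (Ba (ea - ea') (fa - fa') + B (e - e') (f - f')) +
        (Bb (eb - eb') (fb - fb') + B (e - e') (-f - -f')) :=
        add_nonneg (hMa ha ha') (hMb hb hb')
    _ = Ba (ea - ea') (fa - fa') + Bb (eb - eb') (fb - fb') := by
        rw [pairing_neg_sub_neg]
        ring

end Pairing

theorem mono4_iff_isMonotoneRel {n₁ n₂ : ℕ}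
    {M : Set ((Fin n₁ → ℝ) × (Fin n₂ → ℝ) × (Fin n₁ → ℝ) × (Fin n₂ → ℝ))} :
    Mono4 M ↔ IsMonotoneRel (dotProductBilin ℝ ℝ) (dotProductBilin ℝ ℝ) M :=
  Iff.rfl

theorem relComp_eq_interconnect {na nb n : ℕ}
    (Ma : Set ((Fin na → ℝ) × (Fin n → ℝ) × (Fin na → ℝ) × (Fin n → ℝ)))
    (Mb : Set ((Fin nb → ℝ) × (Fin n → ℝ) × (Fin nb → ℝ) × (Fin n → ℝ))) :
    RelComp Ma Mb = interconnect Ma Mb :=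
  rfl

/-- The composition of two monotone relations is monotone. -/
theorem monotone_relComp {na nb n : ℕ}
    (Ma : Set ((Fin na → ℝ) × (Fin n → ℝ) × (Fin na → ℝ) × (Fin n → ℝ)))
    (Mb : Set ((Fin nb → ℝ) × (Fin n → ℝ) × (Fin nb → ℝ) × (Fin n → ℝ)))
    (hMa : Mono4 Ma) (hMb : Mono4 Mb) :
    Mono4 (RelComp Ma Mb) := by
  rw [mono4_iff_isMonotoneRel] at hMa hMb ⊢
  exact relComp_eq_interconnect Ma Mb ▸ monotone_relComp_general hMa hMb
end

section
/- Let M_a ⊆ F_a × F × E_a × E and M_b ⊆ F_b × F × E_b × E be cyclically monotone relations. Then their composition M_a ⇄ M_b ⊆ F_a × F_b × E_a × E_b is a cyclically monotone relation. -/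
/-- A relation `M ⊆ F₁ × F₂ × E₁ × E₂` (flows `(f₁,f₂)`, efforts `(e₁,e₂)`) is
cyclically monotone if for every `m ≥ 1` and all elements
`(f₀,e₀), …, (f_m,e_m)` of `M` (with indices taken cyclically, i.e. the
`(m+1)`-st flow equals the `0`-th) one has
`∑ᵢ ⟨eᵢ, fᵢ − fᵢ₊₁⟩ ≥ 0`, the pairing on the product space being the sum of
the pairings of the factors. -/
def CycMono4 {n1 n2 : ℕ}
    (M : Set ((Fin n1 → ℝ) × (Fin n2 → ℝ) × (Fin n1 → ℝ) × (Fin n2 → ℝ))) : Prop :=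
  ∀ m : ℕ, 1 ≤ m → ∀ (f1 : ℕ → Fin n1 → ℝ) (f2 : ℕ → Fin n2 → ℝ)
    (e1 : ℕ → Fin n1 → ℝ) (e2 : ℕ → Fin n2 → ℝ),
    (∀ i ≤ m, (f1 i, f2 i, e1 i, e2 i) ∈ M) →
    f1 (m + 1) = f1 0 → f2 (m + 1) = f2 0 →
    0 ≤ ∑ i ∈ Finset.range (m + 1),
        (dot (e1 i) (f1 i - f1 (i + 1)) + dot (e2 i) (f2 i - f2 (i + 1)))

/-!
Choosing a shared flow `fᵢ` and effort `eᵢ` for each point of a cycle in `M_a ⇄ M_b` lifts it to a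
cycle in `M_a` and a cycle in `M_b` of the same length. When the two cyclic sums are added, the
contributions `⟨eᵢ, fᵢ − fᵢ₊₁⟩` and `⟨eᵢ, −fᵢ + fᵢ₊₁⟩` of the shared port cancel term by term.
-/

/-- The composition `M_a ⇄ M_b` through a shared port with flows in `F` and efforts in `E`. Unlike
in `RelComp`, a relation is a set of pairs of a tuple of flows and a tuple of efforts. -/
def portComp {Fa Fb F Ea Eb E : Type*} [Neg F] (Ma : Set ((Fa × F) × (Ea × E)))
    (Mb : Set ((Fb × F) × (Eb × E))) :
    Set ((Fa × Fb) × (Ea × Eb)) :=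
  {x | ∃ f e, ((x.1.1, f), (x.2.1, e)) ∈ Ma ∧ ((x.1.2, -f), (x.2.2, e)) ∈ Mb}

section Pairing

variable {Fa Fb F Ea Eb E R : Type*} [AddCommGroup Fa] [AddCommGroup Fb] [AddCommGroup F]
  [AddCommGroup R]

/-- Cyclic monotonicity, with respect to the pairing `p` of efforts with flows, along cycles of
`m + 1` points. Points are indexed by `Fin (m + 1)`, whose addition wraps around, so that `i + 1` is
the cyclic successor of `i`. -/
def CyclicallyMonotoneOfOrder [LE R] (m : ℕ) (p : E → F →+ R) (M : Set (F × E)) : Prop :=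
  ∀ (f : Fin (m + 1) → F) (e : Fin (m + 1) → E), (∀ i, (f i, e i) ∈ M) →
    0 ≤ ∑ i, p (e i) (f i - f (i + 1))

/-- The pairing on a product of two ports: the sum of the pairings of the factors. -/
def prodPairing (pa : Ea → Fa →+ R) (pb : Eb → Fb →+ R) : Ea × Eb → Fa × Fb →+ R :=
  fun e ↦ (pa e.1).coprod (pb e.2)

theorem prodPairing_add_prodPairing_neg (pa : Ea → Fa →+ R) (pb : Eb → Fb →+ R) (p : E → F →+ R)
    (y : Ea × Eb) (e : E) (x : Fa × Fb) (f : F) :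
    prodPairing pa p (y.1, e) (x.1, f) + prodPairing pb p (y.2, e) (x.2, -f) =
      prodPairing pa pb y x := by
  simp only [prodPairing, AddMonoidHom.coprod_apply, map_neg]
  abel

theorem cyclicallyMonotone_relComp_general [PartialOrder R] [IsOrderedAddMonoid R] {m : ℕ}
    {pa : Ea → Fa →+ R} {pb : Eb → Fb →+ R} {p : E → F →+ R}
    {Ma : Set ((Fa × F) × (Ea × E))} {Mb : Set ((Fb × F) × (Eb × E))}
    (hMa : CyclicallyMonotoneOfOrder m (prodPairing pa p) Ma)
    (hMb : CyclicallyMonotoneOfOrder m (prodPairing pb p) Mb) :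
    CyclicallyMonotoneOfOrder m (prodPairing pa pb) (portComp Ma Mb) := by
  intro x y hxy
  choose f e mem_Ma mem_Mb using hxy
  have sum_a_nonneg := hMa (fun i ↦ ((x i).1, f i)) (fun i ↦ ((y i).1, e i)) mem_Ma
  have sum_b_nonneg := hMb (fun i ↦ ((x i).2, -f i)) (fun i ↦ ((y i).2, e i)) mem_Mb
  refine (add_nonneg sum_a_nonneg sum_b_nonneg).trans_eq ?_
  rw [← Finset.sum_add_distrib]
  refine Finset.sum_congr rfl fun i _ ↦ ?_
  have neg_flow_sub : -f i - -f (i + 1) = -(f i - f (i + 1)) := by abel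
  simp only [Prod.mk_sub_mk, neg_flow_sub, ← Prod.fst_sub, ← Prod.snd_sub,
    prodPairing_add_prodPairing_neg]

end Pairing

/-- The pairing `dot` of `ℝ^n` with itself, as an additive functional on flows for each effort. -/
noncomputable def dotHom {n : ℕ} (e : Fin n → ℝ) : (Fin n → ℝ) →+ ℝ where
  toFun := dot e
  map_zero' := dotProduct_zero e
  map_add' := dotProduct_add e

theorem prodPairing_dotHom_apply {n1 n2 : ℕ} (e f : (Fin n1 → ℝ) × (Fin n2 → ℝ)) :
    prodPairing dotHom dotHom e f = dot e.1 f.1 + dot e.2 f.2 :=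
  rfl

theorem apply_val_add_one_of_apply_eq_apply_zero {α : Type*} {m : ℕ} {x : ℕ → α}
    (hx : x (m + 1) = x 0) (i : Fin (m + 1)) : x ↑(i + 1) = x (i + 1) := by
  rw [Fin.val_add_one]
  split_ifs with hi
  · rw [hi, Fin.val_last, hx]
  · rfl

theorem cycMono4_iff_cyclicallyMonotoneOfOrder {n1 n2 : ℕ}
    {M : Set ((Fin n1 → ℝ) × (Fin n2 → ℝ) × (Fin n1 → ℝ) × (Fin n2 → ℝ))} :
    CycMono4 M ↔ ∀ m, 1 ≤ m →
      CyclicallyMonotoneOfOrder m (prodPairing dotHom dotHom) (Equiv.prodAssoc _ _ _ ⁻¹' M) := by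
  refine forall₂_congr fun m _ ↦ ⟨fun hM f e hfe ↦ ?_, fun hM f1 f2 e1 e2 hfe hf1 hf2 ↦ ?_⟩
  · have sum_nonneg := hM (fun i ↦ (f (.ofNat _ i)).1) (fun i ↦ (f (.ofNat _ i)).2)
      (fun i ↦ (e (.ofNat _ i)).1) (fun i ↦ (e (.ofNat _ i)).2) (fun i _ ↦ hfe _)
      (by rw [Fin.ofNat_self, Fin.ofNat_zero]) (by rw [Fin.ofNat_self, Fin.ofNat_zero])
    have ofNat_val_add_one (i : Fin (m + 1)) : Fin.ofNat (m + 1) (i + 1) = i + 1 := by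
      ext
      simp [Fin.val_add]
    simpa only [Finset.sum_range, ofNat_val_add_one, Fin.ofNat_val_eq_self,
      prodPairing_dotHom_apply, Prod.fst_sub, Prod.snd_sub] using sum_nonneg
  · have sum_nonneg := hM (fun i ↦ (f1 i, f2 i)) (fun i ↦ (e1 i, e2 i))
      fun i ↦ hfe i i.is_le
    simpa only [Finset.sum_range, prodPairing_dotHom_apply, Prod.fst_sub, Prod.snd_sub,
      apply_val_add_one_of_apply_eq_apply_zero hf1,
      apply_val_add_one_of_apply_eq_apply_zero hf2] using sum_nonneg

/-- The composition of two cyclically monotone relations is cyclically monotone. -/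
theorem cyclicallyMonotone_relComp {na nb n : ℕ}
    (Ma : Set ((Fin na → ℝ) × (Fin n → ℝ) × (Fin na → ℝ) × (Fin n → ℝ)))
    (Mb : Set ((Fin nb → ℝ) × (Fin n → ℝ) × (Fin nb → ℝ) × (Fin n → ℝ)))
    (hMa : CycMono4 Ma) (hMb : CycMono4 Mb) :
    CycMono4 (RelComp Ma Mb) := by
  exact cycMono4_iff_cyclicallyMonotoneOfOrder.2 fun m hm ↦ cyclicallyMonotone_relComp_general
    (cycMono4_iff_cyclicallyMonotoneOfOrder.1 hMa m hm)
    (cycMono4_iff_cyclicallyMonotoneOfOrder.1 hMb m hm)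
end

section
/- Let M_a ⊆ F_a × F × E_a × E and M_b ⊆ F_b × F × E_b × E be maximal monotone relations. Define C_f = Π(M_a, F) × Π(M_b, F) ⊆ F × F and C_e = {(e₁,e₂) ∈ E × E : there exists f ∈ F with (f,e₁) ∈ Π(M_a, F × E) and (−f, e₂) ∈ Π(M_b, F × E)}; these sets are nearly convex. If there exist f̄ ∈ F and ē ∈ E with (f̄, −f̄) ∈ rint C_f and (ē, ē) ∈ rint C_e, then the composition M_a ⇄ M_b ⊆ F_a × F_b × E_a × E_b is a maximal monotone relation. -/
/-- Maximal monotone relation: monotone and not properly contained in any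
other monotone relation. -/
def MaxMono4 {n1 n2 : ℕ}
    (M : Set ((Fin n1 → ℝ) × (Fin n2 → ℝ) × (Fin n1 → ℝ) × (Fin n2 → ℝ))) : Prop :=
  Mono4 M ∧ ∀ M', Mono4 M' → M ⊆ M' → M' = M

/-- Relative interior `rint S := rint (cl S)` of a (nearly convex) set,
formalized as the intrinsic interior of the closure. -/
noncomputable def rint {V : Type*} [AddCommGroup V] [Module ℝ V] [TopologicalSpace V]
    (S : Set V) : Set V :=
  intrinsicInterior ℝ (closure S)

/-!
The composition arises from the uncoupled pair `Ma × Mb` in three steps: pull back along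
`((x, y), u) ↦ ((x, u), (y, -u))`, which makes the port flows opposite and records the difference
of the port efforts; exchange flow and effort on the port; and pull back along `w ↦ (w, 0)`, which
sets the effort difference to zero. Exchanging flow and effort visibly preserves maximal
monotonicity, so everything rests on the pullback `Aᵀ ∘ M ∘ A` along a linear map `A`.

By Minty's theorem a monotone relation `N` is maximal iff `x + N x ∋ z` is solvable for every `z`.
For `N = Aᵀ ∘ M ∘ A` the regularized inclusion `e ∈ M (A (z - Aᵀ e) - ε e)` is solvable by Minty's
theorem for the inverse of `M`. Its solutions stay bounded as `ε → 0`: an unbounded sequence of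
them would have a limiting direction `w` with `⟪w, t⟫ ≤ 0` for all `t ∈ dom M + range A`, and the
relative interior condition turns this into `w ⟂ span (dom M + range A)`, a subspace that contains
all the solutions. A cluster point solves the inclusion for `ε = 0`.

Minty's theorem itself reduces by compactness to finitely many points of `M`, where it is a minimax
statement: a mixture of the required inequalities is satisfied by the corresponding mixture of the
points.
-/

open Set Filter Topology
open scoped RealInnerProductSpace Pointwise

section Minimax

variable {E ι : Type*} [AddCommGroup E] [Module ℝ E] [Fintype ι] {K : Set E} {g : ι → E → ℝ}

theorem convexOn_sum_mul_of_nonneg {μ : ι → ℝ} (hK : Convex ℝ K) (hμ : ∀ i, 0 ≤ μ i)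
    (hg : ∀ i, ConvexOn ℝ K (g i)) : ConvexOn ℝ K fun x => ∑ i, μ i * g i x := by
  refine ⟨hK, fun x hx y hy a b ha hb hab => ?_⟩
  calc ∑ i, μ i * g i (a • x + b • y)
      ≤ ∑ i, μ i * (a • g i x + b • g i y) := Finset.sum_le_sum fun i _ =>
        mul_le_mul_of_nonneg_left ((hg i).2 hx hy ha hb hab) (hμ i)
    _ = a • ∑ i, μ i * g i x + b • ∑ i, μ i * g i y := by
        simp only [smul_eq_mul, Finset.mul_sum, ← Finset.sum_add_distrib]
        exact Finset.sum_congr rfl fun i _ => by ring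

theorem exists_forall_nonpos_of_forall_stdSimplex [TopologicalSpace E] [IsTopologicalAddGroup E]
    [ContinuousSMul ℝ E] (hK : K.Nonempty) (hKconvex : Convex ℝ K) (hKcompact : IsCompact K)
    (hgconvex : ∀ i, ConvexOn ℝ K (g i)) (hgcont : ∀ i, ContinuousOn (g i) K)
    (hg : ∀ μ ∈ stdSimplex ℝ ι, ∃ x ∈ K, ∑ i, μ i * g i x ≤ 0) :
    ∃ x ∈ K, ∀ i, g i x ≤ 0 := by
  classical
  rcases isEmpty_or_nonempty ι with _ | _
  · exact hK.imp fun x hx => ⟨hx, isEmptyElim⟩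
  have hlinear (x : E) : ConcaveOn ℝ (stdSimplex ℝ ι) fun μ : ι → ℝ => ∑ i, μ i * g i x :=
    (Fintype.linearCombination ℝ fun i => g i x).concaveOn (convex_stdSimplex ℝ ι)
  obtain ⟨x, hx, μ, hμ, hsaddle⟩ := Sion.exists_isSaddlePointOn
    (f := fun x (μ : ι → ℝ) => ∑ i, μ i * g i x) hK hKconvex hKcompact
    (fun μ _ => (continuousOn_finsetSum _ fun i _ =>
      continuousOn_const.mul (hgcont i)).lowerSemicontinuousOn)
    (fun μ hμ => (convexOn_sum_mul_of_nonneg hKconvex hμ.1 hgconvex).quasiconvexOn)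
    (convex_stdSimplex ℝ ι) ⟨_, single_mem_stdSimplex ℝ (Classical.arbitrary ι)⟩
    (isCompact_stdSimplex ℝ ι)
    (fun x _ => (by fun_prop : Continuous _).continuousOn.upperSemicontinuousOn)
    (fun x _ => (hlinear x).quasiconcaveOn)
  obtain ⟨x', hx', hle⟩ := hg μ hμ
  refine ⟨x, hx, fun i => ?_⟩
  calc g i x = ∑ j, Pi.single (M := fun _ => ℝ) i 1 j * g j x := by simp [Pi.single_apply]
    _ ≤ ∑ j, μ j * g j x' := hsaddle x' hx' _ (single_mem_stdSimplex ℝ i)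
    _ ≤ 0 := hle

end Minimax

section MonotoneRel

variable {V W : Type*} [NormedAddCommGroup V] [InnerProductSpace ℝ V]
  [NormedAddCommGroup W] [InnerProductSpace ℝ W]

/-- Monotonicity of a relation between an inner product space (of flows) and its dual (of
efforts), the two being identified through the inner product. -/
def MonotoneRel (M : SetRel V V) : Prop :=
  ∀ p ∈ M, ∀ q ∈ M, 0 ≤ ⟪p.2 - q.2, p.1 - q.1⟫

/-- A monotone relation that is maximal with respect to inclusion. -/
def MaximalMonotoneRel (M : SetRel V V) : Prop :=
  Maximal MonotoneRel M

theorem MonotoneRel.insert {M : SetRel V V} (hM : MonotoneRel M) {p : V × V}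
    (hp : ∀ q ∈ M, 0 ≤ ⟪p.2 - q.2, p.1 - q.1⟫) : MonotoneRel (insert p M) := by
  rintro q (rfl | hq) r (rfl | hr)
  · simp
  · exact hp r hr
  · rw [← neg_sub r.2, ← neg_sub r.1, inner_neg_neg]
    exact hp q hq
  · exact hM q hq r hr

theorem MaximalMonotoneRel.mem {M : SetRel V V} (hM : MaximalMonotoneRel M) {p : V × V}
    (hp : ∀ q ∈ M, 0 ≤ ⟪p.2 - q.2, p.1 - q.1⟫) : p ∈ M :=
  hM.le_of_ge (hM.prop.insert hp) (subset_insert p M) (mem_insert p M)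

theorem MaximalMonotoneRel.isClosed {M : SetRel V V} (hM : MaximalMonotoneRel M) :
    IsClosed M := by
  have hM_eq : M = ⋂ q ∈ M, {p : V × V | 0 ≤ ⟪p.2 - q.2, p.1 - q.1⟫} :=
    subset_antisymm (fun p hp => mem_iInter₂.2 fun q hq => hM.prop p hp q hq)
      fun p hp => hM.mem (mem_iInter₂.1 hp)
  rw [hM_eq]
  exact isClosed_biInter fun q _ => isClosed_le continuous_const (by fun_prop)

theorem MonotoneRel.preimage {M : SetRel V V} (hM : MonotoneRel M) {φ : W × W → V × V}
    (hφ : ∀ p q, ⟪(φ p).2 - (φ q).2, (φ p).1 - (φ q).1⟫ = ⟪p.2 - q.2, p.1 - q.1⟫) :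
    MonotoneRel (φ ⁻¹' M) := fun p hp q hq => (hM _ hp _ hq).trans_eq (hφ p q)

theorem MaximalMonotoneRel.preimage {M : SetRel V V} (hM : MaximalMonotoneRel M)
    (φ : W × W ≃ V × V)
    (hφ : ∀ p q, ⟪(φ p).2 - (φ q).2, (φ p).1 - (φ q).1⟫ = ⟪p.2 - q.2, p.1 - q.1⟫) :
    MaximalMonotoneRel (φ ⁻¹' M) := by
  refine ⟨hM.prop.preimage hφ, fun N hN hle p hp => hM.mem fun q hq => ?_⟩
  have hq' : φ.symm q ∈ N := hle (by simpa using hq)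
  simpa [← hφ] using hN p hp _ hq'

theorem MaximalMonotoneRel.inv {M : SetRel V V} (hM : MaximalMonotoneRel M) :
    MaximalMonotoneRel M.inv :=
  hM.preimage (Equiv.prodComm V V) fun _ _ => real_inner_comm _ _

end MonotoneRel

section Minty

variable {V : Type*} [NormedAddCommGroup V] [InnerProductSpace ℝ V]

theorem sum_mul_inner_centroid_sub_nonpos {ι : Type*} [Fintype ι] {a b : ι → V} {μ : ι → ℝ}
    (hμ : ∀ i, 0 ≤ μ i) (hab : ∀ i j, 0 ≤ ⟪b i - b j, a i - a j⟫) (hμ_sum : ∑ i, μ i = 1) :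
    ∑ i, μ i * ⟪b i, (∑ j, μ j • a j) - a i⟫ ≤ 0 := by
  set S := ∑ i, ∑ j, μ i * μ j * ⟪b i, a j - a i⟫ with hS
  have hsum : ∑ i, μ i * ⟪b i, (∑ j, μ j • a j) - a i⟫ = S := by
    refine Finset.sum_congr rfl fun i _ => ?_
    have hcentroid : (∑ j, μ j • a j) - a i = ∑ j, μ j • (a j - a i) := by
      simp [smul_sub, ← Finset.sum_smul, hμ_sum]
    rw [hcentroid, inner_sum, Finset.mul_sum]
    exact Finset.sum_congr rfl fun j _ => by rw [real_inner_smul_right]; ring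
  have hswap : S = ∑ i, ∑ j, μ i * μ j * ⟪b j, a i - a j⟫ := by
    rw [hS, Finset.sum_comm]
    exact Finset.sum_congr rfl fun i _ => Finset.sum_congr rfl fun j _ => by ring
  have hdouble : S + S = -∑ i, ∑ j, μ i * μ j * ⟪b i - b j, a i - a j⟫ := by
    nth_rewrite 2 [hswap]
    simp only [hS, ← Finset.sum_add_distrib, ← Finset.sum_neg_distrib]
    refine Finset.sum_congr rfl fun i _ => Finset.sum_congr rfl fun j _ => ?_
    simp only [inner_sub_left, inner_sub_right]
    ring
  have hnonneg : 0 ≤ ∑ i, ∑ j, μ i * μ j * ⟪b i - b j, a i - a j⟫ :=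
    Finset.sum_nonneg fun i _ => Finset.sum_nonneg fun j _ =>
      mul_nonneg (mul_nonneg (hμ i) (hμ j)) (hab i j)
  linarith

theorem convexOn_inner_add_linearMap_sub {D : V →ₗ[ℝ] V} (hD : ∀ y, 0 ≤ ⟪D y, y⟫) (a b : V)
    {K : Set V} (hK : Convex ℝ K) : ConvexOn ℝ K fun y => ⟪b + D y, y - a⟫ := by
  refine ⟨hK, fun x _ y _ s t hs ht hst => ?_⟩
  have hgap : s * ⟪b + D x, x - a⟫ + t * ⟪b + D y, y - a⟫ -
      ⟪b + D (s • x + t • y), s • x + t • y - a⟫ = s * t * ⟪D (x - y), x - y⟫ := by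
    obtain rfl : t = 1 - s := by linarith
    simp only [map_add, map_sub, map_smul, inner_add_left, inner_sub_left, inner_add_right,
      inner_sub_right, real_inner_smul_left, real_inner_smul_right]
    ring
  have := mul_nonneg (mul_nonneg hs ht) (hD (x - y))
  simp only [smul_eq_mul]
  linarith

theorem norm_sub_le_of_inner_add_linearMap_nonpos {D : V →ₗ[ℝ] V} {c : ℝ}
    (hc : 0 < c) (hD : ∀ y, c * ‖y‖ ^ 2 ≤ ⟪D y, y⟫) {a b y : V} (h : ⟪b + D y, y - a⟫ ≤ 0) :
    ‖y - a‖ ≤ ‖b + D a‖ / c := by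
  rw [le_div_iff₀' hc]
  rcases (norm_nonneg (y - a)).eq_or_lt with hzero | hpos
  · rw [← hzero, mul_zero]
    exact norm_nonneg _
  refine le_of_mul_le_mul_right ?_ hpos
  have hsplit : ⟪b + D y, y - a⟫ = ⟪b + D a, y - a⟫ + ⟪D (y - a), y - a⟫ := by
    rw [← inner_add_left, map_sub]
    congr 1
    abel
  linarith [hD (y - a), neg_le_of_abs_le (abs_real_inner_le_norm (b + D a) (y - a))]

theorem MonotoneRel.maximalMonotoneRel_of_forall_exists_mem_sub {M : SetRel V V}
    (hM : MonotoneRel M) (hsurj : ∀ z, ∃ x, (x, z - x) ∈ M) : MaximalMonotoneRel M := by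
  refine ⟨hM, fun N hN hle => ?_⟩
  rintro ⟨x, e⟩ hxe
  obtain ⟨x', hx'⟩ := hsurj (x + e)
  have hdiff : e - (x + e - x') = -(x - x') := by abel
  have hinner := hN _ hxe _ (hle hx')
  rw [hdiff, inner_neg_left, real_inner_self_eq_norm_sq] at hinner
  have hx : x = x' := by
    rw [← sub_eq_zero, ← norm_eq_zero]
    nlinarith [norm_nonneg (x - x')]
  subst hx
  rwa [add_sub_cancel_left] at hx'

variable [FiniteDimensional ℝ V]

/-- The Debrunner–Flor inequality. -/
theorem exists_forall_inner_add_linearMap_nonpos {ι : Type*} [Finite ι] {a b : ι → V}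
    {D : V →ₗ[ℝ] V} (hab : ∀ i j, 0 ≤ ⟪b i - b j, a i - a j⟫) (hD : ∀ y, 0 ≤ ⟪D y, y⟫) :
    ∃ y, ∀ i, ⟪b i + D y, y - a i⟫ ≤ 0 := by
  have := Fintype.ofFinite ι
  rcases isEmpty_or_nonempty ι with _ | _
  · exact ⟨0, isEmptyElim⟩
  have hDcont : Continuous D := D.continuous_of_finiteDimensional
  set K := convexHull ℝ (range a)
  have hK : Convex ℝ K := convex_convexHull ℝ _
  have hmix (μ) (hμ : μ ∈ stdSimplex ℝ ι) :
      ∃ y ∈ K, ∑ i, μ i * ⟪b i + D y, y - a i⟫ ≤ 0 := by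
    set y := ∑ j, μ j • a j with hy
    refine ⟨y, hK.sum_mem (fun i _ => hμ.1 i) hμ.2 fun i _ =>
      subset_convexHull ℝ _ (mem_range_self i), ?_⟩
    have hconst : ∑ i, μ i * ⟪D y, y - a i⟫ = 0 := by
      simp_rw [← real_inner_smul_right, ← inner_sum, smul_sub, Finset.sum_sub_distrib,
        ← Finset.sum_smul, hμ.2, one_smul, ← hy, sub_self, inner_zero_right]
    calc ∑ i, μ i * ⟪b i + D y, y - a i⟫
        = ∑ i, μ i * ⟪b i, y - a i⟫ + ∑ i, μ i * ⟪D y, y - a i⟫ := by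
          simp only [inner_add_left, mul_add, Finset.sum_add_distrib]
      _ ≤ 0 := by
          rw [hconst, add_zero]
          exact sum_mul_inner_centroid_sub_nonpos hμ.1 hab hμ.2
  obtain ⟨y, -, hy⟩ := exists_forall_nonpos_of_forall_stdSimplex (range_nonempty a).convexHull hK
    ((finite_range a).isCompact_convexHull ℝ)
    (fun i => convexOn_inner_add_linearMap_sub hD (a i) (b i) hK) (fun i => by fun_prop) hmix
  exact ⟨y, hy⟩

/-- Minty's surjectivity theorem, with a strongly monotone linear map in place of the identity. -/
theorem MaximalMonotoneRel.exists_mem_sub_linearMap {M : SetRel V V} (hM : MaximalMonotoneRel M)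
    {D : V →ₗ[ℝ] V} {c : ℝ} (hc : 0 < c) (hD : ∀ y, c * ‖y‖ ^ 2 ≤ ⟪D y, y⟫) (z : V) :
    ∃ y, (y, z - D y) ∈ M := by
  have hDcont : Continuous D := D.continuous_of_finiteDimensional
  rcases M.eq_empty_or_nonempty with rfl | ⟨q₀, hq₀⟩
  · exact ⟨0, hM.mem fun q hq => hq.elim⟩
  let t (q : M) : Set V := {y | ⟪q.1.2 - z + D y, y - q.1.1⟫ ≤ 0}
  have ht_closed (q : M) : IsClosed (t q) := isClosed_le (by fun_prop) continuous_const
  have ht_compact : IsCompact (t ⟨q₀, hq₀⟩) :=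
    (isCompact_closedBall q₀.1 (‖q₀.2 - z + D q₀.1‖ / c)).of_isClosed_subset (ht_closed _)
      fun y hy => mem_closedBall_iff_norm.2 (norm_sub_le_of_inner_add_linearMap_nonpos hc hD hy)
  obtain ⟨y, -, hy⟩ := ht_compact.inter_iInter_nonempty t ht_closed fun s => by
    obtain ⟨y, hy⟩ := exists_forall_inner_add_linearMap_nonpos (D := D)
      (a := fun q : (insert ⟨q₀, hq₀⟩ s : Set M) => q.1.1.1) (b := fun q => q.1.1.2 - z)
      (fun i j => by simpa using hM.prop _ i.1.2 _ j.1.2)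
      (fun y => (mul_nonneg hc.le (sq_nonneg _)).trans (hD y))
    exact ⟨y, hy ⟨_, mem_insert _ _⟩, mem_iInter₂.2 fun q hq => hy ⟨q, mem_insert_of_mem _ hq⟩⟩
  refine ⟨y, hM.mem fun q hq => ?_⟩
  have hle : ⟪q.2 - z + D y, y - q.1⟫ ≤ 0 := mem_iInter.1 hy ⟨q, hq⟩
  have hneg : z - D y - q.2 = -(q.2 - z + D y) := by abel
  rw [hneg, inner_neg_left]
  linarith

end Minty

section NotProperlySeparated

variable {V U : Type*} [NormedAddCommGroup V] [InnerProductSpace ℝ V]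
  [NormedAddCommGroup U] [InnerProductSpace ℝ U]

/-- No hyperplane through the origin properly separates `T` from the origin: a linear functional
that is nonpositive on `T` vanishes on `T`. For convex `T` in finite dimension this is the dual
form of `0 ∈ rint T`. -/
def NotProperlySeparated (T : Set V) : Prop :=
  ∀ w, (∀ t ∈ T, ⟪w, t⟫ ≤ 0) → ∀ t ∈ T, ⟪w, t⟫ = 0

theorem eventually_add_smul_sub_mem_of_mem_rint {E : Type*} [NormedAddCommGroup E]
    [NormedSpace ℝ E] {C : Set E} {p c : E} (hp : p ∈ rint C) (hc : c ∈ C) :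
    ∀ᶠ s in 𝓝 (0 : ℝ), p + s • (p - c) ∈ closure C := by
  obtain ⟨p, hp, rfl⟩ := hp
  let γ (s : ℝ) : affineSpan ℝ (closure C) := ⟨s • ((p : E) -ᵥ c) +ᵥ (p : E),
    AffineSubspace.vadd_mem_of_mem_direction (Submodule.smul_mem _ s
      (AffineSubspace.vsub_mem_direction p.2 (subset_affineSpan ℝ _ (subset_closure hc)))) p.2⟩
  have hγ : Continuous γ := Continuous.subtype_mk (by simp only [vadd_eq_add]; fun_prop) _
  have hγ_zero : γ 0 = p := by ext; simp [γ]
  filter_upwards [hγ.continuousAt.eventually_mem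
    (hγ_zero ▸ mem_interior_iff_mem_nhds.1 hp)] with s hs
  simpa [γ, add_comm] using hs

theorem notProperlySeparated_image_of_mem_rint {E : Type*} [NormedAddCommGroup E]
    [NormedSpace ℝ E] {C : Set E} {p : E} (hp : p ∈ rint C) {L : E →L[ℝ] U} (hL : L p = 0) :
    NotProperlySeparated (L '' C) := by
  intro w hw
  have hw_closure : ∀ x ∈ closure C, ⟪w, L x⟫ ≤ 0 :=
    closure_minimal (fun x hx => hw _ (mem_image_of_mem L hx))
      (isClosed_le (f := fun x => ⟪w, L x⟫) (by fun_prop) continuous_const)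
  rintro _ ⟨c, hc, rfl⟩
  obtain ⟨s, hs, hs_pos⟩ := (((eventually_add_smul_sub_mem_of_mem_rint hp hc).filter_mono
    nhdsWithin_le_nhds).and (self_mem_nhdsWithin (s := Ioi 0))).exists
  have hle := hw_closure _ hs
  simp only [map_add, map_smul, map_sub, hL, zero_add, zero_sub, real_inner_smul_right,
    inner_neg_right, mul_neg, neg_nonpos] at hle
  exact le_antisymm (hw _ (mem_image_of_mem L hc)) (nonneg_of_mul_nonneg_right hle hs_pos)

theorem NotProperlySeparated.add_submodule [FiniteDimensional ℝ V] [FiniteDimensional ℝ U]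
    {L : V →ₗ[ℝ] U} {S : Set V} {K : Submodule ℝ V} (hS : NotProperlySeparated (L '' S))
    (hK : LinearMap.ker L ≤ K) : NotProperlySeparated (S + (K : Set V)) := by
  intro w hw
  rcases S.eq_empty_or_nonempty with rfl | ⟨s₀, hs₀⟩
  · simp
  have hwK : ∀ k ∈ K, ⟪w, k⟫ = 0 := by
    intro k hk
    by_contra hne
    have hle := hw _ (add_mem_add hs₀ (K.smul_mem ((1 - ⟪w, s₀⟫) / ⟪w, k⟫) hk))
    rw [inner_add_right, real_inner_smul_right, div_mul_cancel₀ _ hne] at hle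
    linarith
  obtain ⟨u, rfl⟩ : w ∈ LinearMap.range (LinearMap.adjoint L) := by
    rw [← LinearMap.orthogonal_ker, Submodule.mem_orthogonal']
    exact fun k hk => hwK k (hK hk)
  have hu (s : V) (k : V) (hk : k ∈ K) :
      ⟪LinearMap.adjoint L u, s + k⟫ = ⟪u, L s⟫ := by
    rw [inner_add_right, hwK k hk, add_zero, LinearMap.adjoint_inner_left]
  rintro _ ⟨s, hs, k, hk, rfl⟩
  refine (hu s k hk).trans (hS u ?_ _ (mem_image_of_mem L hs))
  rintro _ ⟨s, hs, rfl⟩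
  exact (hu s 0 K.zero_mem).ge.trans (hw _ (add_mem_add hs K.zero_mem))

theorem exists_unit_limit_of_not_isBounded {E : Type*} [NormedAddCommGroup E]
    [NormedSpace ℝ E] [ProperSpace E] {S : Set E} (hS : ¬ Bornology.IsBounded S) :
    ∃ (e : ℕ → E) (w : E), (∀ k, e k ∈ S) ∧ Tendsto (fun k => ‖e k‖) atTop atTop ∧ ‖w‖ = 1 ∧
      Tendsto (fun k => ‖e k‖⁻¹ • e k) atTop (𝓝 w) := by
  simp only [isBounded_iff_forall_norm_le, not_exists, not_forall, not_le] at hS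
  choose e heS he using fun k : ℕ => hS k
  have hnorm : Tendsto (fun k => ‖e k‖) atTop atTop :=
    tendsto_atTop_mono (fun k => (he k).le) tendsto_natCast_atTop_atTop
  have hunit (k : ℕ) : ‖e k‖⁻¹ • e k ∈ Metric.sphere (0 : E) 1 := by
    have hne : e k ≠ 0 := norm_pos_iff.1 ((Nat.cast_nonneg k).trans_lt (he k))
    simp [norm_smul, hne]
  obtain ⟨w, hw, φ, hφ, hlim⟩ := (isCompact_sphere (0 : E) 1).tendsto_subseq hunit
  exact ⟨e ∘ φ, w, fun k => heS _, hnorm.comp hφ.tendsto_atTop, by simpa using hw, hlim⟩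

theorem NotProperlySeparated.isBounded [FiniteDimensional ℝ V] {T S : Set V}
    (hT : NotProperlySeparated T) (hS_span : S ⊆ Submodule.span ℝ T)
    (hS : ∀ t ∈ T, BddAbove ((fun e => ⟪e, t⟫) '' S)) :
    Bornology.IsBounded S := by
  by_contra hunbounded
  obtain ⟨e, w, he, hnorm, hw, hlim⟩ := exists_unit_limit_of_not_isBounded hunbounded
  have hw_nonpos (t : V) (ht : t ∈ T) : ⟪w, t⟫ ≤ 0 := by
    obtain ⟨B, hB⟩ := hS t ht
    have hB_lim : Tendsto (fun k => ‖e k‖⁻¹ * B) atTop (𝓝 0) := by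
      simpa using hnorm.inv_tendsto_atTop.mul_const B
    refine le_of_tendsto_of_tendsto' (hlim.inner tendsto_const_nhds) hB_lim fun k => ?_
    rw [real_inner_smul_left]
    exact mul_le_mul_of_nonneg_left (hB (mem_image_of_mem _ (he k))) (by positivity)
  have hT_orth : Submodule.span ℝ T ≤ (ℝ ∙ w)ᗮ := Submodule.span_le.2 fun t ht =>
    Submodule.mem_orthogonal_singleton_iff_inner_right.2 (hT w hw_nonpos t ht)
  have hw_e (k : ℕ) : ⟪w, e k⟫ = 0 :=
    Submodule.mem_orthogonal_singleton_iff_inner_right.1 (hT_orth (hS_span (he k)))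
  have hw_zero : ⟪w, w⟫ = 0 :=
    tendsto_nhds_unique (tendsto_const_nhds.inner hlim) (tendsto_const_nhds.congr fun k => by
      rw [real_inner_smul_right, hw_e, mul_zero])
  simp [hw] at hw_zero

end NotProperlySeparated

section Pullback

variable {V W : Type*} [NormedAddCommGroup V] [InnerProductSpace ℝ V]
  [NormedAddCommGroup W] [InnerProductSpace ℝ W]

theorem inner_sub_norm_sq_le (a x : V) : ⟪a, x⟫ - ‖x‖ ^ 2 ≤ ‖a‖ ^ 2 / 4 := by
  nlinarith [real_inner_le_norm a x, sq_nonneg (‖a‖ - 2 * ‖x‖)]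

variable [FiniteDimensional ℝ V] [FiniteDimensional ℝ W]

/-- The relation `Aᵀ ∘ M ∘ A`: flows are mapped forward by `A`, efforts back by its adjoint. -/
def pullbackRel (A : W →ₗ[ℝ] V) (M : SetRel V V) : SetRel W W :=
  {p | ∃ e, (A p.1, e) ∈ M ∧ LinearMap.adjoint A e = p.2}

theorem MonotoneRel.pullbackRel {M : SetRel V V} (hM : MonotoneRel M) (A : W →ₗ[ℝ] V) :
    MonotoneRel (pullbackRel A M) := by
  rintro ⟨x, _⟩ ⟨e, he, rfl⟩ ⟨x', _⟩ ⟨e', he', rfl⟩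
  rw [← map_sub, LinearMap.adjoint_inner_left, map_sub]
  exact hM _ he _ he'

/-- The efforts `e` with `e ∈ M (A x - ε • e)` for `x = z - Aᵀ e`. For `ε = 0` these are the
efforts witnessing `z - x ∈ pullbackRel A M x`; `ε > 0` is a Tikhonov regularization. -/
def regularizedEfforts (A : W →ₗ[ℝ] V) (M : SetRel V V) (z : W) (ε : ℝ) : Set V :=
  {e | (A (z - LinearMap.adjoint A e) - ε • e, e) ∈ M}

theorem MaximalMonotoneRel.regularizedEfforts_nonempty {M : SetRel V V}
    (hM : MaximalMonotoneRel M) (A : W →ₗ[ℝ] V) (z : W) {ε : ℝ} (hε : 0 < ε) :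
    (regularizedEfforts A M z ε).Nonempty := by
  let D : V →ₗ[ℝ] V := A ∘ₗ LinearMap.adjoint A + ε • LinearMap.id
  have hD (y : V) : ⟪D y, y⟫ = ‖LinearMap.adjoint A y‖ ^ 2 + ε * ‖y‖ ^ 2 := by
    change ⟪A (LinearMap.adjoint A y) + ε • y, y⟫ = _
    rw [inner_add_left, real_inner_smul_left, ← LinearMap.adjoint_inner_right,
      real_inner_self_eq_norm_sq, real_inner_self_eq_norm_sq]
  obtain ⟨e, he⟩ := hM.inv.exists_mem_sub_linearMap hε
    (fun y => (le_add_of_nonneg_left (sq_nonneg _)).trans_eq (hD y).symm) (A z)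
  refine ⟨e, ?_⟩
  change (_, e) ∈ M
  rw [map_sub, sub_sub]
  exact he

theorem regularizedEfforts_subset_span (A : W →ₗ[ℝ] V) (M : SetRel V V) (z : W) {ε : ℝ}
    (hε : ε ≠ 0) :
    regularizedEfforts A M z ε ⊆ Submodule.span ℝ (M.dom + (LinearMap.range A : Set V)) := by
  intro e he
  set y := A (z - LinearMap.adjoint A e) - ε • e with hy
  have hy_dom : y ∈ M.dom := ⟨e, he⟩
  have hmem (v : W) : y + A v ∈ Submodule.span ℝ (M.dom + (LinearMap.range A : Set V)) :=
    Submodule.subset_span (add_mem_add hy_dom (LinearMap.mem_range_self A v))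
  have he_eq : e = ε⁻¹ • ((y + A (z - LinearMap.adjoint A e)) - (2 : ℝ) • (y + A 0)) := by
    rw [hy, eq_inv_smul_iff₀ hε, map_zero]
    module
  rw [he_eq]
  exact Submodule.smul_mem _ _ (Submodule.sub_mem _ (hmem _) (Submodule.smul_mem _ _ (hmem 0)))

theorem MonotoneRel.inner_regularizedEfforts_le {M : SetRel V V} (hM : MonotoneRel M)
    {A : W →ₗ[ℝ] V} {z : W} {ε : ℝ} {e : V} (hε : 0 ≤ ε) (he : e ∈ regularizedEfforts A M z ε)
    {y₀ e₀ : V} (h₀ : (y₀, e₀) ∈ M) (v : W) :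
    ⟪e, y₀ + A v⟫ ≤
      ‖z - LinearMap.adjoint A e₀ - v‖ ^ 2 / 4 + ε * (‖e₀‖ ^ 2 / 4) + ⟪e₀, y₀⟫ + ⟪z, v⟫ := by
  set x := z - LinearMap.adjoint A e with hx
  have hAe (u : W) : ⟪e, A u⟫ = ⟪z - x, u⟫ := by
    rw [← LinearMap.adjoint_inner_left, hx, sub_sub_cancel]
  calc ⟪e, y₀ + A v⟫
      ≤ ⟪e, y₀ + A v⟫ + ⟪e - e₀, A x - ε • e - y₀⟫ := le_add_of_nonneg_right (hM _ he _ h₀)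
    _ = (⟪z - LinearMap.adjoint A e₀ - v, x⟫ - ‖x‖ ^ 2) + ε * (⟪e₀, e⟫ - ‖e‖ ^ 2)
          + ⟪e₀, y₀⟫ + ⟪z, v⟫ := by
        simp only [inner_add_right, inner_sub_left, inner_sub_right, real_inner_smul_right, hAe,
          LinearMap.adjoint_inner_left, real_inner_self_eq_norm_sq, real_inner_comm v x]
        ring
    _ ≤ _ := by
        gcongr <;> exact inner_sub_norm_sq_le _ _

theorem MonotoneRel.isBounded_biUnion_regularizedEfforts {M : SetRel V V} (hM : MonotoneRel M)
    {A : W →ₗ[ℝ] V} (hA : NotProperlySeparated (M.dom + (LinearMap.range A : Set V))) (z : W) :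
    Bornology.IsBounded (⋃ ε ∈ Ioc (0 : ℝ) 1, regularizedEfforts A M z ε) := by
  refine hA.isBounded (iUnion₂_subset fun ε hε =>
    regularizedEfforts_subset_span A M z hε.1.ne') ?_
  rintro _ ⟨y₀, ⟨e₀, h₀⟩, _, ⟨v, rfl⟩, rfl⟩
  refine ⟨‖z - LinearMap.adjoint A e₀ - v‖ ^ 2 / 4 + 1 * (‖e₀‖ ^ 2 / 4) + ⟪e₀, y₀⟫ + ⟪z, v⟫, ?_⟩
  rintro _ ⟨e, he, rfl⟩
  obtain ⟨ε, ⟨hε_pos, hε_le⟩, he⟩ := mem_iUnion₂.1 he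
  refine (hM.inner_regularizedEfforts_le hε_pos.le he h₀ v).trans ?_
  gcongr

theorem MaximalMonotoneRel.regularizedEfforts_zero_nonempty {M : SetRel V V}
    (hM : MaximalMonotoneRel M) {A : W →ₗ[ℝ] V}
    (hA : NotProperlySeparated (M.dom + (LinearMap.range A : Set V))) (z : W) :
    (regularizedEfforts A M z 0).Nonempty := by
  let ε (k : ℕ) : ℝ := 1 / (k + 1)
  have hε_pos (k : ℕ) : 0 < ε k := Nat.one_div_pos_of_nat
  have hε_le (k : ℕ) : ε k ≤ 1 := by simpa [ε] using Nat.one_div_le_one_div (α := ℝ) k.zero_le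
  choose e he using fun k => hM.regularizedEfforts_nonempty A z (hε_pos k)
  obtain ⟨e', -, φ, hφ, hlim⟩ := tendsto_subseq_of_bounded
    (hM.prop.isBounded_biUnion_regularizedEfforts hA z)
    fun k => mem_iUnion₂.2 ⟨ε k, ⟨hε_pos k, hε_le k⟩, he k⟩
  have hε_lim : Tendsto (ε ∘ φ) atTop (𝓝 0) :=
    tendsto_one_div_add_atTop_nhds_zero_nat.comp hφ.tendsto_atTop
  have hcont : Continuous fun p : ℝ × V => (A (z - LinearMap.adjoint A p.2) - p.1 • p.2, p.2) := by
    have := A.continuous_of_finiteDimensional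
    have := (LinearMap.adjoint A).continuous_of_finiteDimensional
    fun_prop
  exact ⟨e', hM.isClosed.mem_of_tendsto ((hcont.tendsto (0, e')).comp (hε_lim.prodMk_nhds hlim))
    (.of_forall fun k => he (φ k))⟩

theorem MaximalMonotoneRel.pullbackRel {M : SetRel V V} (hM : MaximalMonotoneRel M)
    {A : W →ₗ[ℝ] V} (hA : NotProperlySeparated (M.dom + (LinearMap.range A : Set V))) :
    MaximalMonotoneRel (pullbackRel A M) := by
  refine (hM.prop.pullbackRel A).maximalMonotoneRel_of_forall_exists_mem_sub fun z => ?_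
  obtain ⟨e, he⟩ := hM.regularizedEfforts_zero_nonempty hA z
  refine ⟨z - LinearMap.adjoint A e, e, ?_, (sub_sub_cancel _ _).symm⟩
  simpa [regularizedEfforts] using he

end Pullback

section Interconnection

variable {V W X Y U : Type*} [NormedAddCommGroup V] [InnerProductSpace ℝ V]
  [NormedAddCommGroup W] [InnerProductSpace ℝ W]
  [NormedAddCommGroup X] [InnerProductSpace ℝ X] [NormedAddCommGroup Y] [InnerProductSpace ℝ Y]
  [NormedAddCommGroup U] [InnerProductSpace ℝ U]

/-- Relations between the flows and the efforts of a system with the two ports `X` and `U`. The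
`L²` product makes the pairing on `X × U` the sum of the pairings on the factors. -/
abbrev TwoPortRel (X U : Type*) : Type _ :=
  SetRel (WithLp 2 (X × U)) (WithLp 2 (X × U))

/-- The juxtaposition of two uncoupled relations on the product of their spaces. -/
def prodRel (M : SetRel V V) (N : SetRel W W) : TwoPortRel V W :=
  {p | (p.1.fst, p.2.fst) ∈ M ∧ (p.1.snd, p.2.snd) ∈ N}

theorem MonotoneRel.prodRel {M : SetRel V V} {N : SetRel W W} (hM : MonotoneRel M)
    (hN : MonotoneRel N) : MonotoneRel (prodRel M N) := fun p hp q hq => by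
  rw [WithLp.prod_inner_apply]
  exact add_nonneg (hM _ hp.1 _ hq.1) (hN _ hp.2 _ hq.2)

theorem MaximalMonotoneRel.prodRel {M : SetRel V V} {N : SetRel W W}
    (hM : MaximalMonotoneRel M) (hN : MaximalMonotoneRel N) :
    MaximalMonotoneRel (prodRel M N) := by
  refine ⟨hM.prop.prodRel hN.prop, fun R hR hle p hp => ?_⟩
  have hsum {q r} (hq : q ∈ M) (hr : r ∈ N) :
      0 ≤ ⟪p.2.fst - q.2, p.1.fst - q.1⟫ + ⟪p.2.snd - r.2, p.1.snd - r.1⟫ := by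
    have hmem : (WithLp.toLp 2 (q.1, r.1), WithLp.toLp 2 (q.2, r.2)) ∈ R := hle ⟨hq, hr⟩
    exact (hR p hp _ hmem).trans_eq (WithLp.prod_inner_apply _ _)
  have hfst : (p.1.fst, p.2.fst) ∈ M := by
    by_contra hnot
    obtain ⟨q, hq, hneg⟩ : ∃ q ∈ M, ⟪p.2.fst - q.2, p.1.fst - q.1⟫ < 0 := by
      by_contra! hall
      exact hnot (hM.mem hall)
    have hsnd : (p.1.snd, p.2.snd) ∈ N := hN.mem fun r hr => by linarith [hsum hq hr]
    have := hsum hq hsnd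
    simp only [sub_self, inner_zero_left] at this
    linarith
  exact ⟨hfst, hN.mem fun r hr => by simpa using hsum hfst hr⟩

/-- The relation obtained from `M` by exchanging the roles of flow and effort on the second
factor. -/
def partialInvRel (M : TwoPortRel X U) : TwoPortRel X U :=
  {p | (WithLp.toLp 2 (p.1.fst, p.2.snd), WithLp.toLp 2 (p.2.fst, p.1.snd)) ∈ M}

theorem MaximalMonotoneRel.partialInvRel {M : TwoPortRel X U} (hM : MaximalMonotoneRel M) :
    MaximalMonotoneRel (partialInvRel M) := by
  let φ (p : WithLp 2 (X × U) × WithLp 2 (X × U)) : WithLp 2 (X × U) × WithLp 2 (X × U) :=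
    (WithLp.toLp 2 (p.1.fst, p.2.snd), WithLp.toLp 2 (p.2.fst, p.1.snd))
  have hφ : Function.Involutive φ := fun p => rfl
  exact hM.preimage hφ.toPerm fun p q => by
    simp only [Function.Involutive.coe_toPerm, WithLp.prod_inner_apply]
    exact congrArg₂ _ rfl (real_inner_comm _ _)

/-- The interconnection of `Ma` and `Mb` through the shared port `U`, on which the flows of the
two systems are opposite and their efforts equal. -/
def interconnection (Ma : TwoPortRel X U) (Mb : TwoPortRel Y U) : TwoPortRel X Y :=
  {p | ∃ f e, (WithLp.toLp 2 (p.1.fst, f), WithLp.toLp 2 (p.2.fst, e)) ∈ Ma ∧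
    (WithLp.toLp 2 (p.1.snd, -f), WithLp.toLp 2 (p.2.snd, e)) ∈ Mb}

/-- The sums of the flows offered by `Ma` and by `Mb` to the shared port. -/
def portFlowSums (Ma : TwoPortRel X U) (Mb : TwoPortRel Y U) : Set U :=
  {d | ∃ p ∈ Ma, ∃ q ∈ Mb, p.1.snd + q.1.snd = d}

/-- The differences of the port efforts of `Ma` and `Mb` at states with opposite port flows. -/
def portEffortGaps (Ma : TwoPortRel X U) (Mb : TwoPortRel Y U) : Set U :=
  {d | ∃ p ∈ Ma, ∃ q ∈ Mb, p.1.snd + q.1.snd = 0 ∧ p.2.snd - q.2.snd = d}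

variable (X Y U) in
/-- The linear map `((x, y), u) ↦ ((x, u), (y, -u))` connecting the port flows of two systems. -/
def portCoupling :
    WithLp 2 (WithLp 2 (X × Y) × U) →ₗ[ℝ] WithLp 2 (WithLp 2 (X × U) × WithLp 2 (Y × U)) where
  toFun p := WithLp.toLp 2
    (WithLp.toLp 2 (p.fst.fst, p.snd), WithLp.toLp 2 (p.fst.snd, -p.snd))
  map_add' p q := by simp [← WithLp.toLp_add, add_comm]
  map_smul' c p := by simp [← WithLp.toLp_smul]

variable (V U) in
/-- The isometric embedding `v ↦ (v, 0)`, as a linear map. -/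
def inlLp : V →ₗ[ℝ] WithLp 2 (V × U) :=
  (WithLp.linearEquiv 2 ℝ (V × U)).symm ∘ₗ LinearMap.inl ℝ V U

variable [FiniteDimensional ℝ X] [FiniteDimensional ℝ Y] [FiniteDimensional ℝ U]

theorem adjoint_portCoupling (q : WithLp 2 (WithLp 2 (X × U) × WithLp 2 (Y × U))) :
    LinearMap.adjoint (portCoupling X Y U) q =
      WithLp.toLp 2 (WithLp.toLp 2 (q.fst.fst, q.snd.fst), q.fst.snd - q.snd.snd) := by
  refine ext_inner_right ℝ fun p => ?_
  rw [LinearMap.adjoint_inner_left]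
  simp only [portCoupling, LinearMap.coe_mk, AddHom.coe_mk, WithLp.prod_inner_apply,
    WithLp.fst, WithLp.snd, inner_sub_left, inner_neg_right]
  ring

theorem adjoint_inlLp [FiniteDimensional ℝ V] (q : WithLp 2 (V × U)) :
    LinearMap.adjoint (inlLp V U) q = q.fst := by
  refine ext_inner_right ℝ fun p => ?_
  rw [LinearMap.adjoint_inner_left]
  simp [inlLp, WithLp.prod_inner_apply]

variable {Ma : TwoPortRel X U} {Mb : TwoPortRel Y U}

theorem mem_pullbackRel_portCoupling_iff
    {p : WithLp 2 (WithLp 2 (X × Y) × U) × WithLp 2 (WithLp 2 (X × Y) × U)} :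
    p ∈ pullbackRel (portCoupling X Y U) (prodRel Ma Mb) ↔
      ∃ ea eb, ea - eb = p.2.snd ∧
        (WithLp.toLp 2 (p.1.fst.fst, p.1.snd), WithLp.toLp 2 (p.2.fst.fst, ea)) ∈ Ma ∧
        (WithLp.toLp 2 (p.1.fst.snd, -p.1.snd), WithLp.toLp 2 (p.2.fst.snd, eb)) ∈ Mb := by
  obtain ⟨f, e⟩ := p
  constructor
  · rintro ⟨q, ⟨hqa, hqb⟩, rfl⟩
    rw [adjoint_portCoupling]
    exact ⟨q.fst.snd, q.snd.snd, rfl, hqa, hqb⟩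
  · rintro ⟨ea, eb, hsnd, ha, hb⟩
    refine ⟨WithLp.toLp 2 (WithLp.toLp 2 (e.fst.fst, ea), WithLp.toLp 2 (e.fst.snd, eb)),
      ⟨ha, hb⟩, ?_⟩
    rw [adjoint_portCoupling]
    exact congrArg (fun d => WithLp.toLp 2 (e.fst, d)) hsnd

theorem interconnection_eq_pullbackRel (Ma : TwoPortRel X U) (Mb : TwoPortRel Y U) :
    interconnection Ma Mb = pullbackRel (inlLp (WithLp 2 (X × Y)) U)
      (partialInvRel (pullbackRel (portCoupling X Y U) (prodRel Ma Mb))) := by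
  ext ⟨w, e⟩
  constructor
  · rintro ⟨u, c, ha, hb⟩
    exact ⟨WithLp.toLp 2 (e, u),
      mem_pullbackRel_portCoupling_iff.2 ⟨c, c, sub_self c, ha, hb⟩, adjoint_inlLp _⟩
  · rintro ⟨q, hq, rfl⟩
    obtain ⟨ea, eb, hsub, ha, hb⟩ := mem_pullbackRel_portCoupling_iff.1 hq
    obtain rfl : ea = eb := sub_eq_zero.1 hsub
    rw [adjoint_inlLp]
    exact ⟨q.snd, ea, ha, hb⟩

theorem notProperlySeparated_dom_prodRel_add_range
    (h : NotProperlySeparated (portFlowSums Ma Mb)) :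
    NotProperlySeparated
      ((prodRel Ma Mb).dom + (LinearMap.range (portCoupling X Y U) : Set _)) := by
  let L : WithLp 2 (WithLp 2 (X × U) × WithLp 2 (Y × U)) →ₗ[ℝ] U :=
    WithLp.sndₗ 2 ℝ X U ∘ₗ WithLp.fstₗ 2 ℝ _ _ + WithLp.sndₗ 2 ℝ Y U ∘ₗ WithLp.sndₗ 2 ℝ _ _
  have hL : L '' (prodRel Ma Mb).dom = portFlowSums Ma Mb := by
    ext d
    constructor
    · rintro ⟨f, ⟨e, ha, hb⟩, rfl⟩
      exact ⟨_, ha, _, hb, rfl⟩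
    · rintro ⟨p, hp, q, hq, rfl⟩
      exact ⟨WithLp.toLp 2 (p.1, q.1), ⟨WithLp.toLp 2 (p.2, q.2), hp, hq⟩, rfl⟩
  refine NotProperlySeparated.add_submodule (hL ▸ h) fun f hf => ?_
  have hsnd : -f.fst.snd = f.snd.snd := (eq_neg_of_add_eq_zero_right hf).symm
  exact ⟨WithLp.toLp 2 (WithLp.toLp 2 (f.fst.fst, f.snd.fst), f.fst.snd),
    congrArg (fun u => WithLp.toLp 2 (f.fst, WithLp.toLp 2 (f.snd.fst, u))) hsnd⟩

theorem notProperlySeparated_dom_partialInvRel_add_range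
    (h : NotProperlySeparated (portEffortGaps Ma Mb)) :
    NotProperlySeparated
      ((partialInvRel (pullbackRel (portCoupling X Y U) (prodRel Ma Mb))).dom +
        (LinearMap.range (inlLp (WithLp 2 (X × Y)) U) : Set _)) := by
  have hsnd : WithLp.sndₗ 2 ℝ _ _ ''
      (partialInvRel (pullbackRel (portCoupling X Y U) (prodRel Ma Mb))).dom =
        portEffortGaps Ma Mb := by
    ext d
    constructor
    · rintro ⟨f, ⟨e, hfe⟩, rfl⟩
      obtain ⟨ea, eb, hsub, ha, hb⟩ := mem_pullbackRel_portCoupling_iff.1 hfe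
      exact ⟨_, ha, _, hb, add_neg_cancel _, hsub⟩
    · rintro ⟨⟨fa, ea⟩, ha, ⟨fb, eb⟩, hb, hsum, rfl⟩
      have hfb : fb = WithLp.toLp 2 (fb.fst, -fa.snd) :=
        congrArg (fun u => WithLp.toLp 2 (fb.fst, u)) (eq_neg_of_add_eq_zero_right hsum)
      rw [hfb] at hb
      exact ⟨WithLp.toLp 2 (WithLp.toLp 2 (fa.fst, fb.fst), ea.snd - eb.snd),
        ⟨WithLp.toLp 2 (WithLp.toLp 2 (ea.fst, eb.fst), fa.snd),
          mem_pullbackRel_portCoupling_iff.2 ⟨ea.snd, eb.snd, rfl, ha, hb⟩⟩, rfl⟩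
  refine NotProperlySeparated.add_submodule (hsnd ▸ h) fun f hf => ⟨f.fst, ?_⟩
  exact congrArg (fun u => WithLp.toLp 2 (f.fst, u)) (LinearMap.mem_ker.1 hf).symm

theorem MaximalMonotoneRel.interconnection (hMa : MaximalMonotoneRel Ma)
    (hMb : MaximalMonotoneRel Mb)
    (hflow : NotProperlySeparated (portFlowSums Ma Mb))
    (heffort : NotProperlySeparated (portEffortGaps Ma Mb)) :
    MaximalMonotoneRel (interconnection Ma Mb) := by
  rw [interconnection_eq_pullbackRel]
  have hcoupled := (hMa.prodRel hMb).pullbackRel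
    (notProperlySeparated_dom_prodRel_add_range hflow)
  exact hcoupled.partialInvRel.pullbackRel
    (notProperlySeparated_dom_partialInvRel_add_range heffort)

end Interconnection

section Coordinates

variable {n n1 n2 na nb : ℕ}

/-- The equivalence between states of two Euclidean ports, grouped as (flow, effort), and
quadruples (flow₁, flow₂, effort₁, effort₂). -/
def stateEquiv (n1 n2 : ℕ) :
    WithLp 2 (EuclideanSpace ℝ (Fin n1) × EuclideanSpace ℝ (Fin n2)) ×
        WithLp 2 (EuclideanSpace ℝ (Fin n1) × EuclideanSpace ℝ (Fin n2)) ≃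
      (Fin n1 → ℝ) × (Fin n2 → ℝ) × (Fin n1 → ℝ) × (Fin n2 → ℝ) where
  toFun p := (p.1.fst.ofLp, p.1.snd.ofLp, p.2.fst.ofLp, p.2.snd.ofLp)
  invFun t := (WithLp.toLp 2 (WithLp.toLp 2 t.1, WithLp.toLp 2 t.2.1),
    WithLp.toLp 2 (WithLp.toLp 2 t.2.2.1, WithLp.toLp 2 t.2.2.2))
  left_inv _ := rfl
  right_inv _ := rfl

/-- A set of quadruples as a relation between Euclidean spaces of flows and of efforts. -/
def toTwoPortRel (M : Set ((Fin n1 → ℝ) × (Fin n2 → ℝ) × (Fin n1 → ℝ) × (Fin n2 → ℝ))) :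
    TwoPortRel (EuclideanSpace ℝ (Fin n1)) (EuclideanSpace ℝ (Fin n2)) :=
  stateEquiv n1 n2 ⁻¹' M

variable {M : Set ((Fin n1 → ℝ) × (Fin n2 → ℝ) × (Fin n1 → ℝ) × (Fin n2 → ℝ))}
  {Ma : Set ((Fin na → ℝ) × (Fin n → ℝ) × (Fin na → ℝ) × (Fin n → ℝ))}
  {Mb : Set ((Fin nb → ℝ) × (Fin n → ℝ) × (Fin nb → ℝ) × (Fin n → ℝ))}

theorem inner_eq_dot (e f : EuclideanSpace ℝ (Fin n)) : ⟪e, f⟫ = dot e.ofLp f.ofLp := by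
  simp [dot, PiLp.inner_apply, mul_comm]

theorem mono4_iff_monotoneRel : Mono4 M ↔ MonotoneRel (toTwoPortRel M) := by
  constructor
  · intro h p hp q hq
    rw [WithLp.prod_inner_apply, inner_eq_dot, inner_eq_dot]
    exact h _ _ _ _ _ _ _ _ hp hq
  · intro h f1 f2 e1 e2 f1' f2' e1' e2' hp hq
    have hinner := h ((stateEquiv n1 n2).symm (f1, f2, e1, e2)) hp
      ((stateEquiv n1 n2).symm (f1', f2', e1', e2')) hq
    rwa [WithLp.prod_inner_apply, inner_eq_dot, inner_eq_dot] at hinner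

theorem maxMono4_iff_maximalMonotoneRel : MaxMono4 M ↔ MaximalMonotoneRel (toTwoPortRel M) := by
  have hsurj : Function.Surjective (toTwoPortRel (n1 := n1) (n2 := n2)) :=
    (stateEquiv n1 n2).injective.preimage_surjective
  have hinj : Function.Injective (toTwoPortRel (n1 := n1) (n2 := n2)) :=
    (stateEquiv n1 n2).surjective.preimage_injective
  have hle {M N} : toTwoPortRel (n1 := n1) (n2 := n2) M ⊆ toTwoPortRel N ↔ M ⊆ N :=
    (stateEquiv n1 n2).surjective.preimage_subset_preimage_iff
  simp only [MaximalMonotoneRel, maximal_iff, MaxMono4, hsurj.forall, ← mono4_iff_monotoneRel,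
    hinj.eq_iff, hle, eq_comm]

theorem toTwoPortRel_relComp :
    toTwoPortRel (RelComp Ma Mb) = interconnection (toTwoPortRel Ma) (toTwoPortRel Mb) := by
  ext p
  constructor
  · rintro ⟨f, e, ha, hb⟩
    exact ⟨WithLp.toLp 2 f, WithLp.toLp 2 e, ha, hb⟩
  · rintro ⟨f, e, ha, hb⟩
    exact ⟨f.ofLp, e.ofLp, ha, hb⟩

theorem notProperlySeparated_portFlowSums_of_mem_rint {f : Fin n → ℝ}
    (hf : (f, -f) ∈ rint
      ({f : Fin n → ℝ | ∃ fa ea e, (fa, f, ea, e) ∈ Ma} ×ˢ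
        {f : Fin n → ℝ | ∃ fb eb e, (fb, f, eb, e) ∈ Mb})) :
    NotProperlySeparated (portFlowSums (toTwoPortRel Ma) (toTwoPortRel Mb)) := by
  let L : (Fin n → ℝ) × (Fin n → ℝ) →L[ℝ] EuclideanSpace ℝ (Fin n) :=
    (EuclideanSpace.equiv (Fin n) ℝ).symm ∘L
      (ContinuousLinearMap.fst ℝ _ _ + ContinuousLinearMap.snd ℝ _ _)
  have hL : L (f, -f) = 0 := by simp [L]
  convert! notProperlySeparated_image_of_mem_rint hf hL using 1
  ext d
  constructor
  · rintro ⟨p, hp, q, hq, rfl⟩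
    exact ⟨(p.1.snd.ofLp, q.1.snd.ofLp), ⟨⟨_, _, _, hp⟩, ⟨_, _, _, hq⟩⟩, rfl⟩
  · rintro ⟨p, ⟨⟨fa, ea, e, ha⟩, ⟨fb, eb, e', hb⟩⟩, rfl⟩
    exact ⟨(stateEquiv na n).symm (fa, p.1, ea, e), ha,
      (stateEquiv nb n).symm (fb, p.2, eb, e'), hb, rfl⟩

theorem notProperlySeparated_portEffortGaps_of_mem_rint {e : Fin n → ℝ}
    (he : (e, e) ∈ rint
      {p : (Fin n → ℝ) × (Fin n → ℝ) | ∃ f,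
        (∃ fa ea, (fa, f, ea, p.1) ∈ Ma) ∧ (∃ fb eb, (fb, -f, eb, p.2) ∈ Mb)}) :
    NotProperlySeparated (portEffortGaps (toTwoPortRel Ma) (toTwoPortRel Mb)) := by
  let L : (Fin n → ℝ) × (Fin n → ℝ) →L[ℝ] EuclideanSpace ℝ (Fin n) :=
    (EuclideanSpace.equiv (Fin n) ℝ).symm ∘L
      (ContinuousLinearMap.fst ℝ _ _ - ContinuousLinearMap.snd ℝ _ _)
  have hL : L (e, e) = 0 := by simp [L]
  convert! notProperlySeparated_image_of_mem_rint he hL using 1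
  ext d
  constructor
  · rintro ⟨p, hp, q, hq, hsum, rfl⟩
    have hq_flow : q.1.snd.ofLp = -p.1.snd.ofLp :=
      congrArg WithLp.ofLp (eq_neg_of_add_eq_zero_right hsum)
    exact ⟨(p.2.snd.ofLp, q.2.snd.ofLp),
      ⟨p.1.snd.ofLp, ⟨_, _, hp⟩, ⟨q.1.fst.ofLp, q.2.fst.ofLp, hq_flow ▸ hq⟩⟩, rfl⟩
  · rintro ⟨p, ⟨f, ⟨fa, ea, ha⟩, ⟨fb, eb, hb⟩⟩, rfl⟩
    exact ⟨(stateEquiv na n).symm (fa, f, ea, p.1), ha,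
      (stateEquiv nb n).symm (fb, -f, eb, p.2), hb,
      congrArg (WithLp.toLp 2) (add_neg_cancel f), rfl⟩

end Coordinates

/-- Composition of maximal monotone relations is maximal monotone, under the
relative-interior conditions on the shared flow and effort variables:
`C_f = Π(M_a, F) × Π(M_b, F)` and
`C_e = {(e₁,e₂) : ∃ f, (f,e₁) ∈ Π(M_a, F × E), (−f,e₂) ∈ Π(M_b, F × E)}`,
and there exist `f̄`, `ē` with `(f̄, −f̄) ∈ rint C_f` and `(ē, ē) ∈ rint C_e`. -/
theorem maximalMonotone_relComp {na nb n : ℕ}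
    (Ma : Set ((Fin na → ℝ) × (Fin n → ℝ) × (Fin na → ℝ) × (Fin n → ℝ)))
    (Mb : Set ((Fin nb → ℝ) × (Fin n → ℝ) × (Fin nb → ℝ) × (Fin n → ℝ)))
    (hMa : MaxMono4 Ma) (hMb : MaxMono4 Mb)
    (hf : ∃ fbar : Fin n → ℝ,
      (fbar, -fbar) ∈ rint
        ({f : Fin n → ℝ | ∃ fa ea e, (fa, f, ea, e) ∈ Ma} ×ˢ
         {f : Fin n → ℝ | ∃ fb eb e, (fb, f, eb, e) ∈ Mb}))
    (he : ∃ ebar : Fin n → ℝ,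
      (ebar, ebar) ∈ rint
        {p : (Fin n → ℝ) × (Fin n → ℝ) | ∃ f,
          (∃ fa ea, (fa, f, ea, p.1) ∈ Ma) ∧ (∃ fb eb, (fb, -f, eb, p.2) ∈ Mb)}) :
    MaxMono4 (RelComp Ma Mb) := by
  obtain ⟨fbar, hfbar⟩ := hf
  obtain ⟨ebar, hebar⟩ := he
  rw [maxMono4_iff_maximalMonotoneRel] at hMa hMb ⊢
  rw [toTwoPortRel_relComp]
  exact hMa.interconnection hMb (notProperlySeparated_portFlowSums_of_mem_rint hfbar)
    (notProperlySeparated_portEffortGaps_of_mem_rint hebar)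
end

section
/- Let M_a ⊆ F_a × F × E_a × E and M_b ⊆ F_b × F × E_b × E be maximal cyclically monotone relations generated by proper lower semicontinuous convex functions φ_a : F_a × F → (−∞,+∞] and φ_b : F_b × F → (−∞,+∞], i.e. (f_a,f,e_a,e) ∈ M_a iff (e_a,e) ∈ ∂φ_a(f_a,f), and similarly for M_b. Define C_f = Π(dom φ_a, F) × Π(dom φ_b, F) and C_e = {(e₁,e₂) : there exists f with (f,e₁) ∈ Π(M_a, F × E) and (−f, e₂) ∈ Π(M_b, F × E)}. Suppose there exist f̄ ∈ F and ē ∈ E with (f̄, −f̄) ∈ rint C_f and (ē, ē) ∈ rint C_e. Then the composition M_a ⇄ M_b ⊆ F_a × F_b × E_a × E_b is maximal cyclically monotone, and it is generated by the function θ* : F_a × F_b → (−∞,+∞], where θ(e_a,e_b) := φ*(e_a, 0, e_b), φ(f_a, f, f_b) := φ_a(f_a, f) + φ_b(f_b, −f), and * denotes convex conjugation. -/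
/-- Pairing on a product of two spaces `ℝ^{n₁} × ℝ^{n₂}`. -/
noncomputable def dot2 {n1 n2 : ℕ} (e f : (Fin n1 → ℝ) × (Fin n2 → ℝ)) : ℝ :=
  dot e.1 f.1 + dot e.2 f.2

/-- Pairing on a product of three spaces. -/
noncomputable def dot3 {n1 n2 n3 : ℕ}
    (e f : (Fin n1 → ℝ) × (Fin n2 → ℝ) × (Fin n3 → ℝ)) : ℝ :=
  dot e.1 f.1 + dot e.2.1 f.2.1 + dot e.2.2 f.2.2

/-- The subdifferential of an extended-real-valued function `φ` at `f`, with
respect to a pairing `p`: the set of `e` with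
`φ(f') ≥ φ(f) + ⟨e, f' − f⟩` for all `f'` (empty where `φ f = +∞`). -/
def subdiff {α : Type*} [AddCommGroup α] (p : α → α → ℝ) (φ : α → EReal) (f : α) :
    Set α :=
  {e | φ f ≠ ⊤ ∧ ∀ f', φ f + ((p e (f' - f) : ℝ) : EReal) ≤ φ f'}

/-- The convex conjugate `φ*(e) = sup_f (⟨e,f⟩ − φ(f))` w.r.t. a pairing `p`. -/
noncomputable def fconj {α : Type*} (p : α → α → ℝ) (φ : α → EReal) (e : α) : EReal :=
  ⨆ f, ((p e f : ℝ) : EReal) - φ f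

/-- Proper, lower semicontinuous, convex extended-real-valued function. -/
def ProperLscConvex {α : Type*} [AddCommGroup α] [Module ℝ α] [TopologicalSpace α]
    (φ : α → EReal) : Prop :=
  (∃ x, φ x ≠ ⊤) ∧ (∀ x, φ x ≠ ⊥) ∧ LowerSemicontinuous φ ∧
    ∀ x y : α, ∀ t : ℝ, 0 ≤ t → t ≤ 1 →
      φ (t • x + (1 - t) • y) ≤ (t : EReal) * φ x + ((1 - t : ℝ) : EReal) * φ y

/-- Maximal cyclically monotone relation. -/
def MaxCycMono4 {n1 n2 : ℕ}
    (M : Set ((Fin n1 → ℝ) × (Fin n2 → ℝ) × (Fin n1 → ℝ) × (Fin n2 → ℝ))) : Prop :=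
  CycMono4 M ∧ ∀ M', CycMono4 M' → M ⊆ M' → M' = M

/-- `φ(f_a, f, f_b) = φ_a(f_a, f) + φ_b(f_b, −f)`. -/
noncomputable def phiSum {na n nb : ℕ}
    (φa : (Fin na → ℝ) × (Fin n → ℝ) → EReal)
    (φb : (Fin nb → ℝ) × (Fin n → ℝ) → EReal) :
    (Fin na → ℝ) × (Fin n → ℝ) × (Fin nb → ℝ) → EReal :=
  fun q => φa (q.1, q.2.1) + φb (q.2.2, -q.2.1)

/-- `θ(e_a, e_b) = φ*(e_a, 0, e_b)`. -/
noncomputable def theta {na n nb : ℕ}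
    (φa : (Fin na → ℝ) × (Fin n → ℝ) → EReal)
    (φb : (Fin nb → ℝ) × (Fin n → ℝ) → EReal) :
    (Fin na → ℝ) × (Fin nb → ℝ) → EReal :=
  fun p => fconj dot3 (phiSum φa φb) (p.1, 0, p.2)

/-!
The generating property is the chain of equivalences

  `(e_a, e_b) ∈ ∂θ*(f_a, f_b) ⇔ (f_a, f_b) ∈ ∂θ(e_a, e_b)`
  `⇔ ∃ f, (f_a, f, f_b) ∈ ∂φ*(e_a, 0, e_b) ⇔ ∃ f, (e_a, 0, e_b) ∈ ∂φ(f_a, f, f_b)`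
  `⇔ ∃ f e, (e_a, e) ∈ ∂φ_a(f_a, f) ∧ (e_b, e) ∈ ∂φ_b(f_b, -f)`.

The first and third steps invert subdifferentials by conjugation. The second and fourth are the
chain rule `∂(ψ ∘ A) = Aᵀ ∂ψ`, for the inclusion `(e_a, e_b) ↦ (e_a, 0, e_b)` and for
`(f_a, f, f_b) ↦ ((f_a, f), (f_b, -f))`. Writing the range of `A` as the kernel of `L`, the chain
rule needs `0` to lie in the relative interior of `L (dom ψ)`, so that a projection of the epigraph
of `ψ` has a supporting functional there. The image of `C_f` under `(f, f') ↦ f + f'` is exactly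
`L (dom ψ)` for the fourth step; the image of `C_e` under `(e, e') ↦ e - e'` is only dense in
`L (dom φ*)`, which is enough because a convex set has the same relative interior as its closure.

Maximality and inversion rest on Minty's argument: minimising `φ + |· - z|² / 2` shows that every
`z` is of the form `y + v` with `v ∈ ∂φ(y)`.
-/

section IntrinsicCore

variable {E F : Type*} [AddCommGroup E] [Module ℝ E] [AddCommGroup F] [Module ℝ F]

/-- The intrinsic core (relative algebraic interior) of a set: the points from which one can move
a positive distance inside `C` in every direction of its affine span. The direction `v = 0` forces
such points to lie in `C`. -/
def intrinsicCore (C : Set E) : Set E :=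
  {x | ∀ v ∈ vectorSpan ℝ C, ∃ t : ℝ, 0 < t ∧ x + t • v ∈ C}

theorem intrinsicCore_subset (C : Set E) : intrinsicCore C ⊆ C := by
  intro x hx
  obtain ⟨t, -, ht⟩ := hx 0 (zero_mem _)
  simpa using ht

theorem image_intrinsicCore_subset (L : E →ₗ[ℝ] F) (C : Set E) :
    L '' intrinsicCore C ⊆ intrinsicCore (L '' C) := by
  rintro _ ⟨x, hx, rfl⟩ w hw
  obtain ⟨v, hv, rfl⟩ : w ∈ (vectorSpan ℝ C).map L := by
    simpa using L.toAffineMap.map_vectorSpan.ge hw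
  obtain ⟨t, ht, hxv⟩ := hx v hv
  exact ⟨t, ht, _, hxv, by simp⟩

theorem openSegment_subset_intrinsicCore {C : Set E} (hC : Convex ℝ C) {x y : E}
    (hx : x ∈ intrinsicCore C) (hy : y ∈ C) : openSegment ℝ x y ⊆ intrinsicCore C := by
  rintro _ ⟨a, b, ha, hb, hab, rfl⟩ v hv
  obtain ⟨t, ht, hxv⟩ := hx v hv
  refine ⟨a * t, by positivity, ?_⟩
  convert hC hxv hy ha.le hb.le hab using 1
  module

end IntrinsicCore

section IntrinsicInterior

variable {E F : Type*} [NormedAddCommGroup E] [NormedSpace ℝ E]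
  [NormedAddCommGroup F] [NormedSpace ℝ F]

theorem intrinsicInterior_subset_intrinsicCore (C : Set E) :
    intrinsicInterior ℝ C ⊆ intrinsicCore C := by
  rintro _ ⟨x, hx, rfl⟩ v hv
  let line : ℝ → affineSpan ℝ C := fun t =>
    ⟨t • v +ᵥ (x : E), AffineSubspace.vadd_mem_of_mem_direction
      ((direction_affineSpan ℝ C).ge (Submodule.smul_mem _ t hv)) x.2⟩
  have hline : Continuous line := by
    apply Continuous.subtype_mk
    simp only [vadd_eq_add]
    fun_prop
  have hline_zero : line 0 = x := by ext; simp [line]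
  have hmem : ∀ᶠ t in nhds (0 : ℝ), line t ∈ interior ((↑) ⁻¹' C : Set (affineSpan ℝ C)) :=
    hline.continuousAt.eventually_mem (isOpen_interior.mem_nhds (hline_zero ▸ hx))
  obtain ⟨t, htC, ht⟩ := ((hmem.filter_mono nhdsWithin_le_nhds).and
    (self_mem_nhdsWithin (s := Set.Ioi 0))).exists
  have hline_mem : line t ∈ ((↑) ⁻¹' C : Set (affineSpan ℝ C)) := interior_subset htC
  exact ⟨t, ht, by simpa [line, add_comm] using hline_mem⟩

theorem vectorSpan_closure [FiniteDimensional ℝ E] (C : Set E) :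
    vectorSpan ℝ (closure C) = vectorSpan ℝ C := by
  refine le_antisymm ?_ (vectorSpan_mono ℝ subset_closure)
  rw [← direction_affineSpan, ← direction_affineSpan]
  exact AffineSubspace.direction_le <| affineSpan_le.2 <|
    closure_minimal (subset_affineSpan ℝ C) (AffineSubspace.closed_of_finiteDimensional _)

theorem intrinsicCore_mono_of_subset_closure [FiniteDimensional ℝ E] {C D : Set E} (hCD : C ⊆ D)
    (hDC : D ⊆ closure C) : intrinsicCore C ⊆ intrinsicCore D := by
  intro x hx v hv
  obtain ⟨t, ht, hxv⟩ := hx v (vectorSpan_closure C ▸ vectorSpan_mono ℝ hDC hv)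
  exact ⟨t, ht, hCD hxv⟩

/- Moving the error `y - c` of an approximation `c ∈ C` of `y` into the point `x`, around which `C`
contains a relative ball, writes every point of the segment as a combination of points of `C`. -/
theorem openSegment_intrinsicInterior_closure_subset [FiniteDimensional ℝ E] {C : Set E}
    (hC : Convex ℝ C) {x y : E} (hx : x ∈ intrinsicInterior ℝ C) (hy : y ∈ closure C) :
    openSegment ℝ x y ⊆ C := by
  rintro _ ⟨a, b, ha, hb, hab, rfl⟩
  obtain ⟨⟨x, hxA⟩, hx, rfl⟩ := hx
  obtain ⟨ε, hε, hball⟩ := Metric.mem_nhds_iff.1 (mem_interior_iff_mem_nhds.1 hx)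
  obtain ⟨c, hc, hyc⟩ := Metric.mem_closure_iff.1 hy (a * ε / b) (by positivity)
  have hyA : y ∈ affineSpan ℝ C :=
    closure_minimal (subset_affineSpan ℝ C) (AffineSubspace.closed_of_finiteDimensional _) hy
  have hxC : x + (b / a) • (y - c) ∈ C := by
    have hA : (b / a) • (y - c) +ᵥ x ∈ affineSpan ℝ C :=
      AffineSubspace.vadd_mem_of_mem_direction (Submodule.smul_mem _ _
        (AffineSubspace.vsub_mem_direction hyA (subset_affineSpan ℝ C hc))) hxA
    rw [add_comm]
    refine hball (a := ⟨_, hA⟩) ?_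
    rw [dist_eq_norm] at hyc
    have hb' : ‖(b / a) • (y - c)‖ < ε := by
      rw [norm_smul, Real.norm_of_nonneg (by positivity)]
      calc b / a * ‖y - c‖ < b / a * (a * ε / b) := by gcongr
        _ = ε := by field_simp
    simpa [Subtype.dist_eq] using hb'
  convert hC hxC hc ha.le hb.le hab using 1
  match_scalars <;> field_simp
  ring

theorem intrinsicCore_closure_subset [FiniteDimensional ℝ E] {C : Set E} (hC : Convex ℝ C) :
    intrinsicCore (closure C) ⊆ intrinsicCore C := by
  intro x hx v hv
  have hxC : x ∈ closure C := intrinsicCore_subset _ hx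
  obtain ⟨p, hp⟩ := (closure_nonempty_iff.1 ⟨x, hxC⟩).intrinsicInterior hC
  have hpC : p ∈ closure C := subset_closure (intrinsicInterior_subset hp)
  obtain ⟨t, ht, hxt⟩ := hx (v + (x - p)) <|
    add_mem (vectorSpan_mono ℝ subset_closure hv) (vsub_mem_vectorSpan ℝ hxC hpC)
  refine ⟨t / (1 + t), by positivity, openSegment_intrinsicInterior_closure_subset hC hp hxt
    ⟨t / (1 + t), 1 / (1 + t), by positivity, by positivity, by field_simp; ring, ?_⟩⟩
  match_scalars <;> field_simp
  ring

theorem subset_closure_intrinsicCore [FiniteDimensional ℝ E] {C : Set E} (hC : Convex ℝ C) :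
    C ⊆ closure (intrinsicCore C) := by
  intro y hy
  obtain ⟨x, hx⟩ := Set.Nonempty.intrinsicInterior hC ⟨y, hy⟩
  have hsegment := openSegment_subset_intrinsicCore hC
    (intrinsicInterior_subset_intrinsicCore C hx) hy
  exact closure_mono hsegment (segment_subset_closure_openSegment (right_mem_segment ℝ x y))

theorem map_mem_intrinsicCore_of_mem_intrinsicInterior_closure [FiniteDimensional ℝ F]
    (L : E →L[ℝ] F) {S : Set E} {P : Set F} (hP : Convex ℝ P) (hSP : L '' S ⊆ P)
    (hPS : P ⊆ closure (L '' S)) {x : E} (hx : x ∈ intrinsicInterior ℝ (closure S)) :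
    L x ∈ intrinsicCore P := by
  refine intrinsicCore_closure_subset hP <| intrinsicCore_mono_of_subset_closure
    ?_ ?_ <| image_intrinsicCore_subset (L : E →ₗ[ℝ] F) _
      ⟨x, intrinsicInterior_subset_intrinsicCore _ hx, rfl⟩
  · exact (image_closure_subset_closure_image L.continuous).trans (closure_mono hSP)
  · exact closure_minimal (hPS.trans (closure_mono (Set.image_mono subset_closure)))
      isClosed_closure

end IntrinsicInterior

section SupportingFunctional

variable {E : Type*} [AddCommGroup E] [Module ℝ E]

theorem eq_zero_or_mem_convexConeHull_of_mem_pointedConeHull {S : Set E} {x : E}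
    (hx : x ∈ PointedCone.hull ℝ S) : x = 0 ∨ x ∈ ConvexCone.hull ℝ S := by
  induction hx using Submodule.span_induction with
  | mem x hx => exact .inr (ConvexCone.subset_hull hx)
  | zero => exact .inl rfl
  | add x y _ _ hx hy =>
    rcases hx with rfl | hx
    · simpa using hy
    rcases hy with rfl | hy
    · simpa using Or.inr hx
    exact .inr (add_mem hx hy)
  | smul c x _ hx =>
    rcases eq_zero_or_pos c with rfl | hc
    · simp
    rcases hx with rfl | hx
    · simp
    exact .inr ((ConvexCone.hull ℝ S).smul_mem hc hx)

theorem exists_linearMap_le_of_absorbs {S : Set (E × ℝ)} (hS : Convex ℝ S)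
    (hzero : ∀ r, ((0 : E), r) ∈ S → 0 ≤ r)
    (habs : ∀ y : E, ∃ t : ℝ, 0 < t ∧ t • y ∈ Prod.fst '' S) :
    ∃ g : E →ₗ[ℝ] ℝ, ∀ y r, (y, r) ∈ S → g y ≤ r := by
  let vertical : (E × ℝ) →ₗ.[ℝ] ℝ :=
    { domain := LinearMap.range (LinearMap.inr ℝ E ℝ)
      toFun := LinearMap.snd ℝ E ℝ ∘ₗ Submodule.subtype _ }
  obtain ⟨g, hg_vertical, hg_nonneg⟩ := riesz_extension (PointedCone.hull ℝ S) vertical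
    (by
      rintro ⟨_, r, rfl⟩ hr
      change 0 ≤ r
      rcases eq_zero_or_mem_convexConeHull_of_mem_pointedConeHull hr with hr | hr
      · exact (congrArg Prod.snd hr).ge
      obtain ⟨t, ht, ⟨y, s⟩, hs, hts⟩ := (ConvexCone.mem_hull_of_convex hS).1 hr
      obtain ⟨rfl, rfl⟩ : y = 0 ∧ t * s = r := by simpa [ht.ne'] using hts
      exact mul_nonneg ht.le (hzero s hs))
    (by
      rintro ⟨y, r⟩
      obtain ⟨t, ht, ⟨_, s⟩, hs, rfl⟩ := habs y
      refine ⟨⟨(0, t⁻¹ * s - r), _, rfl⟩, ?_⟩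
      have hmem := PointedCone.smul_mem (PointedCone.hull ℝ S) (inv_nonneg.2 ht.le)
        (PointedCone.subset_hull hs)
      simpa [smul_smul, ht.ne'] using hmem)
  have hg_inr (r : ℝ) : g (0, r) = r := hg_vertical ⟨(0, r), r, rfl⟩
  refine ⟨-(g ∘ₗ LinearMap.inl ℝ E ℝ), fun y r hyr => ?_⟩
  have hsplit : g (y, r) = g (y, 0) + r := by rw [← hg_inr r, ← map_add]; simp [hg_inr]
  have := hg_nonneg _ (PointedCone.subset_hull hyr)
  simp only [LinearMap.neg_apply, LinearMap.comp_apply, LinearMap.inl_apply]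
  linarith

theorem exists_linearMap_add_le_of_mem_intrinsicCore {S : Set (E × ℝ)} (hS : Convex ℝ S) {b : E}
    {c : ℝ} (hb : b ∈ intrinsicCore (Prod.fst '' S)) (hc : ∀ r, (b, r) ∈ S → c ≤ r) :
    ∃ g : E →ₗ[ℝ] ℝ, ∀ y r, (y, r) ∈ S → g (y - b) + c ≤ r := by
  let W := vectorSpan ℝ (Prod.fst '' S)
  let T : Set (W × ℝ) := W.subtype.prodMap LinearMap.id ⁻¹' ((fun q => (b, c) + q) ⁻¹' S)
  have hT : Convex ℝ T := (hS.translate_preimage_right (b, c)).linear_preimage _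
  obtain ⟨g, hg⟩ := exists_linearMap_le_of_absorbs hT
    (fun r hr => by simpa using hc (c + r) (by simpa [T] using hr))
    (fun w => by
      obtain ⟨t, ht, ⟨y, r⟩, hyr, hy⟩ := hb w w.2
      exact ⟨t, ht, (t • w, r - c), by simpa [T, ← hy] using hyr, rfl⟩)
  obtain ⟨g', rfl⟩ := LinearMap.exists_extend g
  refine ⟨g', fun y r hyr => ?_⟩
  have hyW : y - b ∈ W := vsub_mem_vectorSpan ℝ ⟨_, hyr, rfl⟩ (intrinsicCore_subset _ hb)
  have := hg ⟨y - b, hyW⟩ (r - c) (by simpa [T] using hyr)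
  exact le_sub_iff_add_le.1 this

end SupportingFunctional

section Epigraph

/-- The epigraph of an extended-real-valued function. Since `EReal` is not a real vector space,
convexity of `φ` is expressed through its epigraph instead of `ConvexOn`. -/
def epigraph {α : Type*} (φ : α → EReal) : Set (α × ℝ) :=
  {q | φ q.1 ≤ q.2}

theorem image_fst_epigraph {α : Type*} (φ : α → EReal) :
    Prod.fst '' epigraph φ = {x | φ x ≠ ⊤} := by
  ext x
  constructor
  · rintro ⟨⟨x, r⟩, hr, rfl⟩
    exact ne_top_of_le_ne_top (EReal.coe_ne_top r) hr
  · exact fun hx => ⟨(x, (φ x).toReal), EReal.le_coe_toReal hx, rfl⟩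

theorem coe_le_iff_forall_real_le {a : ℝ} {x : EReal} :
    (a : EReal) ≤ x ↔ ∀ r : ℝ, x ≤ r → a ≤ r := by
  refine ⟨fun h r hr => EReal.coe_le_coe_iff.1 (h.trans hr), fun h => ?_⟩
  exact EReal.le_of_forall_lt_iff_le.1 fun r hr => EReal.coe_le_coe_iff.2 (h r hr.le)

variable {Z E : Type*} [AddCommGroup Z] [Module ℝ Z] [AddCommGroup E] [Module ℝ E]

/- The multiplier is a supporting functional, at `b`, of the set of pairs `(L z, r - ℓ z)` with
`(z, r)` in the epigraph. -/
theorem exists_linearMap_multiplier {Φ : Z → EReal} (hΦ : Convex ℝ (epigraph Φ))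
    (L : Z →ₗ[ℝ] E) (ℓ : Z →ₗ[ℝ] ℝ) {b : E} {c : ℝ}
    (hb : b ∈ intrinsicCore (L '' {z | Φ z ≠ ⊤}))
    (hc : ∀ z, L z = b → ((ℓ z + c : ℝ) : EReal) ≤ Φ z) :
    ∃ g : E →ₗ[ℝ] ℝ, ∀ z, ((ℓ z + g (L z - b) + c : ℝ) : EReal) ≤ Φ z := by
  let T : Z × ℝ →ₗ[ℝ] E × ℝ :=
    (L ∘ₗ LinearMap.fst ℝ Z ℝ).prod (LinearMap.snd ℝ Z ℝ - ℓ ∘ₗ LinearMap.fst ℝ Z ℝ)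
  have hfst : Prod.fst '' (T '' epigraph Φ) = L '' {z | Φ z ≠ ⊤} := by
    rw [← image_fst_epigraph, Set.image_image, Set.image_image]
    rfl
  obtain ⟨g, hg⟩ := exists_linearMap_add_le_of_mem_intrinsicCore (hΦ.linear_image T)
    (hfst ▸ hb) (c := c) (by
      rintro _ ⟨⟨z, r⟩, hr, h⟩
      obtain ⟨hz, rfl⟩ := Prod.mk.inj h
      have := coe_le_iff_forall_real_le.1 (hc z hz) r hr
      exact le_sub_iff_add_le'.2 this)
  refine ⟨g, fun z => coe_le_iff_forall_real_le.2 fun r hr => ?_⟩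
  have : g (L z - b) + c ≤ r - ℓ z := hg _ _ ⟨(z, r), hr, rfl⟩
  linarith

end Epigraph

namespace ProperLscConvex

variable {α β : Type*} [AddCommGroup α] [Module ℝ α] [TopologicalSpace α]
  [AddCommGroup β] [Module ℝ β] [TopologicalSpace β] {φ : α → EReal} {ψ : β → EReal}

theorem convex_epigraph (hφ : ProperLscConvex φ) : Convex ℝ (epigraph φ) := by
  rintro ⟨x, r⟩ hr ⟨y, s⟩ hs a b ha hb hab
  obtain rfl : b = 1 - a := by linarith
  calc φ (a • x + (1 - a) • y)
    _ ≤ (a : EReal) * φ x + ((1 - a : ℝ) : EReal) * φ y := hφ.2.2.2 x y a ha (by linarith)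
    _ ≤ (a : EReal) * r + ((1 - a : ℝ) : EReal) * s := by
      have ha' : (0 : EReal) ≤ a := mod_cast ha
      have hb' : (0 : EReal) ≤ ((1 - a : ℝ) : EReal) := mod_cast hb
      exact add_le_add (mul_le_mul_of_nonneg_left hr ha') (mul_le_mul_of_nonneg_left hs hb')
    _ = ((a * r + (1 - a) * s : ℝ) : EReal) := by push_cast; rfl

theorem convex_dom (hφ : ProperLscConvex φ) : Convex ℝ {x | φ x ≠ ⊤} := by
  rw [← image_fst_epigraph]
  exact hφ.convex_epigraph.linear_image (LinearMap.fst ℝ α ℝ)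

theorem comp_continuousLinearMap (hψ : ProperLscConvex ψ) (L : α →L[ℝ] β)
    (hL : ∃ x, ψ (L x) ≠ ⊤) : ProperLscConvex fun x => ψ (L x) :=
  ⟨hL, fun x => hψ.2.1 (L x), hψ.2.2.1.comp L.continuous, fun x y t ht ht' => by
    simpa only [map_add, map_smul] using hψ.2.2.2 (L x) (L y) t ht ht'⟩

theorem prod_add (hφ : ProperLscConvex φ) (hψ : ProperLscConvex ψ) :
    ProperLscConvex fun q : α × β => φ q.1 + ψ q.2 := by
  obtain ⟨⟨x₀, hx₀⟩, hφ_bot, hφ_lsc, hφ_conv⟩ := hφ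
  obtain ⟨⟨y₀, hy₀⟩, hψ_bot, hψ_lsc, hψ_conv⟩ := hψ
  refine ⟨⟨(x₀, y₀), EReal.add_ne_top hx₀ hy₀⟩, fun q => ?_, ?_, fun q q' t ht ht' => ?_⟩
  · simp [EReal.add_eq_bot_iff, hφ_bot, hψ_bot]
  · exact (hφ_lsc.comp continuous_fst).add' (hψ_lsc.comp continuous_snd) fun q =>
      EReal.continuousAt_add (.inr (hψ_bot q.2)) (.inl (hφ_bot q.1))
  · have ht_nonneg : (0 : EReal) ≤ t := mod_cast ht
    have ht'_nonneg : (0 : EReal) ≤ ((1 - t : ℝ) : EReal) := mod_cast sub_nonneg.2 ht'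
    rw [EReal.left_distrib_of_nonneg_of_ne_top ht_nonneg (EReal.coe_ne_top _),
      EReal.left_distrib_of_nonneg_of_ne_top ht'_nonneg (EReal.coe_ne_top _),
      add_add_add_comm]
    exact add_le_add (hφ_conv _ _ t ht ht') (hψ_conv _ _ t ht ht')

end ProperLscConvex

/-- A symmetric positive definite bilinear pairing. It is a property of bare functions, so that it
applies to `dot`, `dot2` and `dot3` without changing the norm of the underlying space. -/
structure IsInnerPairing {α : Type*} [AddCommGroup α] [Module ℝ α] (p : α → α → ℝ) : Prop where
  add_left : ∀ x y z, p (x + y) z = p x z + p y z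
  smul_left : ∀ (t : ℝ) x y, p (t • x) y = t * p x y
  symm : ∀ x y, p x y = p y x
  self_pos : ∀ x, x ≠ 0 → 0 < p x x

namespace IsInnerPairing

section Algebra

variable {α β : Type*} [AddCommGroup α] [Module ℝ α] [AddCommGroup β] [Module ℝ β]
  {p : α → α → ℝ} {q : β → β → ℝ}

/-- The bilinear form of an inner pairing, through which it inherits the library's lemmas on
linear maps. -/
def toBilin (hp : IsInnerPairing p) : LinearMap.BilinForm ℝ α :=
  LinearMap.mk₂ ℝ p hp.add_left hp.smul_left
    (fun x y z => by rw [hp.symm, hp.add_left, hp.symm y, hp.symm z])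
    (fun t x y => by rw [hp.symm, hp.smul_left, hp.symm y, smul_eq_mul])

@[simp]
theorem toBilin_apply (hp : IsInnerPairing p) (x y : α) : hp.toBilin x y = p x y :=
  rfl

theorem sub_left (hp : IsInnerPairing p) (x y z : α) : p (x - y) z = p x z - p y z :=
  hp.toBilin.map_sub₂ x y z

theorem sub_right (hp : IsInnerPairing p) (x y z : α) : p x (y - z) = p x y - p x z :=
  (hp.toBilin x).map_sub y z

theorem add_right (hp : IsInnerPairing p) (x y z : α) : p x (y + z) = p x y + p x z :=
  (hp.toBilin x).map_add y z

theorem smul_right (hp : IsInnerPairing p) (t : ℝ) (x y : α) : p x (t • y) = t * p x y :=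
  (hp.toBilin x).map_smul t y

theorem zero_right (hp : IsInnerPairing p) (x : α) : p x 0 = 0 :=
  (hp.toBilin x).map_zero

theorem self_nonneg (hp : IsInnerPairing p) (x : α) : 0 ≤ p x x := by
  rcases eq_or_ne x 0 with rfl | hx
  · exact (hp.zero_right 0).ge
  · exact (hp.self_pos x hx).le

theorem toBilin_injective (hp : IsInnerPairing p) : Function.Injective hp.toBilin :=
  (injective_iff_map_eq_zero _).2 fun x hx => by_contra fun hx0 =>
    (hp.self_pos x hx0).ne' (LinearMap.congr_fun hx x)

theorem eq_of_forall_eq (hp : IsInnerPairing p) {x y : α} (h : ∀ z, p x z = p y z) : x = y :=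
  hp.toBilin_injective (LinearMap.ext h)

theorem exists_eq [FiniteDimensional ℝ α] (hp : IsInnerPairing p) (g : α →ₗ[ℝ] ℝ) :
    ∃ e, ∀ x, g x = p e x := by
  obtain ⟨e, rfl⟩ := (LinearMap.injective_iff_surjective_of_finrank_eq_finrank
    Subspace.dual_finrank_eq.symm).1 hp.toBilin_injective g
  exact ⟨e, fun x => rfl⟩

theorem prod (hp : IsInnerPairing p) (hq : IsInnerPairing q) :
    IsInnerPairing fun x y : α × β => p x.1 y.1 + q x.2 y.2 where
  add_left x y z := by
    simp only [Prod.fst_add, Prod.snd_add, hp.add_left, hq.add_left]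
    ring
  smul_left t x y := by
    simp only [Prod.smul_fst, Prod.smul_snd, hp.smul_left, hq.smul_left]
    ring
  symm x y := by rw [hp.symm, hq.symm]
  self_pos x hx := by
    by_cases h : x.1 = 0
    · exact add_pos_of_nonneg_of_pos (hp.self_nonneg _) (hq.self_pos _ fun h' => hx (Prod.ext h h'))
    · exact add_pos_of_pos_of_nonneg (hp.self_pos _ h) (hq.self_nonneg _)

end Algebra

section Topology

variable {α : Type*} [NormedAddCommGroup α] [NormedSpace ℝ α] [FiniteDimensional ℝ α]
  {p : α → α → ℝ}

theorem continuous_left (hp : IsInnerPairing p) (y : α) : Continuous fun x => p x y :=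
  (hp.toBilin.flip y).continuous_of_finiteDimensional

theorem continuous_self (hp : IsInnerPairing p) : Continuous fun x => p x x :=
  hp.toBilin.toContinuousBilinearMap.continuous₂.comp (continuous_id.prodMk continuous_id)

theorem exists_pos_mul_norm_sq_le (hp : IsInnerPairing p) :
    ∃ c : ℝ, 0 < c ∧ ∀ x, c * ‖x‖ ^ 2 ≤ p x x := by
  obtain ⟨c, hc, hle⟩ := (isCompact_sphere (0 : α) 1).exists_forall_le'
    hp.continuous_self.continuousOn fun x hx => hp.self_pos x (by rintro rfl; simp at hx)
  refine ⟨c, hc, fun x => ?_⟩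
  rcases eq_or_ne x 0 with rfl | hx
  · simp [hp.zero_right]
  have hnorm : ‖x‖ ≠ 0 := norm_ne_zero_iff.2 hx
  have hunit : c ≤ ‖x‖⁻¹ * (‖x‖⁻¹ * p x x) := by
    simpa [hp.smul_left, hp.smul_right] using hle (‖x‖⁻¹ • x) (by simp [norm_smul, hnorm])
  calc c * ‖x‖ ^ 2 ≤ ‖x‖⁻¹ * (‖x‖⁻¹ * p x x) * ‖x‖ ^ 2 := by gcongr
    _ = p x x := by field_simp

theorem isCompact_setOf_le (hp : IsInnerPairing p) (w : α) (R : ℝ) :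
    IsCompact {x | p (x - w) (x - w) ≤ R} := by
  obtain ⟨c, hc, hcoercive⟩ := hp.exists_pos_mul_norm_sq_le
  refine (isCompact_closedBall w √(R / c)).of_isClosed_subset
    (isClosed_le (hp.continuous_self.comp (by fun_prop)) continuous_const) fun x hx => ?_
  rw [mem_closedBall_iff_norm]
  exact Real.le_sqrt_of_sq_le ((le_div_iff₀' hc).2 ((hcoercive _).trans hx))

end Topology

end IsInnerPairing

section Conjugate

theorem fconj_le_coe_iff {α : Type*} {p : α → α → ℝ} {φ : α → EReal} {e : α} {r : ℝ} :
    fconj p φ e ≤ r ↔ ∀ x, ((p e x - r : ℝ) : EReal) ≤ φ x := by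
  refine iSup_le_iff.trans (forall_congr' fun x => ?_)
  rw [EReal.coe_sub, EReal.sub_le_iff_le_add (.inr (EReal.coe_ne_top r))
    (.inr (EReal.coe_ne_bot r)), EReal.sub_le_iff_le_add (.inl (EReal.coe_ne_bot r))
    (.inl (EReal.coe_ne_top r)), add_comm]

theorem coe_sub_le_fconj {α : Type*} (p : α → α → ℝ) {φ : α → EReal} {x : α} {r : ℝ}
    (hr : φ x = r) (e : α) : ((p e x - r : ℝ) : EReal) ≤ fconj p φ e := by
  rw [EReal.coe_sub, ← hr]
  exact le_iSup (fun x => (p e x : EReal) - φ x) x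

theorem mem_subdiff_iff_exists_real {α : Type*} [AddCommGroup α] {p : α → α → ℝ} {φ : α → EReal}
    {x e : α} (hbot : φ x ≠ ⊥) :
    e ∈ subdiff p φ x ↔ ∃ r : ℝ, φ x = r ∧ ∀ y, ((p e (y - x) + r : ℝ) : EReal) ≤ φ y := by
  constructor
  · rintro ⟨htop, h⟩
    lift φ x to ℝ using ⟨htop, hbot⟩ with r hr
    exact ⟨r, rfl, fun y => by simpa [add_comm] using h y⟩
  · rintro ⟨r, hr, h⟩
    exact ⟨by simp [hr], fun y => by simpa [hr, add_comm] using h y⟩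

variable {α : Type*} [AddCommGroup α] [Module ℝ α] {p : α → α → ℝ} {φ : α → EReal} {x y e v : α}

theorem fconj_eq_of_forall_le (hp : IsInnerPairing p) {r : ℝ} (hr : φ x = r)
    (h : ∀ y, ((p e (y - x) + r : ℝ) : EReal) ≤ φ y) : fconj p φ e = (p e x - r : ℝ) := by
  refine le_antisymm (fconj_le_coe_iff.2 fun y => ?_) (coe_sub_le_fconj p hr e)
  convert h y using 2
  rw [hp.sub_right]
  ring

theorem mem_subdiff_fconj_of_mem_subdiff (hp : IsInnerPairing p) (hbot : φ x ≠ ⊥)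
    (he : e ∈ subdiff p φ x) : x ∈ subdiff p (fconj p φ) e := by
  obtain ⟨r, hr, h⟩ := (mem_subdiff_iff_exists_real hbot).1 he
  have hconj := fconj_eq_of_forall_le hp hr h
  refine (mem_subdiff_iff_exists_real (hconj ▸ EReal.coe_ne_bot _)).2 ⟨_, hconj, fun e' => ?_⟩
  convert coe_sub_le_fconj p hr e' using 2
  rw [hp.sub_right, hp.symm x, hp.symm x]
  ring

theorem fconj_convex_combination_le (hp : IsInnerPairing p) (hφ : ∀ x, φ x ≠ ⊥) (e v : α) {t : ℝ}
    (ht : 0 ≤ t) (ht' : t ≤ 1) :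
    fconj p φ (t • e + (1 - t) • v) ≤
      (t : EReal) * fconj p φ e + ((1 - t : ℝ) : EReal) * fconj p φ v := by
  refine iSup_le fun x => ?_
  rcases eq_or_ne (φ x) ⊤ with htop | htop
  · simp [htop]
  lift φ x to ℝ using ⟨htop, hφ x⟩ with r hr
  have ht_nonneg : (0 : EReal) ≤ t := mod_cast ht
  have ht'_nonneg : (0 : EReal) ≤ ((1 - t : ℝ) : EReal) := mod_cast sub_nonneg.2 ht'
  calc (p (t • e + (1 - t) • v) x : EReal) - r
    _ = (t : EReal) * (p e x - r : ℝ) + ((1 - t : ℝ) : EReal) * (p v x - r : ℝ) := by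
      rw [hp.add_left, hp.smul_left, hp.smul_left]
      norm_cast
      ring
    _ ≤ (t : EReal) * fconj p φ e + ((1 - t : ℝ) : EReal) * fconj p φ v :=
      add_le_add (mul_le_mul_of_nonneg_left (coe_sub_le_fconj p hr.symm e) ht_nonneg)
        (mul_le_mul_of_nonneg_left (coe_sub_le_fconj p hr.symm v) ht'_nonneg)

theorem subdiff_monotone (hp : IsInnerPairing p) (hφ : ∀ x, φ x ≠ ⊥)
    (he : e ∈ subdiff p φ x) (hv : v ∈ subdiff p φ y) : 0 ≤ p (e - v) (x - y) := by
  obtain ⟨r, hr, hex⟩ := (mem_subdiff_iff_exists_real (hφ x)).1 he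
  obtain ⟨s, hs, hvy⟩ := (mem_subdiff_iff_exists_real (hφ y)).1 hv
  have hxy := EReal.coe_le_coe_iff.1 (hs ▸ hex y)
  have hyx := EReal.coe_le_coe_iff.1 (hr ▸ hvy x)
  simp only [hp.sub_left, hp.sub_right] at hxy hyx ⊢
  linarith

theorem sum_pairing_nonneg_of_mem_subdiff (hp : IsInnerPairing p) (hφ : ∀ x, φ x ≠ ⊥) {m : ℕ}
    {f e : ℕ → α} (he : ∀ i ≤ m, e i ∈ subdiff p φ (f i)) (hcycle : f (m + 1) = f 0) :
    0 ≤ ∑ i ∈ Finset.range (m + 1), p (e i) (f i - f (i + 1)) := by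
  have hfinite : ∀ i ≤ m + 1, φ (f i) = (φ (f i)).toReal := by
    intro i hi
    have htop : φ (f i) ≠ ⊤ := by
      rcases hi.lt_or_eq with hi | rfl
      · exact (he i (Nat.lt_succ_iff.1 hi)).1
      · exact hcycle ▸ (he 0 (Nat.zero_le m)).1
    exact (EReal.coe_toReal htop (hφ _)).symm
  have hstep : ∀ i ∈ Finset.range (m + 1),
      (φ (f i)).toReal - (φ (f (i + 1))).toReal ≤ p (e i) (f i - f (i + 1)) := by
    intro i hi
    have hi : i < m + 1 := Finset.mem_range.1 hi
    have h := (he i (Nat.lt_succ_iff.1 hi)).2 (f (i + 1))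
    rw [hfinite i hi.le, hfinite (i + 1) hi, ← EReal.coe_add, EReal.coe_le_coe_iff] at h
    rw [hp.sub_right] at h ⊢
    linarith
  calc 0 = ∑ i ∈ Finset.range (m + 1), ((φ (f i)).toReal - (φ (f (i + 1))).toReal) := by
        rw [Finset.sum_range_sub', hcycle, sub_self]
    _ ≤ ∑ i ∈ Finset.range (m + 1), p (e i) (f i - f (i + 1)) := Finset.sum_le_sum hstep

theorem le_of_forall_mem_Ioo_le_add_mul {a b c : ℝ}
    (h : ∀ t ∈ Set.Ioo (0 : ℝ) 1, a ≤ b + t * c) : a ≤ b := by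
  have hcont : Continuous fun t : ℝ => b + t * c := by fun_prop
  have hlim : Filter.Tendsto (fun t : ℝ => b + t * c) (nhdsWithin 0 (Set.Ioi 0)) (nhds b) := by
    simpa using (hcont.tendsto 0).mono_left nhdsWithin_le_nhds
  exact ge_of_tendsto hlim (Filter.eventually_of_mem (Ioo_mem_nhdsGT one_pos) h)

theorem ProperLscConvex.sub_mem_subdiff_of_forall_add_sq_le [TopologicalSpace α]
    (hφ : ProperLscConvex φ) (hp : IsInnerPairing p) {z : α}
    (hy : ∀ x, φ y + (p (y - z) (y - z) / 2 : ℝ) ≤ φ x + (p (x - z) (x - z) / 2 : ℝ)) :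
    z - y ∈ subdiff p φ y := by
  obtain ⟨x₀, hx₀⟩ := hφ.1
  have hy_top : φ y ≠ ⊤ := fun h => (hy x₀).not_gt <| by
    simpa [h] using (EReal.add_ne_top hx₀ (EReal.coe_ne_top _)).lt_top
  lift φ y to ℝ using ⟨hy_top, hφ.2.1 y⟩ with r hr
  refine (mem_subdiff_iff_exists_real (hφ.2.1 y)).2 ⟨r, hr.symm, fun x =>
    coe_le_iff_forall_real_le.2 fun s hs => ?_⟩
  have hyr : (y, r) ∈ epigraph φ := hr.ge
  have hxs : (x, s) ∈ epigraph φ := hs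
  have hsegment : ∀ t ∈ Set.Ioo (0 : ℝ) 1,
      p (z - y) (x - y) + r ≤ s + t * (p (x - y) (x - y) / 2) := by
    intro t ⟨ht, ht'⟩
    have hmem : ((1 - t) • y + t • x, (1 - t) * r + t * s) ∈ epigraph φ :=
      hφ.convex_epigraph hyr hxs (sub_nonneg.2 ht'.le) ht.le
        (sub_add_cancel 1 t)
    have hle := (hy _).trans (add_le_add_left hmem _)
    rw [← EReal.coe_add, ← EReal.coe_add, EReal.coe_le_coe_iff] at hle
    refine le_of_mul_le_mul_left ?_ ht
    simp only [hp.sub_left, hp.sub_right, hp.add_left, hp.add_right, hp.smul_left, hp.smul_right,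
      hp.symm x y, hp.symm z] at hle ⊢
    linarith
  exact le_of_forall_mem_Ioo_le_add_mul hsegment

end Conjugate

section MaximalMonotone

variable {α : Type*} [NormedAddCommGroup α] [NormedSpace ℝ α] [FiniteDimensional ℝ α]
  {p : α → α → ℝ}

theorem lowerSemicontinuous_fconj (hp : IsInnerPairing p) (φ : α → EReal) :
    LowerSemicontinuous (fconj p φ) :=
  lowerSemicontinuous_iSup fun x =>
    (continuous_coe_real_ereal.comp (hp.continuous_left x)).lowerSemicontinuous.add'
      lowerSemicontinuous_const fun _ =>
        EReal.continuousAt_add (.inl (EReal.coe_ne_top _)) (.inl (EReal.coe_ne_bot _))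

namespace ProperLscConvex

variable {φ : α → EReal}

theorem subdiff_nonempty (hφ : ProperLscConvex φ) (hp : IsInnerPairing p) {x : α}
    (hx : x ∈ intrinsicCore {x | φ x ≠ ⊤}) : (subdiff p φ x).Nonempty := by
  have hr : φ x = (φ x).toReal :=
    (EReal.coe_toReal (intrinsicCore_subset _ hx) (hφ.2.1 x)).symm
  obtain ⟨g, hg⟩ := exists_linearMap_multiplier hφ.convex_epigraph LinearMap.id 0
    (b := x) (c := (φ x).toReal) (by simpa using hx) (by
      rintro _ rfl
      simpa using hr.ge)
  obtain ⟨e, he⟩ := hp.exists_eq g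
  exact ⟨e, (mem_subdiff_iff_exists_real (hφ.2.1 x)).2
    ⟨_, hr, fun y => by simpa [he] using hg y⟩⟩

/- An affine minorant of `φ`, with slope `e` at a point `x₀`, turns the sublevel set of `x₀` into
a subset of the ball around `z - e` through `x₀`. -/
theorem exists_forall_add_sq_le (hφ : ProperLscConvex φ) (hp : IsInnerPairing p) (z : α) :
    ∃ y, ∀ x, φ y + (p (y - z) (y - z) / 2 : ℝ) ≤ φ x + (p (x - z) (x - z) / 2 : ℝ) := by
  let G : α → EReal := fun x => φ x + (p (x - z) (x - z) / 2 : ℝ)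
  have hG : LowerSemicontinuous G := by
    have hsq : Continuous fun x => ((p (x - z) (x - z) / 2 : ℝ) : EReal) :=
      continuous_coe_real_ereal.comp
        ((hp.continuous_self.comp (continuous_id.sub continuous_const)).div_const 2)
    exact hφ.2.2.1.add' hsq.lowerSemicontinuous fun x =>
      EReal.continuousAt_add (.inr (EReal.coe_ne_bot _)) (.inr (EReal.coe_ne_top _))
  obtain ⟨x₀, hx₀⟩ : (intrinsicCore {x | φ x ≠ ⊤}).Nonempty :=
    closure_nonempty_iff.1 (Set.Nonempty.mono (subset_closure_intrinsicCore hφ.convex_dom) hφ.1)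
  obtain ⟨e, he⟩ := hφ.subdiff_nonempty hp hx₀
  obtain ⟨r, hr, hminorant⟩ := (mem_subdiff_iff_exists_real (hφ.2.1 x₀)).1 he
  let K : Set α := {x | p (x - (z - e)) (x - (z - e)) ≤ p (x₀ - (z - e)) (x₀ - (z - e))}
  have hx₀K : x₀ ∈ K := le_rfl (a := p (x₀ - (z - e)) (x₀ - (z - e)))
  obtain ⟨y, -, hy⟩ := (hG.lowerSemicontinuousOn K).exists_isMinOn ⟨x₀, hx₀K⟩
    (hp.isCompact_setOf_le _ _)
  refine ⟨y, fun x => ?_⟩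
  by_cases hx : x ∈ K
  · exact hy hx
  have hsq : r + p (x₀ - z) (x₀ - z) / 2 ≤ p e (x - x₀) + r + p (x - z) (x - z) / 2 := by
    have hx : p (x₀ - (z - e)) (x₀ - (z - e)) < p (x - (z - e)) (x - (z - e)) := not_le.1 hx
    simp only [hp.sub_left, hp.sub_right, hp.symm _ e, hp.symm z] at hx ⊢
    linarith
  calc G y ≤ G x₀ := hy hx₀K
    _ = ((r + p (x₀ - z) (x₀ - z) / 2 : ℝ) : EReal) := by simp only [G, hr, EReal.coe_add]
    _ ≤ ((p e (x - x₀) + r + p (x - z) (x - z) / 2 : ℝ) : EReal) := EReal.coe_le_coe_iff.2 hsq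
    _ ≤ G x := by
      rw [EReal.coe_add]
      exact add_le_add_left (hminorant x) _

theorem exists_sub_mem_subdiff (hφ : ProperLscConvex φ) (hp : IsInnerPairing p) (z : α) :
    ∃ y, z - y ∈ subdiff p φ y :=
  (hφ.exists_forall_add_sq_le hp z).imp fun _ => hφ.sub_mem_subdiff_of_forall_add_sq_le hp

theorem mem_subdiff_of_forall_monotone (hφ : ProperLscConvex φ) (hp : IsInnerPairing p) {x e : α}
    (h : ∀ y v, v ∈ subdiff p φ y → 0 ≤ p (e - v) (x - y)) : e ∈ subdiff p φ x := by
  obtain ⟨y, hy⟩ := hφ.exists_sub_mem_subdiff hp (x + e)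
  have hle : p (x - y) (x - y) ≤ 0 := by
    have := h y _ hy
    simp only [hp.sub_left, hp.add_left] at this ⊢
    linarith
  obtain rfl : x = y := by
    by_contra hxy
    exact (hp.self_pos _ (sub_ne_zero.2 hxy)).not_ge hle
  simpa using hy

theorem properLscConvex_fconj (hφ : ProperLscConvex φ) (hp : IsInnerPairing p) :
    ProperLscConvex (fconj p φ) := by
  obtain ⟨x₀, e₀, he₀⟩ : ∃ x e, e ∈ subdiff p φ x :=
    (hφ.exists_sub_mem_subdiff hp 0).imp fun _ h => ⟨_, h⟩
  refine ⟨⟨e₀, (mem_subdiff_fconj_of_mem_subdiff hp (hφ.2.1 x₀) he₀).1⟩, fun e => ?_,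
    lowerSemicontinuous_fconj hp φ, fun e v t => fconj_convex_combination_le hp hφ.2.1 e v⟩
  obtain ⟨r, hr, -⟩ := (mem_subdiff_iff_exists_real (hφ.2.1 x₀)).1 he₀
  exact ne_bot_of_le_ne_bot (EReal.coe_ne_bot _) (coe_sub_le_fconj p hr e)

theorem mem_subdiff_fconj_iff (hφ : ProperLscConvex φ) (hp : IsInnerPairing p) {x e : α} :
    x ∈ subdiff p (fconj p φ) e ↔ e ∈ subdiff p φ x := by
  refine ⟨fun hx => hφ.mem_subdiff_of_forall_monotone hp fun y v hv => ?_,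
    mem_subdiff_fconj_of_mem_subdiff hp (hφ.2.1 x)⟩
  rw [hp.symm]
  exact subdiff_monotone hp (hφ.properLscConvex_fconj hp).2.1 hx
    (mem_subdiff_fconj_of_mem_subdiff hp (hφ.2.1 y) hv)

theorem dom_fconj_subset_closure (hφ : ProperLscConvex φ) (hp : IsInnerPairing p) :
    {e | fconj p φ e ≠ ⊤} ⊆ closure {e | ∃ x, e ∈ subdiff p φ x} := by
  have hφ' := hφ.properLscConvex_fconj hp
  exact (subset_closure_intrinsicCore hφ'.convex_dom).trans <| closure_mono fun _ he =>
    (hφ'.subdiff_nonempty hp he).imp fun _ => (hφ.mem_subdiff_fconj_iff hp).1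

end ProperLscConvex

end MaximalMonotone

section ChainRule

variable {α β γ : Type*} [AddCommGroup α] [Module ℝ α] [AddCommGroup β] [Module ℝ β]
  [AddCommGroup γ] [Module ℝ γ] {p : α → α → ℝ} {q : β → β → ℝ}

theorem mem_subdiff_comp_of_mem_subdiff {ψ : β → EReal} {A : α →ₗ[ℝ] β} {At : β → α}
    (hAt : ∀ ζ x, p (At ζ) x = q ζ (A x)) {x : α} {ζ : β} (hζ : ζ ∈ subdiff q ψ (A x)) :
    At ζ ∈ subdiff p (fun x => ψ (A x)) x :=
  ⟨hζ.1, fun y => by simpa only [hAt, map_sub] using hζ.2 (A y)⟩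

theorem subdiff_comp_eq_image [FiniteDimensional ℝ β] (hp : IsInnerPairing p)
    (hq : IsInnerPairing q) {ψ : β → EReal} (hψ : Convex ℝ (epigraph ψ)) (hψ_bot : ∀ z, ψ z ≠ ⊥)
    {A : α →ₗ[ℝ] β} {At : β → α} (hAt : ∀ ζ x, p (At ζ) x = q ζ (A x))
    (hA : Function.Injective A) {L : β →ₗ[ℝ] γ} (hAL : Function.Exact A L)
    (hL : 0 ∈ intrinsicCore (L '' {z | ψ z ≠ ⊤})) (x : α) :
    subdiff p (fun x => ψ (A x)) x = At '' subdiff q ψ (A x) := by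
  refine Set.Subset.antisymm (fun e he => ?_) ?_
  · obtain ⟨r, hr, hle⟩ := (mem_subdiff_iff_exists_real (φ := fun x => ψ (A x)) (hψ_bot (A x))).1 he
    obtain ⟨B, hB⟩ := A.exists_leftInverse_of_injective (LinearMap.ker_eq_bot.2 hA)
    have hBA (y : α) : B (A y) = y := LinearMap.congr_fun hB y
    obtain ⟨g, hg⟩ := exists_linearMap_multiplier hψ L (hp.toBilin e ∘ₗ B) (c := r - p e x) hL (by
      intro z hz
      obtain ⟨y, rfl⟩ := (hAL z).1 hz
      convert hle y using 2
      simp only [LinearMap.comp_apply, hBA, hp.toBilin_apply, hp.sub_right]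
      ring)
    obtain ⟨ζ, hζ⟩ := hq.exists_eq (hp.toBilin e ∘ₗ B + g ∘ₗ L)
    have hζA (y : α) : q ζ (A y) = p e y := by simp [← hζ, hBA, hAL.apply_apply_eq_zero]
    refine ⟨ζ, (mem_subdiff_iff_exists_real (hψ_bot (A x))).2 ⟨r, hr, fun z => ?_⟩,
      hp.eq_of_forall_eq fun y => (hAt ζ y).trans (hζA y)⟩
    convert hg z using 2
    simp only [hq.sub_right, hζA, ← hζ, LinearMap.add_apply, LinearMap.comp_apply,
      hp.toBilin_apply, sub_zero]
    ring
  · rintro _ ⟨ζ, hζ, rfl⟩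
    exact mem_subdiff_comp_of_mem_subdiff hAt hζ

theorem subdiff_prod_add (hp : IsInnerPairing p) (hq : IsInnerPairing q) {φ : α → EReal}
    {ψ : β → EReal} (hφ : ∀ x, φ x ≠ ⊥) (hψ : ∀ y, ψ y ≠ ⊥) (z : α × β) :
    subdiff (fun u v : α × β => p u.1 v.1 + q u.2 v.2) (fun z => φ z.1 + ψ z.2) z =
      subdiff p φ z.1 ×ˢ subdiff q ψ z.2 := by
  ext ⟨e, v⟩
  constructor
  · rintro ⟨htop, h⟩
    obtain ⟨hφ_top, hψ_top⟩ := (EReal.add_ne_top_iff_ne_top₂ (hφ z.1) (hψ z.2)).1 htop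
    refine ⟨⟨hφ_top, fun x => ?_⟩, hψ_top, fun y => ?_⟩
    · refine ((EReal.addLECancellable_coe (ψ z.2).toReal).add_le_add_iff_right).1 ?_
      simpa [EReal.coe_toReal hψ_top (hψ _), hq.zero_right, add_right_comm] using h (x, z.2)
    · refine ((EReal.addLECancellable_coe (φ z.1).toReal).add_le_add_iff_left).1 ?_
      simpa [EReal.coe_toReal hφ_top (hφ _), hp.zero_right, add_assoc] using h (z.1, y)
  · rintro ⟨he, hv⟩
    refine ⟨EReal.add_ne_top he.1 hv.1, fun w => ?_⟩
    rw [EReal.coe_add, add_add_add_comm]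
    exact add_le_add (he.2 w.1) (hv.2 w.2)

end ChainRule

section Dot

theorem isInnerPairing_dot (n : ℕ) : IsInnerPairing (dot (n := n)) where
  add_left := add_dotProduct
  smul_left := smul_dotProduct
  symm := dotProduct_comm
  self_pos x hx := by simpa using! Matrix.dotProduct_star_self_pos_iff.2 hx

theorem isInnerPairing_dot2 (n₁ n₂ : ℕ) : IsInnerPairing (dot2 (n1 := n₁) (n2 := n₂)) :=
  (isInnerPairing_dot n₁).prod (isInnerPairing_dot n₂)

theorem isInnerPairing_dot3 (n₁ n₂ n₃ : ℕ) :
    IsInnerPairing (dot3 (n1 := n₁) (n2 := n₂) (n3 := n₃)) := by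
  convert (isInnerPairing_dot n₁).prod (isInnerPairing_dot2 n₂ n₃) using 3
  exact add_assoc _ _ _

variable {n₁ n₂ : ℕ} {M : Set ((Fin n₁ → ℝ) × (Fin n₂ → ℝ) × (Fin n₁ → ℝ) × (Fin n₂ → ℝ))}

theorem CycMono4.monotone (hM : CycMono4 M) {x₁ y₁ e₁ v₁ : Fin n₁ → ℝ} {x₂ y₂ e₂ v₂ : Fin n₂ → ℝ}
    (hx : (x₁, x₂, e₁, e₂) ∈ M) (hy : (y₁, y₂, v₁, v₂) ∈ M) :
    0 ≤ dot2 ((e₁, e₂) - (v₁, v₂)) ((x₁, x₂) - (y₁, y₂)) := by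
  have hcycle := hM 1 le_rfl (fun i => if i = 1 then y₁ else x₁) (fun i => if i = 1 then y₂ else x₂)
    (fun i => if i = 1 then v₁ else e₁) (fun i => if i = 1 then v₂ else e₂)
    (fun i _ => by split_ifs <;> assumption) rfl rfl
  simp only [Finset.sum_range_succ, Finset.range_one, Finset.sum_singleton, zero_ne_one,
    one_ne_zero, Nat.reduceAdd, Nat.add_eq_right, ↓reduceIte, dot2, Prod.mk_sub_mk,
    (isInnerPairing_dot _).sub_left, (isInnerPairing_dot _).sub_right] at hcycle ⊢
  linarith

theorem maxCycMono4_of_mem_iff_mem_subdiff {ψ : (Fin n₁ → ℝ) × (Fin n₂ → ℝ) → EReal}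
    (hψ : ProperLscConvex ψ)
    (hM : ∀ x₁ x₂ e₁ e₂, (x₁, x₂, e₁, e₂) ∈ M ↔ (e₁, e₂) ∈ subdiff dot2 ψ (x₁, x₂)) :
    MaxCycMono4 M := by
  have hp := isInnerPairing_dot2 n₁ n₂
  refine ⟨fun m _ f₁ f₂ e₁ e₂ hmem hf₁ hf₂ => ?_, fun M' hM' hMM' => hMM'.antisymm' ?_⟩
  · exact sum_pairing_nonneg_of_mem_subdiff hp hψ.2.1 (f := fun i => (f₁ i, f₂ i))
      (e := fun i => (e₁ i, e₂ i)) (fun i hi => (hM _ _ _ _).1 (hmem i hi)) (Prod.ext hf₁ hf₂)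
  · rintro ⟨x₁, x₂, e₁, e₂⟩ hx
    refine (hM _ _ _ _).2 (hψ.mem_subdiff_of_forall_monotone hp fun ⟨y₁, y₂⟩ ⟨v₁, v₂⟩ hv => ?_)
    exact hM'.monotone hx (hMM' ((hM _ _ _ _).2 hv))

end Dot

section Ports

variable {X Y Z : Type*} [NormedAddCommGroup X] [NormedSpace ℝ X] [NormedAddCommGroup Y]
  [NormedSpace ℝ Y] [NormedAddCommGroup Z] [NormedSpace ℝ Z]

variable (X Y Z) in
/-- The coupling map `(f_a, f, f_b) ↦ ((f_a, f), (f_b, -f))`, along which `φ` is the pullback of the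
separable function `φ_a ⊕ φ_b`. -/
def couplingMap : X × Y × Z →L[ℝ] (X × Y) × (Z × Y) :=
  ((ContinuousLinearMap.fst ℝ X (Y × Z)).prod
    (ContinuousLinearMap.fst ℝ Y Z ∘L ContinuousLinearMap.snd ℝ X (Y × Z))).prod
  ((ContinuousLinearMap.snd ℝ Y Z ∘L ContinuousLinearMap.snd ℝ X (Y × Z)).prod
    (-(ContinuousLinearMap.fst ℝ Y Z ∘L ContinuousLinearMap.snd ℝ X (Y × Z))))

variable (X Y Z) in
/-- The defect `f + f'` of the port constraint `f' = -f`; its kernel is the range of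
`couplingMap`. -/
def couplingDefect : (X × Y) × (Z × Y) →ₗ[ℝ] Y :=
  (LinearMap.snd ℝ X Y).coprod (LinearMap.snd ℝ Z Y)

variable (X Y Z) in
/-- The inclusion `(e_a, e_b) ↦ (e_a, 0, e_b)` of the efforts that vanish at the shared port. -/
def outerInclusion : X × Z →L[ℝ] X × Y × Z :=
  (ContinuousLinearMap.id ℝ X).prodMap (ContinuousLinearMap.inr ℝ Y Z)

variable (X Y Z) in
/-- The projection `(e_a, e, e_b) ↦ e` onto the shared port. -/
def portProj : X × Y × Z →L[ℝ] Y :=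
  ContinuousLinearMap.fst ℝ Y Z ∘L ContinuousLinearMap.snd ℝ X (Y × Z)

theorem couplingMap_injective : Function.Injective (couplingMap X Y Z) := by
  rintro ⟨x, y, z⟩ ⟨x', y', z'⟩ h
  simp_all [couplingMap]

theorem exact_couplingMap_couplingDefect :
    Function.Exact (couplingMap X Y Z) (couplingDefect X Y Z) := by
  rintro ⟨⟨x, y⟩, z, y'⟩
  constructor
  · intro h
    obtain rfl : y' = -y := eq_neg_of_add_eq_zero_right h
    exact ⟨(x, y, z), rfl⟩
  · rintro ⟨⟨x, y, z⟩, h⟩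
    simp [← h, couplingMap, couplingDefect]

theorem outerInclusion_injective : Function.Injective (outerInclusion X Y Z) := by
  rintro ⟨x, z⟩ ⟨x', z'⟩ h
  simp_all [outerInclusion]

theorem exact_outerInclusion_portProj :
    Function.Exact (outerInclusion X Y Z) (portProj X Y Z) := by
  rintro ⟨x, y, z⟩
  constructor
  · rintro (rfl : y = 0)
    exact ⟨(x, z), rfl⟩
  · rintro ⟨⟨x, z⟩, h⟩
    simp [← h, outerInclusion, portProj]

end Ports

section Composition

variable {na nb n : ℕ} {φa : (Fin na → ℝ) × (Fin n → ℝ) → EReal}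
  {φb : (Fin nb → ℝ) × (Fin n → ℝ) → EReal}

theorem properLscConvex_phiSum (hφa : ProperLscConvex φa) (hφb : ProperLscConvex φb)
    (hdom : 0 ∈ couplingDefect _ _ _ '' {q | φa q.1 + φb q.2 ≠ ⊤}) :
    ProperLscConvex (phiSum φa φb) := by
  obtain ⟨z, hz, hz0⟩ := hdom
  obtain ⟨x, rfl⟩ := (exact_couplingMap_couplingDefect z).1 hz0
  exact (hφa.prod_add hφb).comp_continuousLinearMap (couplingMap _ _ _) ⟨x, hz⟩

theorem properLscConvex_theta (hφ : ProperLscConvex (phiSum φa φb))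
    (hdom : 0 ∈ portProj _ _ _ '' {e | fconj dot3 (phiSum φa φb) e ≠ ⊤}) :
    ProperLscConvex (theta φa φb) := by
  obtain ⟨z, hz, hz0⟩ := hdom
  obtain ⟨x, rfl⟩ := (exact_outerInclusion_portProj z).1 hz0
  exact (hφ.properLscConvex_fconj (isInnerPairing_dot3 _ _ _)).comp_continuousLinearMap
    (outerInclusion _ _ _) ⟨x, hz⟩

theorem dot3_couplingMap_adjoint
    (ζ : ((Fin na → ℝ) × (Fin n → ℝ)) × ((Fin nb → ℝ) × (Fin n → ℝ)))
    (x : (Fin na → ℝ) × (Fin n → ℝ) × (Fin nb → ℝ)) :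
    dot3 (ζ.1.1, ζ.1.2 - ζ.2.2, ζ.2.1) x =
      dot2 ζ.1 (couplingMap _ _ _ x).1 + dot2 ζ.2 (couplingMap _ _ _ x).2 := by
  have hneg : dot ζ.2.2 (-x.2.1) = -dot ζ.2.2 x.2.1 := dotProduct_neg _ _
  change _ = dot ζ.1.1 x.1 + dot ζ.1.2 x.2.1 + (dot ζ.2.1 x.2.2 + dot ζ.2.2 (-x.2.1))
  rw [dot3, (isInnerPairing_dot n).sub_left, hneg]
  ring

theorem mem_subdiff_phiSum_iff (hφa : ProperLscConvex φa) (hφb : ProperLscConvex φb)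
    (hcore : 0 ∈ intrinsicCore (couplingDefect _ _ _ '' {q | φa q.1 + φb q.2 ≠ ⊤}))
    {fa ea : Fin na → ℝ} {f e : Fin n → ℝ} {fb eb : Fin nb → ℝ} :
    (ea, e, eb) ∈ subdiff dot3 (phiSum φa φb) (fa, f, fb) ↔
      ∃ η, (ea, η) ∈ subdiff dot2 φa (fa, f) ∧ (eb, η - e) ∈ subdiff dot2 φb (fb, -f) := by
  have hp2a := isInnerPairing_dot2 na n
  have hp2b := isInnerPairing_dot2 nb n
  have hchain := subdiff_comp_eq_image (isInnerPairing_dot3 na n nb) (hp2a.prod hp2b)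
    (hφa.prod_add hφb).convex_epigraph (hφa.prod_add hφb).2.1
    (A := (couplingMap _ _ _).toLinearMap) dot3_couplingMap_adjoint couplingMap_injective
    exact_couplingMap_couplingDefect hcore (fa, f, fb)
  rw [subdiff_prod_add hp2a hp2b hφa.2.1 hφb.2.1] at hchain
  constructor
  · intro h
    obtain ⟨⟨⟨ea', η⟩, eb', η'⟩, ⟨ha, hb⟩, heq⟩ := hchain.subset h
    obtain ⟨rfl, rfl, rfl⟩ : ea' = ea ∧ η - η' = e ∧ eb' = eb := by simpa using heq
    exact ⟨η, ha, by rw [sub_sub_cancel]; exact hb⟩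
  · rintro ⟨η, ha, hb⟩
    exact hchain.superset ⟨((ea, η), eb, η - e), ⟨ha, hb⟩, by simp⟩

theorem dot2_outerInclusion_adjoint (ζ : (Fin na → ℝ) × (Fin n → ℝ) × (Fin nb → ℝ))
    (x : (Fin na → ℝ) × (Fin nb → ℝ)) :
    dot2 (ζ.1, ζ.2.2) x = dot3 ζ (outerInclusion _ _ _ x) := by
  simp [dot3, dot2, outerInclusion, (isInnerPairing_dot n).zero_right]

theorem mem_subdiff_theta_iff (hφ : ProperLscConvex (phiSum φa φb))
    (hcore : 0 ∈ intrinsicCore (portProj _ _ _ '' {e | fconj dot3 (phiSum φa φb) e ≠ ⊤}))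
    {fa ea : Fin na → ℝ} {fb eb : Fin nb → ℝ} :
    (fa, fb) ∈ subdiff dot2 (theta φa φb) (ea, eb) ↔
      ∃ f, (fa, f, fb) ∈ subdiff dot3 (fconj dot3 (phiSum φa φb)) (ea, 0, eb) := by
  have hp := isInnerPairing_dot3 na n nb
  have hchain := subdiff_comp_eq_image (isInnerPairing_dot2 na nb) hp
    (hφ.properLscConvex_fconj hp).convex_epigraph (hφ.properLscConvex_fconj hp).2.1
    (A := (outerInclusion _ _ _).toLinearMap) dot2_outerInclusion_adjoint outerInclusion_injective
    (L := (portProj _ _ _).toLinearMap) exact_outerInclusion_portProj hcore (ea, eb)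
  constructor
  · intro h
    obtain ⟨⟨fa', f, fb'⟩, hf, heq⟩ := hchain.subset h
    obtain ⟨rfl, rfl⟩ : fa' = fa ∧ fb' = fb := by simpa using heq
    exact ⟨f, hf⟩
  · rintro ⟨f, hf⟩
    exact hchain.superset ⟨(fa, f, fb), hf, rfl⟩

theorem zero_mem_intrinsicCore_couplingDefect (hφa : ProperLscConvex φa)
    (hφb : ProperLscConvex φb) {f : Fin n → ℝ}
    (hf : (f, -f) ∈ rint ({f : Fin n → ℝ | ∃ fa, φa (fa, f) ≠ ⊤} ×ˢ
      {f : Fin n → ℝ | ∃ fb, φb (fb, f) ≠ ⊤})) :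
    0 ∈ intrinsicCore (couplingDefect _ _ _ '' {q | φa q.1 + φb q.2 ≠ ⊤}) := by
  let L : (Fin n → ℝ) × (Fin n → ℝ) →L[ℝ] (Fin n → ℝ) :=
    ContinuousLinearMap.fst ℝ _ _ + ContinuousLinearMap.snd ℝ _ _
  have himage : L '' ({f : Fin n → ℝ | ∃ fa, φa (fa, f) ≠ ⊤} ×ˢ
      {f : Fin n → ℝ | ∃ fb, φb (fb, f) ≠ ⊤}) =
      couplingDefect _ _ _ '' {q | φa q.1 + φb q.2 ≠ ⊤} := by
    ext y
    constructor
    · rintro ⟨⟨f, f'⟩, ⟨⟨fa, ha⟩, fb, hb⟩, rfl⟩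
      exact ⟨((fa, f), fb, f'), EReal.add_ne_top ha hb, rfl⟩
    · rintro ⟨⟨⟨fa, f⟩, fb, f'⟩, h, rfl⟩
      obtain ⟨ha, hb⟩ := (EReal.add_ne_top_iff_ne_top₂ (hφa.2.1 _) (hφb.2.1 _)).1 h
      exact ⟨(f, f'), ⟨⟨fa, ha⟩, fb, hb⟩, rfl⟩
  have hconvex := (hφa.prod_add hφb).convex_dom.linear_image (couplingDefect _ _ _)
  simpa [L] using map_mem_intrinsicCore_of_mem_intrinsicInterior_closure L hconvex himage.subset
    (himage.superset.trans subset_closure) hf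

theorem zero_mem_intrinsicCore_portProj (hφa : ProperLscConvex φa) (hφb : ProperLscConvex φb)
    (hcore : 0 ∈ intrinsicCore (couplingDefect _ _ _ '' {q | φa q.1 + φb q.2 ≠ ⊤}))
    {e : Fin n → ℝ} (he : (e, e) ∈ rint {v : (Fin n → ℝ) × (Fin n → ℝ) | ∃ f,
      (∃ fa ea, (ea, v.1) ∈ subdiff dot2 φa (fa, f)) ∧
        ∃ fb eb, (eb, v.2) ∈ subdiff dot2 φb (fb, -f)}) :
    0 ∈ intrinsicCore (portProj _ _ _ '' {e | fconj dot3 (phiSum φa φb) e ≠ ⊤}) := by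
  have hφ := properLscConvex_phiSum hφa hφb (intrinsicCore_subset _ hcore)
  have hp := isInnerPairing_dot3 na n nb
  let L : (Fin n → ℝ) × (Fin n → ℝ) →L[ℝ] (Fin n → ℝ) :=
    ContinuousLinearMap.fst ℝ _ _ - ContinuousLinearMap.snd ℝ _ _
  have himage : L '' {v | ∃ f, (∃ fa ea, (ea, v.1) ∈ subdiff dot2 φa (fa, f)) ∧
        ∃ fb eb, (eb, v.2) ∈ subdiff dot2 φb (fb, -f)} =
      portProj _ _ _ '' {e | ∃ x, e ∈ subdiff dot3 (phiSum φa φb) x} := by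
    ext y
    constructor
    · rintro ⟨⟨v, v'⟩, ⟨f, ⟨fa, ea, ha⟩, fb, eb, hb⟩, rfl⟩
      refine ⟨(ea, v - v', eb), ⟨(fa, f, fb), ?_⟩, rfl⟩
      exact (mem_subdiff_phiSum_iff hφa hφb hcore).2 ⟨v, ha, by simpa using hb⟩
    · rintro ⟨⟨ea, y, eb⟩, ⟨⟨fa, f, fb⟩, h⟩, rfl⟩
      obtain ⟨η, ha, hb⟩ := (mem_subdiff_phiSum_iff hφa hφb hcore).1 h
      exact ⟨(η, η - y), ⟨f, ⟨fa, ea, ha⟩, fb, eb, hb⟩, by simp [L, portProj]⟩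
  have hconvex := (hφ.properLscConvex_fconj hp).convex_dom.linear_image
    (portProj _ _ _).toLinearMap
  have hzero := map_mem_intrinsicCore_of_mem_intrinsicInterior_closure L hconvex
    (himage.trans_subset <| Set.image_mono fun e ⟨x, hx⟩ =>
      ((hφ.mem_subdiff_fconj_iff hp).2 hx).1)
    (himage ▸ (Set.image_mono (hφ.dom_fconj_subset_closure hp)).trans
      (image_closure_subset_closure_image (portProj _ _ _).continuous)) he
  simpa [L] using hzero

end Composition

/-- Composition of maximal cyclically monotone relations, generated by
`φ_a`, `φ_b`, is maximal cyclically monotone with generating function `θ*`,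
under the relative-interior conditions. -/
theorem maximalCyclicallyMonotone_relComp {na nb n : ℕ}
    (Ma : Set ((Fin na → ℝ) × (Fin n → ℝ) × (Fin na → ℝ) × (Fin n → ℝ)))
    (Mb : Set ((Fin nb → ℝ) × (Fin n → ℝ) × (Fin nb → ℝ) × (Fin n → ℝ)))
    (hMa : MaxCycMono4 Ma) (hMb : MaxCycMono4 Mb)
    (φa : (Fin na → ℝ) × (Fin n → ℝ) → EReal)
    (φb : (Fin nb → ℝ) × (Fin n → ℝ) → EReal)
    (hφa : ProperLscConvex φa) (hφb : ProperLscConvex φb)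
    (hgena : ∀ fa f ea e, (fa, f, ea, e) ∈ Ma ↔ (ea, e) ∈ subdiff dot2 φa (fa, f))
    (hgenb : ∀ fb f eb e, (fb, f, eb, e) ∈ Mb ↔ (eb, e) ∈ subdiff dot2 φb (fb, f))
    (hf : ∃ fbar : Fin n → ℝ,
      (fbar, -fbar) ∈ rint
        ({f : Fin n → ℝ | ∃ fa, φa (fa, f) ≠ ⊤} ×ˢ
         {f : Fin n → ℝ | ∃ fb, φb (fb, f) ≠ ⊤}))
    (he : ∃ ebar : Fin n → ℝ,
      (ebar, ebar) ∈ rint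
        {p : (Fin n → ℝ) × (Fin n → ℝ) | ∃ f,
          (∃ fa ea, (fa, f, ea, p.1) ∈ Ma) ∧ (∃ fb eb, (fb, -f, eb, p.2) ∈ Mb)}) :
    MaxCycMono4 (RelComp Ma Mb) ∧
      ∀ fa fb ea eb, (fa, fb, ea, eb) ∈ RelComp Ma Mb ↔
        (ea, eb) ∈ subdiff dot2 (fconj dot2 (theta φa φb)) (fa, fb) := by
  obtain ⟨fbar, hf⟩ := hf
  obtain ⟨ebar, he⟩ := he
  simp only [hgena, hgenb] at he
  have hcore_f := zero_mem_intrinsicCore_couplingDefect hφa hφb hf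
  have hcore_e := zero_mem_intrinsicCore_portProj hφa hφb hcore_f he
  have hφ := properLscConvex_phiSum hφa hφb (intrinsicCore_subset _ hcore_f)
  have hθ := properLscConvex_theta hφ (intrinsicCore_subset _ hcore_e)
  have hdot2 := isInnerPairing_dot2 na nb
  have hgen (fa fb ea eb) : (fa, fb, ea, eb) ∈ RelComp Ma Mb ↔
      (ea, eb) ∈ subdiff dot2 (fconj dot2 (theta φa φb)) (fa, fb) := by
    calc (fa, fb, ea, eb) ∈ RelComp Ma Mb
      _ ↔ ∃ f, (ea, 0, eb) ∈ subdiff dot3 (phiSum φa φb) (fa, f, fb) := by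
        simp only [RelComp, Set.mem_ofPred_eq, hgena, hgenb,
          mem_subdiff_phiSum_iff hφa hφb hcore_f, sub_zero]
      _ ↔ ∃ f, (fa, f, fb) ∈ subdiff dot3 (fconj dot3 (phiSum φa φb)) (ea, 0, eb) := by
        simp only [hφ.mem_subdiff_fconj_iff (isInnerPairing_dot3 na n nb)]
      _ ↔ (fa, fb) ∈ subdiff dot2 (theta φa φb) (ea, eb) := (mem_subdiff_theta_iff hφ hcore_e).symm
      _ ↔ (ea, eb) ∈ subdiff dot2 (fconj dot2 (theta φa φb)) (fa, fb) :=
        (hθ.mem_subdiff_fconj_iff hdot2).symm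
  exact ⟨maxCycMono4_of_mem_iff_mem_subdiff (hθ.properLscConvex_fconj hdot2) hgen, hgen⟩
end

section
/- Any separable Dirac structure D ⊆ F × E can be written as D = K × K^⊥ for some subspace K ⊆ F, where K^⊥ = {e ∈ E : ⟨e, f⟩ = 0 for all f ∈ K}. Conversely, for any subspace K ⊆ F, the subspace K × K^⊥ is a separable Dirac structure. -/
/-- The indefinite bilinear form `⟪(f₁,e₁),(f₂,e₂)⟫ = ⟨e₁,f₂⟩ + ⟨e₂,f₁⟩`
on `F × E`. -/
noncomputable def bform {n : ℕ} (p q : (Fin n → ℝ) × (Fin n → ℝ)) : ℝ :=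
  dot p.2 q.1 + dot q.2 p.1

/-- A (constant) Dirac structure: a subspace `D ⊆ F × E` equal to its
orthogonal companion w.r.t. the indefinite bilinear form. -/
def IsDirac {n : ℕ} (D : Set ((Fin n → ℝ) × (Fin n → ℝ))) : Prop :=
  (∃ W : Submodule ℝ ((Fin n → ℝ) × (Fin n → ℝ)), D = ↑W) ∧
  D = {p | ∀ q ∈ D, bform p q = 0}

/-- A Dirac structure is separable if `⟨e_a, f_b⟩ = 0` for all
`(f_a,e_a), (f_b,e_b) ∈ D`. -/
def SepRel {n : ℕ} (D : Set ((Fin n → ℝ) × (Fin n → ℝ))) : Prop :=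
  ∀ p ∈ D, ∀ q ∈ D, dot p.2 q.1 = 0

/-!
Let `K` be the set of flows occurring in a separable Dirac structure `D`. Separability says that
`D ⊆ K × K^⊥`, and also that both summands of the bilinear form vanish between `K × K^⊥` and `D`, so
`K × K^⊥` lies in the orthogonal companion of `D`, which is `D`. Conversely, the companion of a
product `K × L` is `L^⊥ × K^⊥`, so `K × K^⊥` is Dirac exactly when `K^⊥⊥ = K`. The latter holds over
a field as soon as every linear functional on flows is given by an effort.
-/

section Pairing

variable {R F E : Type*} [CommSemiring R] [AddCommMonoid F] [Module R F] [AddCommMonoid E]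
  [Module R E]

/-- The symmetric bilinear form on `F × E` induced by a pairing `B` of efforts with flows; for the
standard pairing of `ℝ^n` it is `bform`. -/
def pairingForm (B : E →ₗ[R] F →ₗ[R] R) : LinearMap.BilinForm R (F × E) :=
  B.compl₁₂ (LinearMap.snd R F E) (LinearMap.fst R F E) +
    (B.compl₁₂ (LinearMap.snd R F E) (LinearMap.fst R F E)).flip

/-- Dirac structures for an arbitrary pairing `B`: subspaces of `F × E` equal to their orthogonal
companion. -/
def IsDiracSubspace (B : E →ₗ[R] F →ₗ[R] R) (D : Submodule R (F × E)) : Prop :=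
  D = D.orthogonalBilin (pairingForm B)

/-- Separability for an arbitrary pairing `B`: every effort occurring in `D` annihilates every flow
occurring in `D`. -/
def IsSeparableSubspace (B : E →ₗ[R] F →ₗ[R] R) (D : Submodule R (F × E)) : Prop :=
  ∀ p ∈ D, ∀ q ∈ D, B p.2 q.1 = 0

variable {B : E →ₗ[R] F →ₗ[R] R} {D : Submodule R (F × E)} {K : Submodule R F}
  {L : Submodule R E}

theorem pairingForm_apply (p q : F × E) : pairingForm B p q = B p.2 q.1 + B q.2 p.1 :=
  rfl

theorem orthogonalBilin_pairingForm_prod :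
    (K.prod L).orthogonalBilin (pairingForm B) =
      (L.orthogonalBilin B).prod (K.orthogonalBilin B.flip) := by
  ext p
  simp only [Submodule.mem_orthogonalBilin_iff, Submodule.mem_prod, pairingForm_apply,
    LinearMap.flip_apply]
  constructor
  · intro h
    exact ⟨fun e he => by simpa using h (0, e) ⟨K.zero_mem, he⟩,
      fun f hf => by simpa using h (f, 0) ⟨hf, L.zero_mem⟩⟩
  · rintro ⟨hflow, heffort⟩ q ⟨hqK, hqL⟩
    rw [hflow _ hqL, heffort _ hqK, add_zero]

theorem isDiracSubspace_prod_orthogonalBilin_iff :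
    IsDiracSubspace B (K.prod (K.orthogonalBilin B.flip)) ↔
      (K.orthogonalBilin B.flip).orthogonalBilin B = K := by
  rw [IsDiracSubspace, orthogonalBilin_pairingForm_prod]
  constructor
  · intro h
    simpa only [Submodule.prod_map_fst] using
      (congrArg (Submodule.map (LinearMap.fst R F E)) h).symm
  · intro h
    rw [h]

theorem isSeparableSubspace_prod_orthogonalBilin :
    IsSeparableSubspace B (K.prod (K.orthogonalBilin B.flip)) :=
  fun _ hp _ hq => hp.2 _ hq.1

theorem IsSeparableSubspace.le_prod (hsep : IsSeparableSubspace B D) :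
    D ≤ (D.map (LinearMap.fst R F E)).prod
      ((D.map (LinearMap.fst R F E)).orthogonalBilin B.flip) := by
  refine fun p hp => ⟨Submodule.mem_map_of_mem hp, ?_⟩
  rintro _ ⟨q, hq, rfl⟩
  exact hsep p hp q hq

theorem IsSeparableSubspace.prod_le_orthogonalBilin (hsep : IsSeparableSubspace B D) :
    (D.map (LinearMap.fst R F E)).prod ((D.map (LinearMap.fst R F E)).orthogonalBilin B.flip) ≤
      D.orthogonalBilin (pairingForm B) := by
  rintro ⟨_, e⟩ ⟨⟨p, hp, rfl⟩, he⟩ q hq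
  have hqp : B q.2 p.1 = 0 := hsep q hq p hp
  have heq : B e q.1 = 0 := he q.1 (Submodule.mem_map_of_mem hq)
  simp only [pairingForm_apply, LinearMap.fst_apply, hqp, heq, add_zero]

theorem IsDiracSubspace.eq_prod_of_isSeparableSubspace (hD : IsDiracSubspace B D)
    (hsep : IsSeparableSubspace B D) :
    D = (D.map (LinearMap.fst R F E)).prod
      ((D.map (LinearMap.fst R F E)).orthogonalBilin B.flip) :=
  le_antisymm hsep.le_prod (hsep.prod_le_orthogonalBilin.trans_eq hD.symm)

end Pairing

section Field

variable {𝕜 F E : Type*} [Field 𝕜] [AddCommGroup F] [Module 𝕜 F] [AddCommMonoid E] [Module 𝕜 E]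
  {B : E →ₗ[𝕜] F →ₗ[𝕜] 𝕜}

theorem orthogonalBilin_flip_orthogonalBilin_of_surjective (hB : Function.Surjective B)
    (K : Submodule 𝕜 F) : (K.orthogonalBilin B.flip).orthogonalBilin B = K := by
  ext f
  rw [← Subspace.forall_mem_dualAnnihilator_apply_eq_zero_iff K f, hB.forall]
  simp only [Submodule.mem_orthogonalBilin_iff, Submodule.mem_dualAnnihilator,
    LinearMap.flip_apply]

theorem separable_dirac_iff_prod_general (hB : Function.Surjective B)
    (D : Submodule 𝕜 (F × E)) :
    IsDiracSubspace B D ∧ IsSeparableSubspace B D ↔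
      ∃ K : Submodule 𝕜 F, D = K.prod (K.orthogonalBilin B.flip) := by
  constructor
  · rintro ⟨hD, hsep⟩
    exact ⟨_, hD.eq_prod_of_isSeparableSubspace hsep⟩
  · rintro ⟨K, rfl⟩
    exact ⟨isDiracSubspace_prod_orthogonalBilin_iff.2
        (orthogonalBilin_flip_orthogonalBilin_of_surjective hB K),
      isSeparableSubspace_prod_orthogonalBilin⟩

end Field

section StandardPairing

variable {n : ℕ}

theorem bform_eq_pairingForm (p q : (Fin n → ℝ) × (Fin n → ℝ)) :
    bform p q = pairingForm (dotProductEquiv ℝ (Fin n)).toLinearMap q p :=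
  add_comm _ _

theorem isDirac_coe_iff (W : Submodule ℝ ((Fin n → ℝ) × (Fin n → ℝ))) :
    IsDirac (W : Set ((Fin n → ℝ) × (Fin n → ℝ))) ↔
      IsDiracSubspace (dotProductEquiv ℝ (Fin n)).toLinearMap W := by
  simp only [IsDirac, IsDiracSubspace, bform_eq_pairingForm, SetLike.ext'_iff]
  exact and_iff_right ⟨W, rfl⟩

theorem isDirac_and_sepRel_coe_iff (W : Submodule ℝ ((Fin n → ℝ) × (Fin n → ℝ))) :
    IsDirac (W : Set ((Fin n → ℝ) × (Fin n → ℝ))) ∧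
        SepRel (W : Set ((Fin n → ℝ) × (Fin n → ℝ))) ↔
      ∃ K : Submodule ℝ (Fin n → ℝ),
        W = K.prod (K.orthogonalBilin (dotProductEquiv ℝ (Fin n)).toLinearMap.flip) :=
  (and_congr_left' (isDirac_coe_iff W)).trans
    (separable_dirac_iff_prod_general (dotProductEquiv ℝ (Fin n)).surjective W)

end StandardPairing

/-- A separable Dirac structure is of the form `K × K^⊥` for some subspace
`K ⊆ F`, and conversely every `K × K^⊥` is a separable Dirac structure. -/
theorem separable_dirac_iff_prod {n : ℕ} :
    (∀ D : Set ((Fin n → ℝ) × (Fin n → ℝ)), IsDirac D → SepRel D →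
      ∃ K : Submodule ℝ (Fin n → ℝ),
        D = {p : (Fin n → ℝ) × (Fin n → ℝ) | p.1 ∈ K ∧ ∀ f ∈ K, dot p.2 f = 0}) ∧
    (∀ K : Submodule ℝ (Fin n → ℝ),
      IsDirac {p : (Fin n → ℝ) × (Fin n → ℝ) | p.1 ∈ K ∧ ∀ f ∈ K, dot p.2 f = 0} ∧
      SepRel {p : (Fin n → ℝ) × (Fin n → ℝ) | p.1 ∈ K ∧ ∀ f ∈ K, dot p.2 f = 0}) := by
  constructor
  · intro D hD hsep
    obtain ⟨W, rfl⟩ := hD.1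
    obtain ⟨K, rfl⟩ := (isDirac_and_sepRel_coe_iff W).1 ⟨hD, hsep⟩
    exact ⟨K, rfl⟩
  · exact fun K => (isDirac_and_sepRel_coe_iff _).2 ⟨K, rfl⟩
end

section
/- Every Dirac structure D ⊆ F × E is a maximal monotone relation. -/
/-- Monotone relation `M ⊆ F × E` (elements `(f, e)`). -/
def Mono2 {n : ℕ} (M : Set ((Fin n → ℝ) × (Fin n → ℝ))) : Prop :=
  ∀ p ∈ M, ∀ q ∈ M, 0 ≤ dot (p.2 - q.2) (p.1 - q.1)

/-- Maximal monotone relation. -/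
def MaxMono2 {n : ℕ} (M : Set ((Fin n → ℝ) × (Fin n → ℝ))) : Prop :=
  Mono2 M ∧ ∀ M', Mono2 M' → M ⊆ M' → M' = M

/-!
On a subspace that is isotropic for the polar form of a quadratic form `Q`, `Q` itself vanishes, so
the subspace is monotone. If a monotone set contains such a subspace `W`, then for `x` in the set
and `y ∈ W` the quadratic polynomial `t ↦ Q (x - t • y)` is nonnegative; its leading coefficient
`Q y` is zero, so its discriminant forces `x` to be orthogonal to `y`. Thus a monotone extension
of `W` stays inside the orthogonal companion of `W`, which is `W` itself for a Dirac structure.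
Here `Q (f, e) = ⟨e, f⟩`, whose polar form is the indefinite form `⟪·,·⟫`.
-/

section QuadraticMap

variable {R V N : Type*} [CommRing R] [AddCommGroup V] [Module R V] [AddCommGroup N] [Module R N]

theorem quadraticMap_eq_zero_of_le_orthogonalBilin [IsAddTorsionFree N]
    {Q : QuadraticMap R V N} {W : Submodule R V} (hW : W ≤ W.orthogonalBilin Q.polarBilin)
    {x : V} (hx : x ∈ W) : Q x = 0 := by
  have polar_self_eq_zero : 2 • Q x = 0 := by
    rw [← QuadraticMap.polar_self]
    exact hW hx x hx
  exact (nsmul_eq_zero_iff_right two_ne_zero).1 polar_self_eq_zero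

theorem quadraticMap_sub_smul (Q : QuadraticMap R V N) (x y : V) (t : R) :
    Q (x - t • y) = (t * t) • Q y - t • QuadraticMap.polar Q x y + Q x := by
  rw [sub_eq_add_neg, QuadraticMap.map_add Q, Q.map_neg, Q.map_smul, Q.polar_neg_right,
    Q.polar_smul_right]
  abel

end QuadraticMap

section OrderedField

variable {K V : Type*} [Field K] [LinearOrder K] [IsStrictOrderedRing K]
  [AddCommGroup V] [Module K V]

theorem polar_sq_le_of_forall_nonneg_sub_smul {Q : QuadraticForm K V} {x y : V}
    (h : ∀ t : K, 0 ≤ Q (x - t • y)) : QuadraticMap.polar Q x y ^ 2 ≤ 4 * Q y * Q x := by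
  have discrim_nonpos : discrim (Q y) (-QuadraticMap.polar Q x y) (Q x) ≤ 0 :=
    discrim_le_zero fun t => by
      have expansion_nonneg := h t
      rw [quadraticMap_sub_smul, smul_eq_mul, smul_eq_mul] at expansion_nonneg
      linarith
  rw [discrim, neg_sq] at discrim_nonpos
  exact sub_nonpos.1 discrim_nonpos

/-- Monotonicity of a set relative to a quadratic form `Q`: differences of points of `S` lie in the
cone `0 ≤ Q`. For `Q (f, e) = ⟨e, f⟩` this is monotonicity of `S` as a relation. -/
def IsMonotoneFor (Q : QuadraticForm K V) (S : Set V) : Prop :=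
  ∀ x ∈ S, ∀ y ∈ S, 0 ≤ Q (x - y)

theorem isMonotoneFor_of_le_orthogonalBilin {Q : QuadraticForm K V} {W : Submodule K V}
    (hW : W ≤ W.orthogonalBilin Q.polarBilin) : IsMonotoneFor Q (W : Set V) :=
  fun _ hx _ hy => (quadraticMap_eq_zero_of_le_orthogonalBilin hW (W.sub_mem hx hy)).ge

theorem IsMonotoneFor.subset_orthogonalBilin {Q : QuadraticForm K V} {S : Set V}
    (hS : IsMonotoneFor Q S) {W : Submodule K V} (hW : W ≤ W.orthogonalBilin Q.polarBilin)
    (hWS : (W : Set V) ⊆ S) : S ⊆ W.orthogonalBilin Q.polarBilin := by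
  intro x hx y hy
  have polar_sq_le : QuadraticMap.polar Q x y ^ 2 ≤ 4 * Q y * Q x :=
    polar_sq_le_of_forall_nonneg_sub_smul fun t => hS x hx _ (hWS (W.smul_mem t hy))
  rw [quadraticMap_eq_zero_of_le_orthogonalBilin hW hy, mul_zero, zero_mul] at polar_sq_le
  rw [QuadraticMap.polarBilin_apply_apply, QuadraticMap.polar_comm]
  exact (sq_nonpos_iff _).1 polar_sq_le

theorem dirac_maxMonotone_general {Q : QuadraticForm K V} {W : Submodule K V}
    (hW : W.orthogonalBilin Q.polarBilin = W) : Maximal (IsMonotoneFor Q) (W : Set V) := by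
  refine ⟨isMonotoneFor_of_le_orthogonalBilin hW.ge, fun S hS hWS => ?_⟩
  have S_subset := hS.subset_orthogonalBilin hW.ge hWS
  rwa [hW] at S_subset

end OrderedField

section FlowEffort

variable {n : ℕ}

/-- The power `(f, e) ↦ ⟨e, f⟩` as a quadratic form on `F × E`; its polar form is `bform`. -/
def powerForm (n : ℕ) : QuadraticForm ℝ ((Fin n → ℝ) × (Fin n → ℝ)) :=
  LinearMap.BilinMap.toQuadraticMap
    ((dotProductBilin ℝ ℝ).compl₁₂ (LinearMap.snd ℝ _ _) (LinearMap.fst ℝ _ _))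

theorem polar_powerForm (p q : (Fin n → ℝ) × (Fin n → ℝ)) :
    QuadraticMap.polar (powerForm n) p q = bform p q :=
  LinearMap.BilinMap.polar_toQuadraticMap p q

theorem IsDirac.exists_orthogonalBilin_eq {D : Set ((Fin n → ℝ) × (Fin n → ℝ))}
    (hD : IsDirac D) : ∃ W : Submodule ℝ ((Fin n → ℝ) × (Fin n → ℝ)),
      D = W ∧ W.orthogonalBilin (powerForm n).polarBilin = W := by
  obtain ⟨⟨W, rfl⟩, eq_companion⟩ := hD
  refine ⟨W, rfl, SetLike.coe_injective (Eq.trans ?_ eq_companion.symm)⟩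
  ext p
  simp only [SetLike.mem_coe, Submodule.mem_orthogonalBilin_iff, Set.mem_ofPred_eq,
    QuadraticMap.polarBilin_apply_apply, QuadraticMap.polar_comm _ _ p, polar_powerForm]

theorem maxMono2_iff_maximal {M : Set ((Fin n → ℝ) × (Fin n → ℝ))} :
    MaxMono2 M ↔ Maximal (IsMonotoneFor (powerForm n)) M := by
  rw [maximal_subset_iff]
  simp only [eq_comm (a := M)]
  rfl

end FlowEffort

/-- Every Dirac structure is a maximal monotone relation. -/
theorem dirac_maxMonotone {n : ℕ} (D : Set ((Fin n → ℝ) × (Fin n → ℝ)))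
    (hD : IsDirac D) : MaxMono2 D := by
  obtain ⟨W, rfl, hW⟩ := hD.exists_orthogonalBilin_eq
  exact maxMono2_iff_maximal.2 (dirac_maxMonotone_general hW)
end

section
/- A Dirac structure D ⊆ F × E is cyclically monotone if and only if it is separable; in that case D is maximal cyclically monotone. -/
/-- Cyclically monotone relation `M ⊆ F × E` (elements `(f, e)`). -/
def CycMono2 {n : ℕ} (M : Set ((Fin n → ℝ) × (Fin n → ℝ))) : Prop :=
  ∀ m : ℕ, 1 ≤ m → ∀ (f e : ℕ → Fin n → ℝ),
    (∀ i ≤ m, (f i, e i) ∈ M) → f (m + 1) = f 0 →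
    0 ≤ ∑ i ∈ Finset.range (m + 1), dot (e i) (f i - f (i + 1))

/-- Maximal cyclically monotone relation. -/
def MaxCycMono2 {n : ℕ} (M : Set ((Fin n → ℝ) × (Fin n → ℝ))) : Prop :=
  CycMono2 M ∧ ∀ M', CycMono2 M' → M ⊆ M' → M' = M

/-!
Closing a cycle `p, q` through `0` gives `⟨e_p, f_q⟩ ≤ 0` on a cyclically monotone isotropic
subspace, and replacing `p` by `-p` gives equality: this is separability. Conversely, on a separable
relation every term of a cyclic sum vanishes. For maximality, two-element cycles already suffice:
if `p` is monotonically related to every `t • q` with `q ∈ D`, then `t * ⟪p, q⟫ ≤ ⟨e_p, f_p⟩` for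
all `t`, hence `⟪p, q⟫ = 0`, and `p` lies in the orthogonal companion of `D`, which is `D`.
-/

section Pairing

variable {R F E : Type*} [CommRing R] [AddCommGroup F] [Module R F] [AddCommGroup E] [Module R E]

/-- The symmetric bilinear form `⟪(f₁, e₁), (f₂, e₂)⟫ = ⟨e₁, f₂⟩ + ⟨e₂, f₁⟩` on `F × E` induced by
a pairing `B e f = ⟨e, f⟩`, which need not be perfect. -/
def plusForm (B : E →ₗ[R] F →ₗ[R] R) : LinearMap.BilinForm R (F × E) :=
  B.compl₁₂ (.snd R F E) (.fst R F E) + (B.compl₁₂ (.snd R F E) (.fst R F E)).flip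

/-- A Dirac structure for the pairing `B`: a submodule of `F × E` equal to its orthogonal companion
with respect to `plusForm B`. -/
def IsDiracStructure (B : E →ₗ[R] F →ₗ[R] R) (D : Submodule R (F × E)) : Prop :=
  D = (plusForm B).orthogonal D

/-- A relation between flows and efforts is separable if each of its efforts annihilates each of
its flows. -/
def IsSeparableRelation (B : E →ₗ[R] F →ₗ[R] R) (M : Set (F × E)) : Prop :=
  ∀ p ∈ M, ∀ q ∈ M, B p.2 q.1 = 0

/-- Cyclic monotonicity of a relation `M` between flows and efforts. The cycle
`(f 0, e 0), …, (f m, e m)` is closed by requiring `f (m + 1) = f 0`; the values of `f` and `e` at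
other indices are irrelevant. -/
def IsCyclicallyMonotone [LE R] (B : E →ₗ[R] F →ₗ[R] R) (M : Set (F × E)) : Prop :=
  ∀ m : ℕ, 1 ≤ m → ∀ (f : ℕ → F) (e : ℕ → E),
    (∀ i ≤ m, (f i, e i) ∈ M) → f (m + 1) = f 0 →
    0 ≤ ∑ i ∈ Finset.range (m + 1), B (e i) (f i - f (i + 1))

variable {B : E →ₗ[R] F →ₗ[R] R} {D : Submodule R (F × E)} {M : Set (F × E)} {p q r : F × E}

theorem plusForm_apply : plusForm B p q = B p.2 q.1 + B q.2 p.1 := rfl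

theorem plusForm_comm : plusForm B p q = plusForm B q p := add_comm _ _

namespace IsDiracStructure

theorem mem_iff (hD : IsDiracStructure B D) : p ∈ D ↔ ∀ q ∈ D, plusForm B p q = 0 := by
  simp only [plusForm_comm (p := p)]
  exact SetLike.ext_iff.1 hD p

theorem pairing_self_eq_zero [IsAddTorsionFree R] (hD : IsDiracStructure B D) (hp : p ∈ D) :
    B p.2 p.1 = 0 :=
  self_eq_neg.1 (eq_neg_of_add_eq_zero_left (hD.mem_iff.1 hp p hp))

end IsDiracStructure

theorem IsSeparableRelation.isCyclicallyMonotone [Preorder R] (hM : IsSeparableRelation B M) :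
    IsCyclicallyMonotone B M := by
  intro m _ f e hfe hclosed
  refine (Finset.sum_eq_zero fun i hi => ?_).ge
  have hi : i ≤ m := Finset.mem_range_succ_iff.1 hi
  have hself : B (e i) (f i) = 0 := hM _ (hfe i hi) _ (hfe i hi)
  have hnext : B (e i) (f (i + 1)) = 0 := by
    rcases hi.lt_or_eq with hlt | rfl
    · exact hM _ (hfe i hi) _ (hfe (i + 1) hlt)
    · exact hclosed ▸ hM _ (hfe i hi) _ (hfe 0 i.zero_le)
  rw [map_sub, hself, hnext, sub_zero]

namespace IsCyclicallyMonotone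

theorem three_cycle_nonneg [LE R] (hM : IsCyclicallyMonotone B M) (hp : p ∈ M) (hq : q ∈ M)
    (hr : r ∈ M) :
    0 ≤ B p.2 (p.1 - q.1) + B q.2 (q.1 - r.1) + B r.2 (r.1 - p.1) := by
  let x : ℕ → F × E
    | 1 => q
    | 2 => r
    | _ => p
  have hx : ∀ i ≤ 2, x i ∈ M := by
    intro i hi
    interval_cases i
    exacts [hp, hq, hr]
  have hcycle := hM 2 one_le_two (fun i => (x i).1) (fun i => (x i).2) hx rfl
  simp only [Finset.sum_range_succ, Finset.sum_range_zero, zero_add] at hcycle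
  exact hcycle

theorem pairing_sub_sub_nonneg [LE R] (hM : IsCyclicallyMonotone B M) (hp : p ∈ M) (hq : q ∈ M) :
    0 ≤ B (p.2 - q.2) (p.1 - q.1) := by
  have hcycle := hM.three_cycle_nonneg hp hq hp
  have hsum : B p.2 (p.1 - q.1) + B q.2 (q.1 - p.1) + B p.2 (p.1 - p.1) =
      B (p.2 - q.2) (p.1 - q.1) := by
    simp only [map_sub, LinearMap.sub_apply]
    ring
  rwa [hsum] at hcycle

variable [PartialOrder R] [IsOrderedAddMonoid R]

theorem pairing_nonpos_of_isotropic (hM : IsCyclicallyMonotone B M)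
    (hisotropic : ∀ x ∈ M, B x.2 x.1 = 0) (hzero : 0 ∈ M) (hp : p ∈ M) (hq : q ∈ M) :
    B p.2 q.1 ≤ 0 := by
  simpa [hisotropic p hp, hisotropic q hq] using hM.three_cycle_nonneg hp hq hzero

theorem isSeparableRelation_of_isotropic (hD : IsCyclicallyMonotone B (D : Set (F × E)))
    (hisotropic : ∀ x ∈ D, B x.2 x.1 = 0) : IsSeparableRelation B (D : Set (F × E)) := by
  intro p hp q hq
  have hle : B p.2 q.1 ≤ 0 := hD.pairing_nonpos_of_isotropic hisotropic D.zero_mem hp hq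
  have hneg : B (-p).2 q.1 ≤ 0 :=
    hD.pairing_nonpos_of_isotropic hisotropic D.zero_mem (D.neg_mem hp) hq
  have hge : 0 ≤ B p.2 q.1 := by simpa using hneg
  exact hle.antisymm hge

end IsCyclicallyMonotone

end Pairing

section OrderedField

variable {𝕜 F E : Type*} [Field 𝕜] [LinearOrder 𝕜] [IsStrictOrderedRing 𝕜]
  [AddCommGroup F] [Module 𝕜 F] [AddCommGroup E] [Module 𝕜 E]
  {B : E →ₗ[𝕜] F →ₗ[𝕜] 𝕜} {D : Submodule 𝕜 (F × E)} {p : F × E}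

theorem eq_zero_of_forall_mul_le {b c : 𝕜} (h : ∀ t, t * b ≤ c) : b = 0 := by
  by_contra hb
  have := h ((c + 1) / b)
  rw [div_mul_cancel₀ _ hb] at this
  exact (lt_add_one c).not_ge this

namespace IsDiracStructure

theorem mem_of_forall_pairing_sub_sub_nonneg (hD : IsDiracStructure B D)
    (hp : ∀ q ∈ D, 0 ≤ B (p.2 - q.2) (p.1 - q.1)) : p ∈ D := by
  refine hD.mem_iff.2 fun q hq => eq_zero_of_forall_mul_le (c := B p.2 p.1) fun t => ?_
  have htq : t • q ∈ D := D.smul_mem t hq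
  have hexpand : B (p.2 - (t • q).2) (p.1 - (t • q).1) =
      B p.2 p.1 - plusForm B p (t • q) + B (t • q).2 (t • q).1 := by
    simp only [plusForm_apply, map_sub, LinearMap.sub_apply]
    ring
  have hnonneg := hp _ htq
  rw [hexpand, hD.pairing_self_eq_zero htq, add_zero, map_smul, smul_eq_mul] at hnonneg
  exact sub_nonneg.1 hnonneg

theorem maximal_isCyclicallyMonotone (hD : IsDiracStructure B D)
    (hmono : IsCyclicallyMonotone B (D : Set (F × E))) :
    Maximal (IsCyclicallyMonotone B) (D : Set (F × E)) :=
  ⟨hmono, fun _ hM hsub _ hp => hD.mem_of_forall_pairing_sub_sub_nonneg fun _ hq =>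
    hM.pairing_sub_sub_nonneg hp (hsub hq)⟩

end IsDiracStructure

theorem dirac_cycMonotone_iff_separable_general (hD : IsDiracStructure B D) :
    (IsCyclicallyMonotone B (D : Set (F × E)) ↔ IsSeparableRelation B (D : Set (F × E))) ∧
      (IsCyclicallyMonotone B (D : Set (F × E)) →
        Maximal (IsCyclicallyMonotone B) (D : Set (F × E))) :=
  ⟨⟨fun hmono => hmono.isSeparableRelation_of_isotropic fun _ hp => hD.pairing_self_eq_zero hp,
    fun hsep => hsep.isCyclicallyMonotone⟩, hD.maximal_isCyclicallyMonotone⟩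

end OrderedField

section Euclidean

variable {n : ℕ} {D : Set ((Fin n → ℝ) × (Fin n → ℝ))}

theorem IsDirac.exists_isDiracStructure (hD : IsDirac D) :
    ∃ W : Submodule ℝ ((Fin n → ℝ) × (Fin n → ℝ)),
      D = W ∧ IsDiracStructure (dotProductBilin ℝ ℝ) W := by
  obtain ⟨⟨W, rfl⟩, hW⟩ := hD
  refine ⟨W, rfl, SetLike.ext fun p => (Set.ext_iff.1 hW p).trans ?_⟩
  exact forall₂_congr fun q _ => by rw [plusForm_comm]; rfl

theorem maxCycMono2_iff_maximal :
    MaxCycMono2 D ↔ Maximal (IsCyclicallyMonotone (dotProductBilin ℝ ℝ)) D := by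
  simp only [maximal_iff, eq_comm (a := D)]
  rfl

end Euclidean

/-- A Dirac structure is cyclically monotone iff it is separable, in which
case it is maximal cyclically monotone. -/
theorem dirac_cycMonotone_iff_separable {n : ℕ}
    (D : Set ((Fin n → ℝ) × (Fin n → ℝ))) (hD : IsDirac D) :
    (CycMono2 D ↔ SepRel D) ∧ (CycMono2 D → MaxCycMono2 D) := by
  obtain ⟨W, rfl, hW⟩ := hD.exists_isDiracStructure
  rw [maxCycMono2_iff_maximal]
  exact dirac_cycMonotone_iff_separable_general hW
end

section
/- Let M ⊆ ℝ^n × ℝ^n × ℝ^m × ℝ^m (elements written (f_S, e_S, y, u), with flows (f_S, y) and efforts (e_S, u)) be a monotone relation, and let H : ℝ^n → ℝ be differentiable. Let x : I → ℝ^n be differentiable on an interval I and u, y : I → ℝ^m be such that (−ẋ(t), ∇H(x(t)), y(t), u(t)) ∈ M for all t ∈ I, and suppose (0, ∇H(x̄), ȳ, ū) ∈ M for some x̄ ∈ ℝ^n, ū, ȳ ∈ ℝ^m (a steady state). Then the shifted Hamiltonian H_x̄(x) := H(x) − ⟨∇H(x̄), x − x̄⟩ − H(x̄) satisfies d/dt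 H_x̄(x(t)) ≤ ⟨u(t) − ū, y(t) − ȳ⟩ for all t ∈ I. If moreover H is strictly convex, then H_x̄ ≥ 0 with a strict global minimum value 0 at x̄, so the system is passive with respect to the shifted supply rate (equilibrium independent passivity). -/
/-- Monotone relation with elements `(f_S, e_S, y, u)`, flows `(f_S, y)` and
efforts `(e_S, u)`. -/
def MonoPH {n m : ℕ}
    (M : Set ((Fin n → ℝ) × (Fin n → ℝ) × (Fin m → ℝ) × (Fin m → ℝ))) : Prop :=
  ∀ fS eS y u fS' eS' y' u',
    (fS, eS, y, u) ∈ M → (fS', eS', y', u') ∈ M →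
    0 ≤ dot (eS - eS') (fS - fS') + dot (u - u') (y - y')

/-- The shifted Hamiltonian (Bregman divergence)
`H_x̄(x) = H(x) − ⟨∇H(x̄), x − x̄⟩ − H(x̄)`. -/
noncomputable def shiftedHam {n : ℕ} (H : (Fin n → ℝ) → ℝ)
    (gradH : (Fin n → ℝ) → Fin n → ℝ) (xbar : Fin n → ℝ) : (Fin n → ℝ) → ℝ :=
  fun x => H x - dot (gradH xbar) (x - xbar) - H xbar

/-!
Since `∇H_x̄ = ∇H - ∇H(x̄)`, the chain rule gives `d/dt H_x̄(x) = ⟨∇H(x) - ∇H(x̄), ẋ⟩`. This is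
minus the storage term of the monotonicity inequality between the trajectory and the steady state,
which therefore bounds it by the supply rate. Positivity of `H_x̄` away from `x̄` says that a
strictly convex function lies strictly above its tangent plane; restricting to the segment
from `x̄` reduces this to one variable.
-/

section StrictConvex

theorem strictConvexOn_comp_affineMap {𝕜 E F β : Type*} [Ring 𝕜] [PartialOrder 𝕜]
    [AddCommGroup E] [AddCommGroup F] [AddCommMonoid β] [PartialOrder β]
    [Module 𝕜 E] [Module 𝕜 F] [SMul 𝕜 β] {s : Set F} {f : F → β}
    (hf : StrictConvexOn 𝕜 s f) {g : E →ᵃ[𝕜] F} (hg : Function.Injective g) :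
    StrictConvexOn 𝕜 (g ⁻¹' s) (f ∘ g) := by
  refine ⟨hf.1.affine_preimage g, fun x hx y hy hxy a b ha hb hab => ?_⟩
  calc f (g (a • x + b • y)) = f (a • g x + b • g y) := by rw [Convex.combo_affine_apply hab]
    _ < a • f (g x) + b • f (g y) := hf.2 hx hy (hg.ne hxy) ha hb hab

theorem add_fderiv_lt_of_strictConvexOn {E : Type*} [NormedAddCommGroup E] [NormedSpace ℝ E]
    {s : Set E} {f : E → ℝ} {f' : E →L[ℝ] ℝ} {a z : E} (hf : StrictConvexOn ℝ s f)
    (hf' : HasFDerivWithinAt f f' s a) (ha : a ∈ s) (hz : z ∈ s) (hne : z ≠ a) :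
    f a + f' (z - a) < f z := by
  let line : ℝ →ᵃ[ℝ] E := AffineMap.lineMap a z
  have hline : StrictConvexOn ℝ (line ⁻¹' s) (f ∘ line) :=
    strictConvexOn_comp_affineMap hf (AffineMap.lineMap_injective ℝ hne.symm)
  have hderiv : HasDerivWithinAt (f ∘ line) (f' (z - a)) (line ⁻¹' s) 0 :=
    hf'.comp_hasDerivWithinAt_of_eq 0 AffineMap.hasDerivWithinAt_lineMap
      (Set.mapsTo_preimage line s) (by simp [line])
  have hslope : f' (z - a) < slope (f ∘ line) 0 1 :=
    hline.lt_slope_of_hasDerivWithinAt (by simpa [line]) (by simpa [line]) one_pos hderiv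
  have hchord : slope (f ∘ line) 0 1 = f z - f a := by simp [slope_def_field, line]
  linarith

end StrictConvex

/-- The pairing `dot` as a linear map from efforts to continuous functionals on flows, so that
`gradH p` is the gradient of `H` at `p` when `HasFDerivAt H (dotCLM (gradH p)) p`. -/
noncomputable def dotCLM {n : ℕ} : (Fin n → ℝ) →ₗ[ℝ] (Fin n → ℝ) →L[ℝ] ℝ :=
  LinearMap.toContinuousLinearMap.toLinearMap ∘ₗ dotProductBilin ℝ ℝ

theorem dotCLM_apply {n : ℕ} (e f : Fin n → ℝ) : dotCLM e f = dot e f := rfl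

theorem dot_neg_right {n : ℕ} (e f : Fin n → ℝ) : dot e (-f) = -dot e f :=
  map_neg (dotCLM e) f

theorem MonoPH.dot_sub_le_supply {n m : ℕ}
    {M : Set ((Fin n → ℝ) × (Fin n → ℝ) × (Fin m → ℝ) × (Fin m → ℝ))} (hM : MonoPH M)
    {v₁ v₂ e₁ e₂ : Fin n → ℝ} {y₁ y₂ u₁ u₂ : Fin m → ℝ}
    (h₁ : (-v₁, e₁, y₁, u₁) ∈ M) (h₂ : (-v₂, e₂, y₂, u₂) ∈ M) :
    dot (e₁ - e₂) (v₁ - v₂) ≤ dot (u₁ - u₂) (y₁ - y₂) := by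
  have hmono := hM _ _ _ _ _ _ _ _ h₁ h₂
  rw [neg_sub_neg, ← neg_sub v₁ v₂, dot_neg_right] at hmono
  linarith

section ShiftedHam

variable {n : ℕ} {H : (Fin n → ℝ) → ℝ} {gradH : (Fin n → ℝ) → Fin n → ℝ} {xbar : Fin n → ℝ}

theorem shiftedHam_self (H : (Fin n → ℝ) → ℝ) (gradH : (Fin n → ℝ) → Fin n → ℝ)
    (xbar : Fin n → ℝ) : shiftedHam H gradH xbar xbar = 0 := by
  simp [shiftedHam, dot]

theorem hasFDerivAt_shiftedHam {p : Fin n → ℝ} (hH : HasFDerivAt H (dotCLM (gradH p)) p) :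
    HasFDerivAt (shiftedHam H gradH xbar) (dotCLM (gradH p - gradH xbar)) p := by
  have hlin : HasFDerivAt (fun z => dot (gradH xbar) (z - xbar)) (dotCLM (gradH xbar)) p :=
    (dotCLM (gradH xbar)).hasFDerivAt.comp p ((hasFDerivAt_id p).sub_const xbar)
  rw [map_sub]
  exact (hH.sub hlin).sub_const (H xbar)

theorem shiftedHam_pos {s : Set (Fin n → ℝ)} {z : Fin n → ℝ} (hconv : StrictConvexOn ℝ s H)
    (hH : HasFDerivWithinAt H (dotCLM (gradH xbar)) s xbar) (hxbar : xbar ∈ s) (hz : z ∈ s)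
    (hne : z ≠ xbar) : 0 < shiftedHam H gradH xbar z := by
  have htangent := add_fderiv_lt_of_strictConvexOn hconv hH hxbar hz hne
  rw [dotCLM_apply] at htangent
  unfold shiftedHam
  linarith

end ShiftedHam

/-- Along any trajectory of an incrementally port-Hamiltonian system with
steady state `(x̄, ū, ȳ)`, the shifted Hamiltonian satisfies
`d/dt H_x̄(x(t)) ≤ ⟨u(t) − ū, y(t) − ȳ⟩`; if moreover `H` is strictly
convex, `H_x̄` is nonnegative with strict global minimum `0` at `x̄`
(equilibrium independent passivity). -/
theorem incrementallyPH_equilibriumIndependentPassive {n m : ℕ}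
    (M : Set ((Fin n → ℝ) × (Fin n → ℝ) × (Fin m → ℝ) × (Fin m → ℝ)))
    (hM : MonoPH M)
    (H : (Fin n → ℝ) → ℝ) (gradH : (Fin n → ℝ) → Fin n → ℝ)
    (hdiff : Differentiable ℝ H)
    (hgrad : ∀ p v, (fderiv ℝ H p) v = dot (gradH p) v)
    (I : Set ℝ) (x x' : ℝ → Fin n → ℝ) (u y : ℝ → Fin m → ℝ)
    (hx : ∀ t ∈ I, HasDerivAt x (x' t) t)
    (htraj : ∀ t ∈ I, (-(x' t), gradH (x t), y t, u t) ∈ M)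
    (xbar : Fin n → ℝ) (ubar ybar : Fin m → ℝ)
    (hsteady : ((0 : Fin n → ℝ), gradH xbar, ybar, ubar) ∈ M) :
    (∀ t ∈ I,
      HasDerivAt (fun τ => shiftedHam H gradH xbar (x τ))
        (dot (gradH (x t) - gradH xbar) (x' t)) t ∧
      dot (gradH (x t) - gradH xbar) (x' t) ≤ dot (u t - ubar) (y t - ybar)) ∧
    (StrictConvexOn ℝ Set.univ H →
      (∀ z, 0 ≤ shiftedHam H gradH xbar z) ∧
      shiftedHam H gradH xbar xbar = 0 ∧
      ∀ z, z ≠ xbar → 0 < shiftedHam H gradH xbar z) := by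
  have hH (p) : HasFDerivAt H (dotCLM (gradH p)) p :=
    (hdiff p).hasFDerivAt.congr_fderiv (ContinuousLinearMap.ext (hgrad p))
  refine ⟨fun t ht => ⟨?_, ?_⟩, fun hconv => ?_⟩
  · exact (hasFDerivAt_shiftedHam (hH (x t))).comp_hasDerivAt t (hx t ht)
  · rw [← neg_zero] at hsteady
    simpa only [sub_zero] using hM.dot_sub_le_supply (htraj t ht) hsteady
  · have hself := shiftedHam_self H gradH xbar
    have hpos (z) (hz : z ≠ xbar) : 0 < shiftedHam H gradH xbar z :=
      shiftedHam_pos hconv (hH xbar).hasFDerivWithinAt (Set.mem_univ _) (Set.mem_univ _) hz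
    refine ⟨fun z => ?_, hself, hpos⟩
    obtain rfl | hz := eq_or_ne z xbar
    · exact hself.ge
    · exact (hpos z hz).le
end

section
/- Let H : ℝ → ℝ and S : ℝ² → ℝ be twice continuously differentiable, and suppose that for all x₁, x₂ ∈ ℝ, ∂S/∂x₁(x₁,x₂) = H'(x₁) − H'(x₂) and ∂S/∂x₂(x₁,x₂) = −(H'(x₁) − H'(x₂)). Then H'' is constant; equivalently, there exist constants q, a, c ∈ ℝ such that H(x) = ½ q x² + a x + c for all x. Hence the scalar nonlinear integrator ẋ = u, y = H'(x) admits a C² incremental storage function (i.e. is incrementally passive with C² storage) only if H is quadratic-affine. -/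
/-! Subtracting the first equation at `x₂ = y` from the same equation at `x₂ = 0` shows that
`x ↦ S x 0 - S x y` has constant derivative `H' y - H' 0`, so the mixed difference
`S x 0 - S x y - (S 0 0 - S 0 y)` equals `(H' y - H' 0) x`. The second equation evaluates the same
quantity as `(H' x - H' 0) y`. Hence `(H' x - H' 0) y` is symmetric in `x` and `y`; being linear
in `y`, it is bilinear. So `H'` is affine, and integrating it along rays shows that `H` is
quadratic. -/

theorem exists_linearMap₂_of_apply_comm {R M N : Type*} [CommSemiring R] [AddCommMonoid M]
    [AddCommMonoid N] [Module R M] [Module R N] {g : M → M →ₗ[R] N}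
    (hg : ∀ x y, g x y = g y x) : ∃ B : M →ₗ[R] M →ₗ[R] N, ∀ x, B x = g x := by
  refine ⟨⟨⟨g, fun x y => ?_⟩, fun c x => ?_⟩, fun _ => rfl⟩
  · ext z
    simp only [LinearMap.add_apply, hg _ z, map_add]
  · ext z
    simp only [LinearMap.smul_apply, hg _ z, map_smul, RingHom.id_apply]

section NormedSpace

variable {𝕜 E F : Type*} [RCLike 𝕜] [NormedAddCommGroup E] [NormedSpace 𝕜 E]
  [NormedAddCommGroup F] [NormedSpace 𝕜 F]

theorem sub_eq_apply_sub_of_hasFDerivAt_const {f : E → F} {f' : E →L[𝕜] F}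
    (hf : ∀ x, HasFDerivAt f f' x) (x y : E) : f x - f y = f' (x - y) := by
  have hasFDerivAt_zero (z : E) : HasFDerivAt (fun z => f z - f' z) (0 : E →L[𝕜] F) z := by
    simpa using (hf z).fun_sub f'.hasFDerivAt
  have sub_const : f x - f' x = f y - f' y :=
    is_const_of_fderiv_eq_zero (fun z => (hasFDerivAt_zero z).differentiableAt)
      (fun z => (hasFDerivAt_zero z).fderiv) x y
  rw [map_sub, sub_eq_sub_iff_sub_eq_sub, sub_const]

theorem mixed_difference_eq_of_hasFDerivAt {S : E → E → F} {h : E → E →L[𝕜] F}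
    (hS : ∀ x y, HasFDerivAt (fun z => S z y) (h x - h y) x) (x y : E) :
    S x 0 - S x y - (S 0 0 - S 0 y) = (h y - h 0) x := by
  have hasFDerivAt_difference (z : E) : HasFDerivAt (fun z => S z 0 - S z y) (h y - h 0) z := by
    simpa using (hS z 0).fun_sub (hS z y)
  simpa using sub_eq_apply_sub_of_hasFDerivAt_const hasFDerivAt_difference x 0

theorem sub_apply_comm_of_hasFDerivAt {S : E → E → F} {h : E → E →L[𝕜] F}
    (h1 : ∀ x y, HasFDerivAt (fun z => S z y) (h x - h y) x)
    (h2 : ∀ x y, HasFDerivAt (fun z => S x z) (-(h x - h y)) y) (x y : E) :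
    (h x - h 0) y = (h y - h 0) x := by
  have mixed_left : S x 0 - S x y - (S 0 0 - S 0 y) = (h y - h 0) x :=
    mixed_difference_eq_of_hasFDerivAt h1 x y
  have mixed_right : S 0 y - S x y - (S 0 0 - S x 0) = (h x - h 0) y :=
    mixed_difference_eq_of_hasFDerivAt (S := fun y x => S x y)
      (fun y x => by simpa only [neg_sub] using h2 x y) y x
  rw [← mixed_left, ← mixed_right]
  abel

theorem eq_quadratic_of_hasDerivAt_affine {f : 𝕜 → F} {q a : F}
    (hf : ∀ t, HasDerivAt f (t • q + a) t) (t : 𝕜) :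
    f t = (t ^ 2 / 2) • q + t • a + f 0 := by
  have hasDerivAt_quadratic (s : 𝕜) :
      HasDerivAt (fun s : 𝕜 => (s ^ 2 / 2) • q + s • a) (s • q + a) s := by
    simpa using (((hasDerivAt_pow 2 s).div_const 2).smul_const q).fun_add
      ((hasDerivAt_id s).smul_const a)
  have hasDerivAt_zero (s : 𝕜) :
      HasDerivAt (fun s => f s - ((s ^ 2 / 2) • q + s • a)) 0 s := by
    simpa using (hf s).fun_sub (hasDerivAt_quadratic s)
  have sub_const := is_const_of_deriv_eq_zero (fun s => (hasDerivAt_zero s).differentiableAt)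
    (fun s => (hasDerivAt_zero s).deriv) t 0
  rw [sub_eq_iff_eq_add'] at sub_const
  simpa using sub_const

theorem eq_quadratic_of_hasFDerivAt_affine {H : E → F} {B : E →ₗ[𝕜] E →ₗ[𝕜] F} {a : E →ₗ[𝕜] F}
    {H' : E → E →L[𝕜] F} (hH : ∀ x, HasFDerivAt H (H' x) x)
    (hH' : ∀ x y, H' x y = B x y + a y) (x : E) :
    H x = (2⁻¹ : 𝕜) • B x x + a x + H 0 := by
  have hasDerivAt_ray (t : 𝕜) : HasDerivAt (fun t : 𝕜 => H (t • x)) (t • B x x + a x) t := by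
    simpa [hH', Function.comp_def] using
      (hH (t • x)).comp_hasDerivAt t ((hasDerivAt_id t).smul_const x)
  simpa using eq_quadratic_of_hasDerivAt_affine hasDerivAt_ray 1

theorem integrator_incrementallyPassive_implies_quadratic_general
    {H : E → F} {H' : E → E →L[𝕜] F} {S : E → E → F}
    (hH : ∀ x, HasFDerivAt H (H' x) x)
    (h1 : ∀ x1 x2, HasFDerivAt (fun z => S z x2) (H' x1 - H' x2) x1)
    (h2 : ∀ x1 x2, HasFDerivAt (fun z => S x1 z) (-(H' x1 - H' x2)) x2) :
    ∃ (Q : QuadraticMap 𝕜 E F) (a : E →L[𝕜] F) (c : F), ∀ x, H x = Q x + a x + c := by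
  obtain ⟨B, hB⟩ := exists_linearMap₂_of_apply_comm
    (g := fun x => (H' x - H' 0 : E →L[𝕜] F).toLinearMap) (sub_apply_comm_of_hasFDerivAt h1 h2)
  have H'_affine (x y : E) : H' x y = B x y + H' 0 y := by simp [hB]
  exact ⟨(2⁻¹ : 𝕜) • LinearMap.BilinMap.toQuadraticMap B, H' 0, H 0,
    eq_quadratic_of_hasFDerivAt_affine hH H'_affine⟩

end NormedSpace

/-- If a C² function `S(x₁,x₂)` satisfies the incremental-storage PDEs
`∂S/∂x₁ = H'(x₁) − H'(x₂)` and `∂S/∂x₂ = −(H'(x₁) − H'(x₂))` for a C²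
function `H`, then `H` is quadratic-affine: `H(x) = ½ q x² + a x + c`.
Hence the scalar nonlinear integrator `ẋ = u, y = H'(x)` admits a C²
incremental storage function only if `H` is quadratic-affine. -/
theorem integrator_incrementallyPassive_implies_quadratic
    (H : ℝ → ℝ) (S : ℝ → ℝ → ℝ)
    (hH : ContDiff ℝ 2 H)
    (hS : ContDiff ℝ 2 (fun p : ℝ × ℝ => S p.1 p.2))
    (h1 : ∀ x1 x2 : ℝ, HasDerivAt (fun z => S z x2) (deriv H x1 - deriv H x2) x1)
    (h2 : ∀ x1 x2 : ℝ, HasDerivAt (fun z => S x1 z) (-(deriv H x1 - deriv H x2)) x2) :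
    ∃ q a c : ℝ, ∀ x : ℝ, H x = q * x ^ 2 / 2 + a * x + c := by
  obtain ⟨Q, a, c, hQ⟩ := integrator_incrementallyPassive_implies_quadratic_general
    (H' := fun x => ContinuousLinearMap.toSpanSingleton ℝ (deriv H x))
    (fun x => (hH.differentiable two_ne_zero x).hasDerivAt.hasFDerivAt)
    (fun x1 x2 => (h1 x1 x2).hasFDerivAt.congr_fderiv (by ext; simp))
    (fun x1 x2 => (h2 x1 x2).hasFDerivAt.congr_fderiv (by ext; simp))
  refine ⟨2 * Q 1, a 1, c, fun x => ?_⟩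
  have Q_apply : Q x = x * x * Q 1 := by simpa using Q.map_smul x 1
  have a_apply : a x = x * a 1 := by simpa using a.map_smul x 1
  rw [hQ, Q_apply, a_apply]
  ring
end

section
/- Let D ⊆ F_x × F_P × F_R × E_x × E_P × E_R be a Dirac structure, let R ⊆ F_R × E_R be an energy-dissipating relation (i.e. ⟨e_R, f_R⟩ ≥ 0 for all (f_R, e_R) ∈ R), and let H : F_x → ℝ be differentiable. Let x : I → F_x be differentiable on an interval I and f_P, e_P, f_R, e_R be functions on I such that for all t ∈ I, (−ẋ(t), f_P(t), −f_R(t), ∇H(x(t)), e_P(t), e_R(t)) ∈ D and (f_R(t), e_R(t)) ∈ R. Then d/dt H(x(t)) ≤ ⟨e_P(t), f_P(t)⟩ for all t ∈ I; that is, every port-Hamiltonian system is cyclo-passive. -/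
/-- Pairing on the total flow space `F_x × F_P × F_R` against the total
effort space `E_x × E_P × E_R` (sum over the three factors). -/
noncomputable def pair3 {n mP mR : ℕ}
    (e : (Fin n → ℝ) × (Fin mP → ℝ) × (Fin mR → ℝ))
    (f : (Fin n → ℝ) × (Fin mP → ℝ) × (Fin mR → ℝ)) : ℝ :=
  dot e.1 f.1 + dot e.2.1 f.2.1 + dot e.2.2 f.2.2

/-- The flow part `(f_x, f_P, f_R)` of an element
`(f_x, f_P, f_R, e_x, e_P, e_R)` of the total space. -/
def flw6 {n mP mR : ℕ}
    (p : (Fin n → ℝ) × (Fin mP → ℝ) × (Fin mR → ℝ) ×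
         (Fin n → ℝ) × (Fin mP → ℝ) × (Fin mR → ℝ)) :
    (Fin n → ℝ) × (Fin mP → ℝ) × (Fin mR → ℝ) :=
  (p.1, p.2.1, p.2.2.1)

/-- The effort part `(e_x, e_P, e_R)`. -/
def eff6 {n mP mR : ℕ}
    (p : (Fin n → ℝ) × (Fin mP → ℝ) × (Fin mR → ℝ) ×
         (Fin n → ℝ) × (Fin mP → ℝ) × (Fin mR → ℝ)) :
    (Fin n → ℝ) × (Fin mP → ℝ) × (Fin mR → ℝ) :=
  p.2.2.2

/-- The indefinite bilinear form `⟪(f₁,e₁),(f₂,e₂)⟫ = ⟨e₁,f₂⟩ + ⟨e₂,f₁⟩`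
on the total flow × effort space. -/
noncomputable def bform6 {n mP mR : ℕ}
    (p q : (Fin n → ℝ) × (Fin mP → ℝ) × (Fin mR → ℝ) ×
           (Fin n → ℝ) × (Fin mP → ℝ) × (Fin mR → ℝ)) : ℝ :=
  pair3 (eff6 p) (flw6 q) + pair3 (eff6 q) (flw6 p)

/-- A Dirac structure on `F_x × F_P × F_R × E_x × E_P × E_R`: a subspace
equal to its orthogonal companion. -/
def IsDirac6 {n mP mR : ℕ}
    (D : Set ((Fin n → ℝ) × (Fin mP → ℝ) × (Fin mR → ℝ) ×
              (Fin n → ℝ) × (Fin mP → ℝ) × (Fin mR → ℝ))) : Prop :=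
  (∃ W : Submodule ℝ ((Fin n → ℝ) × (Fin mP → ℝ) × (Fin mR → ℝ) ×
              (Fin n → ℝ) × (Fin mP → ℝ) × (Fin mR → ℝ)), D = ↑W) ∧
  D = {p | ∀ q ∈ D, bform6 p q = 0}

section DualPairs

variable {Fx FP FR Ex EP ER : Type*}
  [AddCommGroup FP] [Module ℝ FP] [AddCommGroup FR] [Module ℝ FR]
  [AddCommGroup Ex] [Module ℝ Ex] [AddCommGroup EP] [Module ℝ EP] [AddCommGroup ER] [Module ℝ ER]

section Algebraic

variable [AddCommGroup Fx] [Module ℝ Fx]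

/-- A relation `D` between flows and efforts is power-conserving if the total power `⟨e, f⟩`
vanishes on it: isotropy, the half of the Dirac condition that balances power. Effort spaces are
paired with flow spaces by arbitrary bilinear forms `βx`, `βP`, `βR`. -/
def IsPowerConserving (βx : Ex →ₗ[ℝ] Fx →ₗ[ℝ] ℝ) (βP : EP →ₗ[ℝ] FP →ₗ[ℝ] ℝ)
    (βR : ER →ₗ[ℝ] FR →ₗ[ℝ] ℝ) (D : Set (Fx × FP × FR × Ex × EP × ER)) : Prop :=
  ∀ ⦃fx fP fR ex eP eR⦄, (fx, fP, fR, ex, eP, eR) ∈ D → βx ex fx + βP eP fP + βR eR fR = 0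

theorem IsPowerConserving.stored_eq_supplied_sub_dissipated
    {βx : Ex →ₗ[ℝ] Fx →ₗ[ℝ] ℝ} {βP : EP →ₗ[ℝ] FP →ₗ[ℝ] ℝ} {βR : ER →ₗ[ℝ] FR →ₗ[ℝ] ℝ}
    {D : Set (Fx × FP × FR × Ex × EP × ER)} (hD : IsPowerConserving βx βP βR D)
    {v : Fx} {fP : FP} {fR : FR} {ex : Ex} {eP : EP} {eR : ER}
    (hmem : (-v, fP, -fR, ex, eP, eR) ∈ D) :
    βx ex v = βP eP fP - βR eR fR := by
  have power_balance := hD hmem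
  simp only [map_neg] at power_balance
  linarith

end Algebraic

theorem portHamiltonian_cycloPassive_general [NormedAddCommGroup Fx] [NormedSpace ℝ Fx]
    {βx : Ex →ₗ[ℝ] Fx →ₗ[ℝ] ℝ} {βP : EP →ₗ[ℝ] FP →ₗ[ℝ] ℝ} {βR : ER →ₗ[ℝ] FR →ₗ[ℝ] ℝ}
    {D : Set (Fx × FP × FR × Ex × EP × ER)} (hD : IsPowerConserving βx βP βR D)
    {R : Set (FR × ER)} (hR : ∀ p ∈ R, 0 ≤ βR p.2 p.1)
    {H : Fx → ℝ} {gradH : Fx → Ex} (hdiff : Differentiable ℝ H)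
    (hgrad : ∀ p v, fderiv ℝ H p v = βx (gradH p) v)
    {I : Set ℝ} {x x' : ℝ → Fx} {fP : ℝ → FP} {eP : ℝ → EP} {fR : ℝ → FR} {eR : ℝ → ER}
    (hx : ∀ t ∈ I, HasDerivAt x (x' t) t)
    (hmem : ∀ t ∈ I, (-(x' t), fP t, -(fR t), gradH (x t), eP t, eR t) ∈ D)
    (hRmem : ∀ t ∈ I, (fR t, eR t) ∈ R) :
    ∀ t ∈ I,
      HasDerivAt (fun τ => H (x τ)) (βx (gradH (x t)) (x' t)) t ∧
      βx (gradH (x t)) (x' t) ≤ βP (eP t) (fP t) := by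
  intro t ht
  constructor
  · rw [← hgrad]
    exact (hdiff (x t)).hasFDerivAt.comp_hasDerivAt t (hx t ht)
  · calc βx (gradH (x t)) (x' t)
        = βP (eP t) (fP t) - βR (eR t) (fR t) := hD.stored_eq_supplied_sub_dissipated (hmem t ht)
      _ ≤ βP (eP t) (fP t) := sub_le_self _ (hR _ (hRmem t ht))

end DualPairs

namespace IsDirac6

variable {n mP mR : ℕ}
  {D : Set ((Fin n → ℝ) × (Fin mP → ℝ) × (Fin mR → ℝ) ×
            (Fin n → ℝ) × (Fin mP → ℝ) × (Fin mR → ℝ))}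

theorem bform6_eq_zero (hD : IsDirac6 D) {p q} (hp : p ∈ D) (hq : q ∈ D) : bform6 p q = 0 :=
  hD.2.subset hp q hq

theorem pair3_eff6_flw6_eq_zero (hD : IsDirac6 D) {p} (hp : p ∈ D) :
    pair3 (eff6 p) (flw6 p) = 0 :=
  add_self_eq_zero.mp (hD.bform6_eq_zero hp hp)

-- `dot e f` is definitionally `dotProductBilin ℝ ℝ e f`.
theorem isPowerConserving (hD : IsDirac6 D) :
    IsPowerConserving (dotProductBilin ℝ ℝ) (dotProductBilin ℝ ℝ) (dotProductBilin ℝ ℝ) D :=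
  fun _ _ _ _ _ _ hp => hD.pair3_eff6_flw6_eq_zero hp

end IsDirac6

/-- Every port-Hamiltonian system is cyclo-passive: along trajectories,
`d/dt H(x(t)) ≤ ⟨e_P(t), f_P(t)⟩`. -/
theorem portHamiltonian_cycloPassive {n mP mR : ℕ}
    (D : Set ((Fin n → ℝ) × (Fin mP → ℝ) × (Fin mR → ℝ) ×
              (Fin n → ℝ) × (Fin mP → ℝ) × (Fin mR → ℝ)))
    (hD : IsDirac6 D)
    (R : Set ((Fin mR → ℝ) × (Fin mR → ℝ)))
    (hR : ∀ p ∈ R, 0 ≤ dot p.2 p.1)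
    (H : (Fin n → ℝ) → ℝ) (gradH : (Fin n → ℝ) → Fin n → ℝ)
    (hdiff : Differentiable ℝ H)
    (hgrad : ∀ p v, (fderiv ℝ H p) v = dot (gradH p) v)
    (I : Set ℝ) (x x' : ℝ → Fin n → ℝ)
    (fP eP : ℝ → Fin mP → ℝ) (fR eR : ℝ → Fin mR → ℝ)
    (hx : ∀ t ∈ I, HasDerivAt x (x' t) t)
    (hmem : ∀ t ∈ I, (-(x' t), fP t, -(fR t), gradH (x t), eP t, eR t) ∈ D)
    (hRmem : ∀ t ∈ I, (fR t, eR t) ∈ R) :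
    ∀ t ∈ I,
      HasDerivAt (fun τ => H (x τ)) (dot (gradH (x t)) (x' t)) t ∧
      dot (gradH (x t)) (x' t) ≤ dot (eP t) (fP t) :=
  portHamiltonian_cycloPassive_general hD.isPowerConserving hR hdiff hgrad hx hmem hRmem
end
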